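/- Let u₁, …, u_k ∈ F₂, let H be the subgroup of F₂ generated by u₁, …, u_k, and let L = max_{1 ≤ i ≤ k} |u_i|. Suppose that there exists an automorphism φ of F₂ whose fixed point set {w ∈ F₂ : φ(w) = w} is exactly H. Then there exist a Whitehead automorphism β of type (W1), an automorphism δ' that is a composition of at most (2^{4L+4}+1)·L automorphisms from {δ₁, δ₂, δ₃, δ₄}, and a chain ψ' of type (C1) or of type (C2) of length at most 4L+4, such that the fixed point set of β∘δ'∘ψ' is exactly H. -/

import Mathlib

noncomputable section

/-- The free group of rank two. -/
abbrev F : Type := FreeGroup (Fin 2)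

/-- The generator `a`. -/
def ga : F := FreeGroup.of 0

/-- The generator `b`. -/
def gb : F := FreeGroup.of 1

/-- Build an automorphism of `F` from images of the generators together with
an explicit inverse. -/
def mkAut (x y xi yi : F)
    (h1 : FreeGroup.lift ![xi, yi] x = ga)
    (h2 : FreeGroup.lift ![xi, yi] y = gb)
    (h3 : FreeGroup.lift ![x, y] xi = ga)
    (h4 : FreeGroup.lift ![x, y] yi = gb) : MulAut F :=
  MonoidHom.toMulEquiv (FreeGroup.lift ![x, y]) (FreeGroup.lift ![xi, yi])
    (by
      ext i
      fin_cases i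
      · simpa [ga] using h1
      · simpa [gb] using h2)
    (by
      ext i
      fin_cases i
      · simpa [ga] using h3
      · simpa [gb] using h4)

/-- `σ : a ↦ ab, b ↦ b`. -/
def σ : MulAut F :=
  mkAut (ga * gb) gb (ga * gb⁻¹) gb
    (by simp [ga, gb]) (by simp [ga, gb]) (by simp [ga, gb]) (by simp [ga, gb])

/-- `τ : a ↦ a, b ↦ ba`. -/
def τ : MulAut F :=
  mkAut ga (gb * ga) ga (gb * ga⁻¹)
    (by simp [ga, gb]) (by simp [ga, gb]) (by simp [ga, gb]) (by simp [ga, gb])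

/-- `δ₁ : a ↦ b⁻¹ab, b ↦ b`. -/
def δ₁ : MulAut F :=
  mkAut (gb⁻¹ * ga * gb) gb (gb * ga * gb⁻¹) gb
    (by simp [ga, gb, mul_assoc]) (by simp [ga, gb]) (by simp [ga, gb, mul_assoc]) (by simp [ga, gb])

/-- `δ₂ : a ↦ bab⁻¹, b ↦ b`. -/
def δ₂ : MulAut F :=
  mkAut (gb * ga * gb⁻¹) gb (gb⁻¹ * ga * gb) gb
    (by simp [ga, gb, mul_assoc]) (by simp [ga, gb]) (by simp [ga, gb, mul_assoc]) (by simp [ga, gb])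

/-- `δ₃ : a ↦ a, b ↦ a⁻¹ba`. -/
def δ₃ : MulAut F :=
  mkAut ga (ga⁻¹ * gb * ga) ga (ga * gb * ga⁻¹)
    (by simp [ga, gb]) (by simp [ga, gb, mul_assoc]) (by simp [ga, gb]) (by simp [ga, gb, mul_assoc])

/-- `δ₄ : a ↦ a, b ↦ aba⁻¹`. -/
def δ₄ : MulAut F :=
  mkAut ga (ga * gb * ga⁻¹) ga (ga⁻¹ * gb * ga)
    (by simp [ga, gb]) (by simp [ga, gb, mul_assoc]) (by simp [ga, gb]) (by simp [ga, gb, mul_assoc])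

/-- `π : a ↦ b, b ↦ a⁻¹`. -/
def pi' : MulAut F :=
  mkAut gb ga⁻¹ gb⁻¹ ga
    (by simp [ga, gb]) (by simp [ga, gb]) (by simp [ga, gb]) (by simp [ga, gb])

/-- Word length of (the reduced word representing) an element of `F`. -/
def len (w : F) : ℕ := w.toWord.length

/-- Cyclic length: minimal word length among all conjugates. -/
def cyclen (w : F) : ℕ := sInf {n | ∃ g : F, len (g * w * g⁻¹) = n}

/-- The chain `τ^{m_k}σ^{l_k}⋯τ^{m_1}σ^{l_1}` of type (C1) determined by the list
`[(l_k, m_k), …, (l_1, m_1)]` of pairs of exponents. -/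
def chainC1 (c : List (ℕ × ℕ)) : MulAut F :=
  (c.map fun p => τ ^ p.2 * σ ^ p.1).prod

/-- The chain `τ^{-m_k}σ^{-l_k}⋯τ^{-m_1}σ^{-l_1}` of type (C2) determined by the list
`[(l_k, m_k), …, (l_1, m_1)]` of pairs of exponents. -/
def chainC2 (c : List (ℕ × ℕ)) : MulAut F :=
  (c.map fun p => (τ ^ p.2)⁻¹ * (σ ^ p.1)⁻¹).prod

/-- Number of factors of `σ` in a chain. -/
def sigmaCount (c : List (ℕ × ℕ)) : ℕ := (c.map Prod.fst).sum

/-- Number of factors of `τ` in a chain. -/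
def tauCount (c : List (ℕ × ℕ)) : ℕ := (c.map Prod.snd).sum

/-- The length `Σ (l_i + m_i)` of a chain. -/
def chainLen (c : List (ℕ × ℕ)) : ℕ := sigmaCount c + tauCount c

/-- A Whitehead automorphism of type (W1): it permutes `{a, a⁻¹, b, b⁻¹}`. -/
def IsW1 (β : MulAut F) : Prop :=
  β ga ∈ ({ga, ga⁻¹, gb, gb⁻¹} : Set F) ∧ β gb ∈ ({ga, ga⁻¹, gb, gb⁻¹} : Set F)

/-- A chain of type (C1). -/
def IsC1 (φ : MulAut F) : Prop := ∃ c : List (ℕ × ℕ), c ≠ [] ∧ φ = chainC1 c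

/-- A chain of type (C2). -/
def IsC2 (φ : MulAut F) : Prop := ∃ c : List (ℕ × ℕ), c ≠ [] ∧ φ = chainC2 c

/-- A positive element: a product of the generators `a` and `b`. -/
def IsPositive (w : F) : Prop := w ∈ Submonoid.closure ({ga, gb} : Set F)

/-- The four automorphisms `δ₁, δ₂, δ₃, δ₄`. -/
def δIdx : Fin 4 → MulAut F := ![δ₁, δ₂, δ₃, δ₄]

/-!
If the fixed group `H` of `φ` is abelian, it is trivial or the centralizer of an element, hence the
fixed group of `π` or of an inner automorphism. Otherwise `φ = 1` or `H` is the fixed group of some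
`γ σ γ⁻¹`. Indeed the class of `φ` in `Out(F₂)` is conjugate to one of finite order, to a power of
`σ` up to sign, or to one whose square is a positive chain containing both `σ` and `τ`. Two elements
commuting with a translation along an axis of a tree, or with the inversion of an edge, commute with
each other, so an automorphism fixing two noncommuting elements fixes a vertex of the trees on which
it acts; this settles the classes of finite order and the powers of `σ`. A chain containing both `σ`
and `τ` is hyperbolic on `ℤ²`, so its fixed elements lie in the commutator subgroup, which is free
on conjugates of `[a, b]` indexed by `ℤ²`. A minimal set of indices detecting a fixed element has
a finite orbit, hence is a single point, and the corresponding cyclic quotient kills every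
commutator of fixed elements.

For the bounds, `γ` is normalized so that its class is a signed permutation times a chain in which
`σ` is not the factor applied first. The exponent vectors in `H` are multiples of that of `γ b`,
whose size exceeds the length of the chain, so this length is less than `L`. In
`γ σ γ⁻¹ = β ∘ conj g ∘ ψ'`, two noncommuting generators of `H`, permuted by `β⁻¹`, move both `1`
and `g` by at most some `R` in the Cayley tree, which forces `|g| ≤ 4R + 2`; and `conj g` is a
product of `|g|` of the `δᵢ`.
-/

/-- An integer-valued length function of tree type on a group: `norm (p⁻¹ * q)` is the distance
between the translates by `p` and `q` of a vertex of a tree on which the group acts transitively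
on vertices and with trivial edge stabilizers. -/
structure TreeLength (G : Type*) [Group G] where
  norm : G → ℕ
  norm_one : norm 1 = 0
  norm_inv : ∀ g, norm g⁻¹ = norm g
  four_point : ∀ y z t, norm y + norm (z⁻¹ * t) ≤ norm z + norm (y⁻¹ * t) ∨
    norm y + norm (z⁻¹ * t) ≤ norm t + norm (y⁻¹ * z)
  parity : ∀ g h, ∃ c, norm (g⁻¹ * h) + 2 * c = norm g + norm h
  exists_between : ∀ g k, k ≤ norm g → ∃ p, norm p = k ∧ norm p + norm (p⁻¹ * g) = norm g
  eq_one_of_fixes_edge : ∀ c p q, norm (p⁻¹ * (c * p)) = 0 → norm (q⁻¹ * (c * q)) = 0 →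
    norm (p⁻¹ * q) = 1 → c = 1

namespace TreeLength

variable {G : Type*} [Group G] (T : TreeLength G)

/-- The left-invariant pseudodistance attached to a tree length. -/
def dist (p q : G) : ℕ := T.norm (p⁻¹ * q)

theorem dist_self (p : G) : T.dist p p = 0 := by simp [dist, T.norm_one]

theorem one_dist (p : G) : T.dist 1 p = T.norm p := by simp [dist]

theorem dist_comm (p q : G) : T.dist p q = T.dist q p := by
  rw [dist, ← T.norm_inv, mul_inv_rev, inv_inv, dist]

theorem dist_mul_left (x p q : G) : T.dist (x * p) (x * q) = T.dist p q := by
  rw [dist, dist, mul_inv_rev, mul_assoc, inv_mul_cancel_left]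

theorem dist_four_point (x y z t : G) : T.dist x y + T.dist z t ≤ T.dist x z + T.dist y t ∨
    T.dist x y + T.dist z t ≤ T.dist x t + T.dist y z := by
  have translate (p q : G) : T.norm ((x⁻¹ * p)⁻¹ * (x⁻¹ * q)) = T.dist p q :=
    T.dist_mul_left x⁻¹ p q
  have h := T.four_point (x⁻¹ * y) (x⁻¹ * z) (x⁻¹ * t)
  rw [translate, translate, translate] at h
  exact h

theorem dist_triangle (x y z : G) : T.dist x z ≤ T.dist x y + T.dist y z := by
  have := T.dist_four_point x z y y
  have := T.dist_self y
  have := T.dist_comm y z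
  omega

theorem exists_dist_add_two_mul_eq (x y z : G) :
    ∃ c, T.dist x z + 2 * c = T.dist x y + T.dist y z := by
  obtain ⟨c, hc⟩ := T.parity (y⁻¹ * x) (y⁻¹ * z)
  refine ⟨c, ?_⟩
  rw [T.dist_comm x y]
  exact (congrArg (· + 2 * c) (T.dist_mul_left y⁻¹ x z).symm).trans hc

theorem exists_dist_eq (x y : G) {k : ℕ} (hk : k ≤ T.dist x y) :
    ∃ p, T.dist x p = k ∧ T.dist x p + T.dist p y = T.dist x y := by
  obtain ⟨p, hp, hpy⟩ := T.exists_between (x⁻¹ * y) k hk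
  have hxp : T.dist x (x * p) = T.norm p := by rw [dist, inv_mul_cancel_left]
  have hy : T.dist (x * p) y = T.norm (p⁻¹ * (x⁻¹ * y)) := by rw [dist, mul_inv_rev, mul_assoc]
  exact ⟨x * p, hxp.trans hp, by rw [hxp, hy, hpy, dist]⟩

theorem dist_eq_of_dist_eq_zero {x y : G} (h : T.dist x y = 0) (z : G) :
    T.dist x z = T.dist y z := by
  have := T.dist_triangle x y z
  have := T.dist_triangle y x z
  have := T.dist_comm x y
  omega

theorem dist_eq_zero_of_mem_segment {x y p q : G} (hp : T.dist x p + T.dist p y = T.dist x y)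
    (hq : T.dist x q + T.dist q y = T.dist x y) (h : T.dist x p = T.dist x q) :
    T.dist p q = 0 := by
  have := T.dist_four_point x y p q
  have := T.dist_comm y p
  have := T.dist_comm y q
  omega

/-- A point far from both ends of a segment `[x, y]` slides along the segment under an element
moving both ends little. -/
theorem dist_mul_of_mem_segment {x y w p : G} {R : ℕ} (hx : T.dist x (w * x) ≤ R)
    (hy : T.dist y (w * y) ≤ R) (hp : T.dist x p + T.dist p y = T.dist x y)
    (hxp : R < T.dist x p) (hpy : T.dist x p + R < T.dist x y) :
    T.dist x (w * p) + T.dist x y = T.dist x p + T.dist x (w * y) ∧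
      T.dist x (w * p) + T.dist (w * p) y = T.dist x y := by
  have := T.dist_mul_left w x p
  have := T.dist_mul_left w p y
  have := T.dist_mul_left w x y
  have := T.dist_four_point x (w * p) (w * x) (w * y)
  have := T.dist_four_point x (w * y) (w * p) y
  have := T.dist_comm (w * x) (w * p)
  have := T.dist_comm y (w * y)
  have := T.dist_comm (w * p) (w * y)
  have := T.dist_triangle x (w * p) (w * y)
  have := T.dist_triangle x (w * p) y
  omega

theorem dist_mul_mul_eq_zero {x y u v p : G} {R : ℕ}
    (hu : T.dist x (u * x) ≤ R ∧ T.dist y (u * y) ≤ R)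
    (hv : T.dist x (v * x) ≤ R ∧ T.dist y (v * y) ≤ R)
    (hp : T.dist x p + T.dist p y = T.dist x y) (hxp : 2 * R < T.dist x p)
    (hpy : T.dist x p + 2 * R < T.dist x y) :
    T.dist (u * (v * p)) (v * (u * p)) = 0 := by
  have near {w : G} (hw : T.dist y (w * y) ≤ R) :
      T.dist x (w * y) ≤ T.dist x y + R ∧ T.dist x y ≤ T.dist x (w * y) + R := by
    have := T.dist_triangle x y (w * y)
    have := T.dist_triangle x (w * y) y
    have := T.dist_comm y (w * y)
    omega
  have := near hu.2
  have := near hv.2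
  obtain ⟨_, hup⟩ := T.dist_mul_of_mem_segment hu.1 hu.2 hp (by omega) (by omega)
  obtain ⟨_, hvp⟩ := T.dist_mul_of_mem_segment hv.1 hv.2 hp (by omega) (by omega)
  obtain ⟨_, hvup⟩ := T.dist_mul_of_mem_segment hv.1 hv.2 hup (by omega) (by omega)
  obtain ⟨_, huvp⟩ := T.dist_mul_of_mem_segment hu.1 hu.2 hvp (by omega) (by omega)
  exact T.dist_eq_zero_of_mem_segment huvp hvup (by omega)

theorem commute_of_dist_eq_zero {u v p q : G} (hp : T.dist (u * (v * p)) (v * (u * p)) = 0)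
    (hq : T.dist (u * (v * q)) (v * (u * q)) = 0) (hpq : T.dist p q = 1) : Commute u v := by
  have fixes {r : G} (hr : T.dist (u * (v * r)) (v * (u * r)) = 0) :
      T.norm (r⁻¹ * ((u * v)⁻¹ * (v * u) * r)) = 0 := by
    rw [← hr, dist]
    congr 1
    group
  exact inv_mul_eq_one.1 (T.eq_one_of_fixes_edge _ p q (fixes hp) (fixes hq) hpq)

theorem dist_le_of_displacement_le {x y u v : G} {R : ℕ} (huv : ¬Commute u v)
    (hu : T.dist x (u * x) ≤ R ∧ T.dist y (u * y) ≤ R)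
    (hv : T.dist x (v * x) ≤ R ∧ T.dist y (v * y) ≤ R) : T.dist x y ≤ 4 * R + 2 := by
  by_contra! hxy
  obtain ⟨q, hxq, hq⟩ := T.exists_dist_eq x y (k := 2 * R + 2) (by omega)
  obtain ⟨p, hxp, hpq⟩ := T.exists_dist_eq x q (k := 2 * R + 1) (by omega)
  have := T.dist_triangle p q y
  have := T.dist_triangle x p y
  exact huv (T.commute_of_dist_eq_zero
    (T.dist_mul_mul_eq_zero hu hv (p := p) (by omega) (by omega) (by omega))
    (T.dist_mul_mul_eq_zero hu hv hq (by omega) (by omega)) (by omega))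

section Isometry

variable {T} {Φ : G → G} (hΦ : ∀ p q, T.dist (Φ p) (Φ q) = T.dist p q)

include hΦ

theorem dist_iterate_iterate (n : ℕ) (p q : G) : T.dist (Φ^[n] p) (Φ^[n] q) = T.dist p q := by
  induction n with
  | zero => rfl
  | succ n ih => rw [Function.iterate_succ_apply', Function.iterate_succ_apply', hΦ, ih]

theorem dist_iterate_mul_iterate {w : G} (hw : ∀ p, Φ (w * p) = w * Φ p) (n : ℕ) (p : G) :
    T.dist (Φ^[n] p) (w * Φ^[n] p) = T.dist p (w * p) := by
  rw [← dist_iterate_iterate hΦ n p, (Function.Commute.iterate_left hw n) p]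

theorem dist_iterate_eq_mul {x : G} (hx : T.dist x (Φ (Φ x)) = 2 * T.dist x (Φ x)) (n : ℕ) :
    T.dist x (Φ^[n] x) = n * T.dist x (Φ x) := by
  suffices T.dist x (Φ^[n] x) = n * T.dist x (Φ x) ∧
    T.dist x (Φ^[n + 1] x) = (n + 1) * T.dist x (Φ x) from this.1
  induction n with
  | zero => simp [T.dist_self]
  | succ n ih =>
    refine ⟨by simpa using ih.2, ?_⟩
    have one_step (m : ℕ) : T.dist (Φ^[m] x) (Φ^[m + 1] x) = T.dist x (Φ x) := by
      rw [Function.iterate_succ_apply, dist_iterate_iterate hΦ]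
    have two_steps : T.dist (Φ^[n] x) (Φ^[n + 2] x) = 2 * T.dist x (Φ x) := by
      rw [Function.iterate_add_apply, dist_iterate_iterate hΦ]
      exact hx
    have := one_step n
    have : T.dist (Φ^[n + 1] x) (Φ^[n + 2] x) = T.dist x (Φ x) := one_step (n + 1)
    have := T.dist_four_point x (Φ^[n + 1] x) (Φ^[n] x) (Φ^[n + 2] x)
    have := T.dist_triangle x (Φ^[n + 1] x) (Φ^[n + 2] x)
    have := T.dist_triangle x (Φ^[n + 2] x) (Φ^[n + 1] x)
    have := T.dist_comm (Φ^[n] x) (Φ^[n + 1] x)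
    have := T.dist_comm (Φ^[n + 1] x) (Φ^[n + 2] x)
    change T.dist x (Φ^[n + 2] x) = _
    simp only [add_mul, one_mul] at ih ⊢
    omega

theorem dist_apply_apply_ne {u v x : G} (hu : ∀ p, Φ (u * p) = u * Φ p)
    (hv : ∀ p, Φ (v * p) = v * Φ p) (huv : ¬Commute u v) (hx : T.dist x (Φ x) ≠ 0) :
    T.dist x (Φ (Φ x)) ≠ 2 * T.dist x (Φ x) := by
  intro h
  set R := max (T.dist x (u * x)) (T.dist x (v * x))
  have bounded {w : G} (hw : ∀ p, Φ (w * p) = w * Φ p) (hR : T.dist x (w * x) ≤ R) :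
      T.dist x (w * x) ≤ R ∧ T.dist (Φ^[4 * R + 3] x) (w * Φ^[4 * R + 3] x) ≤ R :=
    ⟨hR, (dist_iterate_mul_iterate hΦ hw _ x).trans_le hR⟩
  have hle := T.dist_le_of_displacement_le huv (bounded hu (le_max_left _ _))
    (bounded hv (le_max_right _ _))
  rw [dist_iterate_eq_mul hΦ h] at hle
  have := Nat.mul_le_mul_left (4 * R + 3) (Nat.one_le_iff_ne_zero.2 hx)
  omega

theorem exists_dist_apply_lt {x : G} (h2 : 2 ≤ T.dist x (Φ x))
    (hx : T.dist x (Φ (Φ x)) ≠ 2 * T.dist x (Φ x)) :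
    ∃ r, T.dist r (Φ r) < T.dist x (Φ x) := by
  obtain ⟨r, hxr, hr⟩ := T.exists_dist_eq x (Φ x) (k := 1) (by omega)
  refine ⟨r, ?_⟩
  obtain ⟨c, hc⟩ := T.exists_dist_add_two_mul_eq x (Φ x) (Φ (Φ x))
  have := T.dist_four_point x (Φ r) (Φ x) (Φ (Φ x))
  have := T.dist_four_point r (Φ r) x (Φ x)
  have := hΦ x r
  have := hΦ r (Φ x)
  have := hΦ x (Φ x)
  have := T.dist_comm (Φ x) (Φ r)
  have := T.dist_comm x r
  have := T.dist_comm x (Φ r)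
  omega

theorem exists_forall_dist_mul_eq_zero {w x : G} (hw : ∀ p, Φ (w * p) = w * Φ p)
    (h1 : T.dist x (Φ x) = 1) (h0 : T.dist x (Φ (Φ x)) = 0) :
    ∃ c : Bool, ∀ i : Bool, T.dist (w * cond i (Φ x) x) (cond (i ^^ c) (Φ x) x) = 0 := by
  have hwx : T.dist (Φ x) (w * x) = T.dist x (w * Φ x) := by
    rw [T.dist_eq_of_dist_eq_zero h0, ← hw, hΦ]
  have hwΦ : T.dist (Φ x) (w * Φ x) = T.dist x (w * x) := by rw [← hw, hΦ]
  obtain ⟨e, he⟩ := T.exists_dist_add_two_mul_eq x (w * x) (w * Φ x)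
  have := T.dist_mul_left w x (Φ x)
  have := T.dist_four_point x (w * x) (Φ x) (w * Φ x)
  have := T.dist_four_point x (w * Φ x) (Φ x) (w * x)
  have := T.dist_comm (w * x) (w * Φ x)
  have := T.dist_comm (w * x) (Φ x)
  have := T.dist_comm (w * Φ x) (Φ x)
  have := T.dist_comm (w * x) x
  have := T.dist_comm (w * Φ x) x
  have hcases : T.dist (w * x) x = 0 ∧ T.dist (w * Φ x) (Φ x) = 0 ∨
      T.dist (w * x) (Φ x) = 0 ∧ T.dist (w * Φ x) x = 0 := by omega
  rcases hcases with h | h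
  · exact ⟨false, by simpa using h⟩
  · exact ⟨true, by simpa using h⟩

/-- Elements commuting with an inversion of an edge permute its two ends, so their commutator fixes
both ends. -/
theorem commute_of_inverts_edge {u v x : G} (hu : ∀ p, Φ (u * p) = u * Φ p)
    (hv : ∀ p, Φ (v * p) = v * Φ p) (h1 : T.dist x (Φ x) = 1) (h0 : T.dist x (Φ (Φ x)) = 0) :
    Commute u v := by
  obtain ⟨c, hc⟩ := exists_forall_dist_mul_eq_zero hΦ hu h1 h0
  obtain ⟨e, he⟩ := exists_forall_dist_mul_eq_zero hΦ hv h1 h0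
  have to_end {u v : G} {c e : Bool}
      (hc : ∀ i : Bool, T.dist (u * cond i (Φ x) x) (cond (i ^^ c) (Φ x) x) = 0)
      (he : ∀ i : Bool, T.dist (v * cond i (Φ x) x) (cond (i ^^ e) (Φ x) x) = 0) (i : Bool) :
      T.dist (u * (v * cond i (Φ x) x)) (cond (i ^^ e ^^ c) (Φ x) x) = 0 := by
    rw [T.dist_eq_of_dist_eq_zero ((T.dist_mul_left u _ _).trans (he i)), hc]
  have agree (i : Bool) :
      T.dist (u * (v * cond i (Φ x) x)) (v * (u * cond i (Φ x) x)) = 0 := by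
    rw [T.dist_eq_of_dist_eq_zero (to_end hc he i), Bool.xor_right_comm, T.dist_comm]
    exact to_end he hc i
  exact T.commute_of_dist_eq_zero (agree false) (agree true) h1

theorem exists_dist_apply_eq_zero {u v : G} (hu : ∀ p, Φ (u * p) = u * Φ p)
    (hv : ∀ p, Φ (v * p) = v * Φ p) (huv : ¬Commute u v) : ∃ x, T.dist x (Φ x) = 0 := by
  let x := Function.argmin fun p => T.dist p (Φ p)
  have hmin (p : G) : T.dist x (Φ x) ≤ T.dist p (Φ p) :=
    Function.argmin_le (fun p => T.dist p (Φ p)) p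
  refine ⟨x, by_contra fun hx => ?_⟩
  have hne := dist_apply_apply_ne hΦ hu hv huv hx
  have hx1 : T.dist x (Φ x) = 1 := by
    by_contra h1
    obtain ⟨r, hr⟩ := exists_dist_apply_lt hΦ (by omega) hne
    exact hr.not_ge (hmin r)
  obtain ⟨c, hc⟩ := T.exists_dist_add_two_mul_eq x (Φ x) (Φ (Φ x))
  have := hΦ x (Φ x)
  exact huv (commute_of_inverts_edge hΦ hu hv hx1 (by omega))

end Isometry

end TreeLength

section CommonPrefix

variable {β : Type*} [DecidableEq β]

/-- The longest common prefix of two lists. -/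
def commonPrefix : List β → List β → List β
  | x :: l, y :: m => if x = y then x :: commonPrefix l m else []
  | _, _ => []

theorem commonPrefix_prefix_left (l m : List β) : commonPrefix l m <+: l := by
  fun_induction commonPrefix l m with
  | case1 x l m ih => simpa using ih
  | case2 => exact List.nil_prefix
  | case3 => exact List.nil_prefix

theorem commonPrefix_prefix_right (l m : List β) : commonPrefix l m <+: m := by
  fun_induction commonPrefix l m with
  | case1 x l m ih => simpa using ih
  | case2 => exact List.nil_prefix
  | case3 => exact List.nil_prefix

theorem prefix_commonPrefix {p l m : List β} (hl : p <+: l) (hm : p <+: m) :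
    p <+: commonPrefix l m := by
  induction p generalizing l m with
  | nil => exact List.nil_prefix
  | cons x p ih =>
    obtain ⟨s, rfl⟩ := hl
    obtain ⟨t, rfl⟩ := hm
    simpa [commonPrefix] using ih (List.prefix_append p s) (List.prefix_append p t)

theorem head?_ne_of_commonPrefix_append {l m s t : List β} (hl : l = commonPrefix l m ++ s)
    (hm : m = commonPrefix l m ++ t) {x y : β} (hx : x ∈ s.head?) (hy : y ∈ t.head?) : x ≠ y := by
  rintro rfl
  obtain ⟨s', rfl⟩ := List.head?_eq_some_iff.1 hx
  obtain ⟨t', rfl⟩ := List.head?_eq_some_iff.1 hy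
  have : commonPrefix l m ++ [x] <+: commonPrefix l m :=
    prefix_commonPrefix ⟨s', by simpa using hl.symm⟩ ⟨t', by simpa using hm.symm⟩
  simpa using this.length_le

end CommonPrefix

section WeightedNorm

variable {α : Type*} (wt : α → ℕ)

/-- The total weight of a list of letters and inverse letters. -/
def wordWeight (l : List (α × Bool)) : ℕ := (l.map fun x => wt x.1).sum

theorem wordWeight_append (l m : List (α × Bool)) :
    wordWeight wt (l ++ m) = wordWeight wt l + wordWeight wt m := by
  simp [wordWeight]

theorem wordWeight_cons (x : α × Bool) (l : List (α × Bool)) :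
    wordWeight wt (x :: l) = wt x.1 + wordWeight wt l := by
  simp [wordWeight]

theorem wordWeight_invRev (l : List (α × Bool)) :
    wordWeight wt (FreeGroup.invRev l) = wordWeight wt l := by
  simp [wordWeight, FreeGroup.invRev, List.sum_reverse, Function.comp_def]

theorem wordWeight_le_of_prefix {l m : List (α × Bool)} (h : l <+: m) :
    wordWeight wt l ≤ wordWeight wt m := by
  obtain ⟨t, rfl⟩ := h
  rw [wordWeight_append]
  exact Nat.le_add_right _ _

theorem exists_append_wordWeight_eq (hwt : ∀ x, wt x ≤ 1) {l : List (α × Bool)} {k : ℕ}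
    (hk : k ≤ wordWeight wt l) : ∃ p s, l = p ++ s ∧ wordWeight wt p = k := by
  induction l generalizing k with
  | nil => exact ⟨[], [], rfl, (Nat.le_zero.1 hk).symm⟩
  | cons x l ih =>
    rcases Nat.eq_zero_or_pos k with rfl | hk0
    · exact ⟨[], x :: l, rfl, rfl⟩
    · have hx := hwt x.1
      rw [wordWeight_cons] at hk
      obtain ⟨p, s, rfl, hp⟩ := ih (k := k - wt x.1) (by omega)
      exact ⟨x :: p, s, rfl, by rw [wordWeight_cons]; omega⟩

variable [DecidableEq α]

/-- The weighted word length of an element of a free group. -/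
def weightedNorm (g : FreeGroup α) : ℕ := wordWeight wt g.toWord

theorem weightedNorm_one : weightedNorm wt (1 : FreeGroup α) = 0 := by
  simp [weightedNorm, wordWeight]

theorem weightedNorm_inv (g : FreeGroup α) : weightedNorm wt g⁻¹ = weightedNorm wt g := by
  rw [weightedNorm, FreeGroup.toWord_inv, wordWeight_invRev, weightedNorm]

theorem weightedNorm_mk {l : List (α × Bool)} (hl : FreeGroup.IsReduced l) :
    weightedNorm wt (FreeGroup.mk l) = wordWeight wt l := by
  rw [weightedNorm, FreeGroup.toWord_mk, hl.reduce_eq]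

theorem weightedNorm_const (c : ℕ) (g : FreeGroup α) :
    weightedNorm (fun _ => c) g = c * g.norm := by
  simp [weightedNorm, wordWeight, FreeGroup.norm, mul_comm]

theorem weightedNorm_const_one (g : FreeGroup α) : weightedNorm (fun _ => 1) g = g.norm := by
  rw [weightedNorm_const, one_mul]

omit [DecidableEq α] in
theorem isReduced_invRev {l : List (α × Bool)} (hl : FreeGroup.IsReduced l) :
    FreeGroup.IsReduced (FreeGroup.invRev l) := by
  classical
  rw [← hl.reduce_eq, ← FreeGroup.toWord_mk, ← FreeGroup.toWord_inv]
  exact FreeGroup.isReduced_toWord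

theorem eq_mk_mul_mk_of_toWord_eq_append {g : FreeGroup α} {p s : List (α × Bool)}
    (h : g.toWord = p ++ s) : g = FreeGroup.mk p * FreeGroup.mk s ∧
      FreeGroup.IsReduced p ∧ FreeGroup.IsReduced s := by
  have hg : FreeGroup.IsReduced (p ++ s) := h ▸ FreeGroup.isReduced_toWord
  exact ⟨by rw [FreeGroup.mul_mk, ← h, FreeGroup.mk_toWord], List.IsChain.left_of_append hg,
    List.IsChain.right_of_append hg⟩

omit [DecidableEq α] in
theorem isReduced_invRev_append {s t : List (α × Bool)} (hs : FreeGroup.IsReduced s)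
    (ht : FreeGroup.IsReduced t) (hne : ∀ x ∈ s.head?, ∀ y ∈ t.head?, x ≠ y) :
    FreeGroup.IsReduced (FreeGroup.invRev s ++ t) := by
  refine List.isChain_append.2 ⟨isReduced_invRev hs, ht, fun x hx y hy hxy => ?_⟩
  cases s with
  | nil => simp at hx
  | cons z s =>
    have hzx : (z.1, !z.2) = x := by simpa [FreeGroup.invRev] using hx
    subst hzx
    have hzy := hne z rfl y hy
    grind

theorem weightedNorm_inv_mul_add (g h : FreeGroup α) :
    weightedNorm wt (g⁻¹ * h) + 2 * wordWeight wt (commonPrefix g.toWord h.toWord) =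
      weightedNorm wt g + weightedNorm wt h := by
  obtain ⟨s, hs⟩ := commonPrefix_prefix_left g.toWord h.toWord
  obtain ⟨t, ht⟩ := commonPrefix_prefix_right g.toWord h.toWord
  obtain ⟨hg, -, hs'⟩ := eq_mk_mul_mk_of_toWord_eq_append hs.symm
  obtain ⟨hh, -, ht'⟩ := eq_mk_mul_mk_of_toWord_eq_append ht.symm
  have hred := isReduced_invRev_append hs' ht' fun x hx y hy =>
    head?_ne_of_commonPrefix_append hs.symm ht.symm hx hy
  have hmul : g⁻¹ * h = FreeGroup.mk (FreeGroup.invRev s ++ t) := by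
    rw [← FreeGroup.mul_mk, ← FreeGroup.inv_mk, inv_mul_eq_iff_eq_mul]
    nth_rw 1 [hg, hh]
    group
  rw [hmul, weightedNorm_mk wt hred, wordWeight_append, wordWeight_invRev, weightedNorm,
    weightedNorm]
  nth_rw 2 [← hs]
  nth_rw 3 [← ht]
  rw [wordWeight_append, wordWeight_append]
  ring

theorem weightedNorm_mul_le (g h : FreeGroup α) :
    weightedNorm wt (g * h) ≤ weightedNorm wt g + weightedNorm wt h := by
  have := weightedNorm_inv_mul_add wt g⁻¹ h
  rw [inv_inv, weightedNorm_inv] at this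
  omega

theorem weightedNorm_map_le {β : Type*} [DecidableEq β] (wt' : β → ℕ)
    (f : FreeGroup α →* FreeGroup β)
    (hf : ∀ x, weightedNorm wt' (f (FreeGroup.of x)) ≤ wt x) (g : FreeGroup α) :
    weightedNorm wt' (f g) ≤ weightedNorm wt g := by
  suffices ∀ l, weightedNorm wt' (f (FreeGroup.mk l)) ≤ wordWeight wt l by
    rw [← FreeGroup.mk_toWord (x := g)]
    exact (this _).trans_eq (by rw [FreeGroup.mk_toWord, weightedNorm])
  intro l
  induction l with
  | nil => exact (congrArg (weightedNorm wt') (map_one f)).trans (weightedNorm_one wt') |>.le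
  | cons x l ih =>
    have hx : weightedNorm wt' (f (FreeGroup.mk [x])) ≤ wt x.1 := by
      obtain ⟨i, _ | _⟩ := x
      · rw [← weightedNorm_inv, ← map_inv]
        exact hf i
      · exact hf i
    calc weightedNorm wt' (f (FreeGroup.mk (x :: l)))
        = weightedNorm wt' (f (FreeGroup.mk [x]) * f (FreeGroup.mk l)) := by
          rw [← map_mul, FreeGroup.mul_mk, List.singleton_append]
      _ ≤ wt x.1 + wordWeight wt l := (weightedNorm_mul_le _ _ _).trans (add_le_add hx ih)
      _ = wordWeight wt (x :: l) := (wordWeight_cons wt x l).symm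

theorem weightedNorm_apply_eq {ω : MulAut (FreeGroup α)}
    (hω : ∀ x, weightedNorm wt (ω (FreeGroup.of x)) ≤ wt x)
    (hω' : ∀ x, weightedNorm wt (ω⁻¹ (FreeGroup.of x)) ≤ wt x) (g : FreeGroup α) :
    weightedNorm wt (ω g) = weightedNorm wt g := by
  refine le_antisymm (weightedNorm_map_le wt wt ω.toMonoidHom hω g) ?_
  simpa using weightedNorm_map_le wt wt (ω⁻¹ : MulAut (FreeGroup α)).toMonoidHom hω' (ω g)

/-- The tree length attached to a 0-1 weight: letters of weight `0` are collapsed in the Cayley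
tree. -/
def TreeLength.ofWeight (hwt : ∀ x, wt x ≤ 1)
    (hedge : ∀ c p q, weightedNorm wt (p⁻¹ * (c * p)) = 0 →
      weightedNorm wt (q⁻¹ * (c * q)) = 0 → weightedNorm wt (p⁻¹ * q) = 1 → c = 1) :
    TreeLength (FreeGroup α) where
  norm := weightedNorm wt
  norm_one := weightedNorm_one wt
  norm_inv := weightedNorm_inv wt
  four_point y z t := by
    have hzt := weightedNorm_inv_mul_add wt z t
    have hyt := weightedNorm_inv_mul_add wt y t
    have hyz := weightedNorm_inv_mul_add wt y z
    rcases List.prefix_or_prefix_of_prefix (commonPrefix_prefix_left y.toWord t.toWord)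
      (commonPrefix_prefix_left y.toWord z.toWord) with h | h
    · have := wordWeight_le_of_prefix wt (prefix_commonPrefix
        (h.trans (commonPrefix_prefix_right _ _)) (commonPrefix_prefix_right _ _))
      omega
    · have := wordWeight_le_of_prefix wt (prefix_commonPrefix
        (commonPrefix_prefix_right _ _) (h.trans (commonPrefix_prefix_right _ _)))
      omega
  parity g h := ⟨_, weightedNorm_inv_mul_add wt g h⟩
  exists_between g k hk := by
    obtain ⟨p, s, hps, hp⟩ := exists_append_wordWeight_eq wt hwt hk
    obtain ⟨hg, hp', hs'⟩ := eq_mk_mul_mk_of_toWord_eq_append hps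
    refine ⟨FreeGroup.mk p, by rw [weightedNorm_mk wt hp', hp], ?_⟩
    rw [inv_mul_eq_of_eq_mul hg, weightedNorm_mk wt hp', weightedNorm_mk wt hs',
      ← wordWeight_append, ← hps, weightedNorm]
  eq_one_of_fixes_edge := hedge

/-- The word length of a free group as a tree length. -/
def TreeLength.word (α : Type*) [DecidableEq α] : TreeLength (FreeGroup α) :=
  .ofWeight (fun _ => 1) (fun _ => le_rfl) fun c p _ h _ _ => by
    rwa [weightedNorm_const_one, FreeGroup.norm_eq_zero, inv_mul_eq_one, eq_comm,
      mul_eq_right] at h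

theorem TreeLength.word_norm (g : FreeGroup α) : (TreeLength.word α).norm g = g.norm :=
  weightedNorm_const_one g

end WeightedNorm

section Centralizers

variable {α : Type*}

theorem eq_of_commute_of_of_toWord_eq_cons [DecidableEq α] {z : FreeGroup α} {p : α × Bool}
    {w : List (α × Bool)} (hz : z.toWord = p :: w) {t : α} (ht : Commute (FreeGroup.of t) z) :
    p.1 = t := by
  by_contra hpt
  have hred : FreeGroup.IsReduced ((t, true) :: z.toWord) := by
    have hz' : FreeGroup.IsReduced z.toWord := FreeGroup.isReduced_toWord
    rw [hz] at hz' ⊢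
    exact List.isChain_cons_cons.2 ⟨fun h => absurd h.symm hpt, hz'⟩
  have hmul : (FreeGroup.of t * z).toWord = (t, true) :: z.toWord := by
    nth_rw 1 [← FreeGroup.mk_toWord (x := z)]
    exact (FreeGroup.toWord_mk ..).trans hred.reduce_eq
  have hsub := FreeGroup.toWord_mul_sublist z (FreeGroup.of t)
  rw [← ht.eq, hmul, FreeGroup.toWord_of] at hsub
  have heq := hsub.eq_of_length (by simp)
  rw [hz, List.cons_append, List.cons.injEq] at heq
  exact hpt (congrArg Prod.fst heq.1).symm

theorem subsingleton_of_central {z : FreeGroup α} (hz : z ≠ 1) (hc : ∀ g, Commute g z) :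
    Subsingleton α := by
  classical
  obtain ⟨p, w, hpw⟩ := List.exists_cons_of_ne_nil (mt FreeGroup.toWord_eq_nil_iff.1 hz)
  exact subsingleton_of_forall_eq p.1 fun t =>
    (eq_of_commute_of_of_toWord_eq_cons hpw (hc (FreeGroup.of t))).symm

theorem isCyclic_freeGroup_of_subsingleton [Subsingleton α] : IsCyclic (FreeGroup α) := by
  rcases isEmpty_or_nonempty α with _ | ⟨⟨x⟩⟩
  · infer_instance
  · let _ := uniqueOfSubsingleton x
    infer_instance

theorem isCyclic_of_central {C : Type*} [Group C] [IsFreeGroup C] {z : C} (hz : z ≠ 1)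
    (hc : ∀ g : C, Commute g z) : IsCyclic C := by
  let e := IsFreeGroup.toFreeGroup C
  have hce (g) : Commute g (e z) := by simpa using (hc (e.symm g)).map e
  have := subsingleton_of_central (by simpa using hz) hce
  exact e.isCyclic.2 isCyclic_freeGroup_of_subsingleton

theorem exists_forall_commute_iff_mem_zpowers {x : FreeGroup α} (hx : x ≠ 1) :
    ∃ r, ∀ g, Commute g x ↔ g ∈ Subgroup.zpowers r := by
  let C := Subgroup.centralizer {x}
  have mem_C (g) : g ∈ C ↔ Commute g x := Subgroup.mem_centralizer_singleton_iff
  have : IsCyclic C := isCyclic_of_central (z := ⟨x, (mem_C x).2 (Commute.refl x)⟩)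
    (fun h => hx (congrArg Subtype.val h)) fun g => Subtype.ext ((mem_C g).1 g.2)
  obtain ⟨r, hr⟩ := C.isCyclic_iff_exists_zpowers_eq_top.1 this
  exact ⟨r, fun g => by rw [hr, mem_C]⟩

theorem commute_of_commute_of_ne_one {x y z : FreeGroup α} (hx : x ≠ 1) (hy : Commute y x)
    (hz : Commute z x) : Commute y z := by
  obtain ⟨r, hr⟩ := exists_forall_commute_iff_mem_zpowers hx
  obtain ⟨i, rfl⟩ := (hr y).1 hy
  obtain ⟨j, rfl⟩ := (hr z).1 hz
  exact Commute.zpow_zpow_self r i j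

theorem apply_eq_self_of_commute {φ : MulAut (FreeGroup α)} {x g : FreeGroup α} (hx : x ≠ 1)
    (hφ : φ x = x) (hg : Commute g x) : φ g = g := by
  obtain ⟨r, hr⟩ := exists_forall_commute_iff_mem_zpowers hx
  obtain ⟨m, rfl⟩ := (hr x).1 (Commute.refl x)
  obtain ⟨k, rfl⟩ := (hr g).1 hg
  have hm : m ≠ 0 := by
    rintro rfl
    exact hx (zpow_zero r)
  have hφr : φ r = r := zpow_left_injective hm ((map_zpow φ r m).symm.trans hφ)
  exact (map_zpow φ r k).trans (by rw [hφr])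

end Centralizers

section Automorphisms

section MkAut

variable (x y xi yi : F) (h1 h2 h3 h4)

theorem mkAut_ga : mkAut x y xi yi h1 h2 h3 h4 ga = x := by simp [mkAut, ga]

theorem mkAut_gb : mkAut x y xi yi h1 h2 h3 h4 gb = y := by simp [mkAut, gb]

theorem mkAut_inv_ga : (mkAut x y xi yi h1 h2 h3 h4)⁻¹ ga = xi := by
  rw [MulAut.inv_apply, MulEquiv.symm_apply_eq]
  exact h3.symm

theorem mkAut_inv_gb : (mkAut x y xi yi h1 h2 h3 h4)⁻¹ gb = yi := by
  rw [MulAut.inv_apply, MulEquiv.symm_apply_eq]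
  exact h4.symm

end MkAut

/-- The automorphism exchanging the two generators. -/
def swapGens : MulAut F :=
  mkAut gb ga gb ga (by simp [ga, gb]) (by simp [ga, gb]) (by simp [ga, gb]) (by simp [ga, gb])

/-- The automorphism inverting `b` and fixing `a`. -/
def invB : MulAut F :=
  mkAut ga gb⁻¹ ga gb⁻¹ (by simp [ga, gb]) (by simp [ga, gb]) (by simp [ga, gb]) (by simp [ga, gb])

/-- The automorphism inverting `a` and fixing `b`. -/
def invA : MulAut F :=
  mkAut ga⁻¹ gb ga⁻¹ gb (by simp [ga, gb]) (by simp [ga, gb]) (by simp [ga, gb]) (by simp [ga, gb])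

/-- The automorphism inverting both generators. -/
def invGens : MulAut F :=
  mkAut ga⁻¹ gb⁻¹ ga⁻¹ gb⁻¹
    (by simp [ga, gb]) (by simp [ga, gb]) (by simp [ga, gb]) (by simp [ga, gb])

@[simp] theorem σ_ga : σ ga = ga * gb := mkAut_ga ..
@[simp] theorem σ_gb : σ gb = gb := mkAut_gb ..
@[simp] theorem τ_ga : τ ga = ga := mkAut_ga ..
@[simp] theorem τ_gb : τ gb = gb * ga := mkAut_gb ..
@[simp] theorem pi'_ga : pi' ga = gb := mkAut_ga ..
@[simp] theorem pi'_gb : pi' gb = ga⁻¹ := mkAut_gb ..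
@[simp] theorem σ_symm_ga : MulEquiv.symm σ ga = ga * gb⁻¹ := mkAut_inv_ga ..
@[simp] theorem σ_symm_gb : MulEquiv.symm σ gb = gb := mkAut_inv_gb ..
@[simp] theorem τ_symm_ga : MulEquiv.symm τ ga = ga := mkAut_inv_ga ..
@[simp] theorem τ_symm_gb : MulEquiv.symm τ gb = gb * ga⁻¹ := mkAut_inv_gb ..
@[simp] theorem pi'_symm_ga : MulEquiv.symm pi' ga = gb⁻¹ := mkAut_inv_ga ..
@[simp] theorem pi'_symm_gb : MulEquiv.symm pi' gb = ga := mkAut_inv_gb ..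
@[simp] theorem swapGens_ga : swapGens ga = gb := mkAut_ga ..
@[simp] theorem swapGens_gb : swapGens gb = ga := mkAut_gb ..
@[simp] theorem invB_ga : invB ga = ga := mkAut_ga ..
@[simp] theorem invB_gb : invB gb = gb⁻¹ := mkAut_gb ..
@[simp] theorem invB_symm_ga : MulEquiv.symm invB ga = ga := mkAut_inv_ga ..
@[simp] theorem invB_symm_gb : MulEquiv.symm invB gb = gb⁻¹ := mkAut_inv_gb ..
@[simp] theorem invA_ga : invA ga = ga⁻¹ := mkAut_ga ..
@[simp] theorem invA_gb : invA gb = gb := mkAut_gb ..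
@[simp] theorem invGens_ga : invGens ga = ga⁻¹ := mkAut_ga ..
@[simp] theorem invGens_gb : invGens gb = gb⁻¹ := mkAut_gb ..

theorem hom_eq_of_gens {G : Type*} [Group G] {f g : F →* G} (ha : f ga = g ga)
    (hb : f gb = g gb) : f = g := by
  ext i
  fin_cases i
  · exact ha
  · exact hb

theorem aut_eq_of_gens {φ ψ : MulAut F} (ha : φ ga = ψ ga) (hb : φ gb = ψ gb) : φ = ψ := by
  have h : φ.toMonoidHom = ψ.toMonoidHom := hom_eq_of_gens ha hb
  ext w
  exact DFunLike.congr_fun h w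

theorem aut_mul_conj {G : Type*} [Group G] (φ : MulAut G) (g : G) :
    φ * MulAut.conj g = MulAut.conj (φ g) * φ := by
  ext w
  simp

end Automorphisms

section OuterAutomorphisms

instance {G : Type*} [Group G] : (MulAut.conj : G →* MulAut G).range.Normal where
  conj_mem := by
    rintro _ ⟨g, rfl⟩ φ
    exact ⟨φ g, by rw [aut_mul_conj, mul_inv_cancel_right]⟩

/-- The outer automorphism group of the free group of rank two. -/
abbrev OutF := MulAut F ⧸ (MulAut.conj : F →* MulAut F).range

/-- The outer class of an automorphism. -/
def toOut : MulAut F →* OutF := QuotientGroup.mk' _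

theorem toOut_surjective : Function.Surjective toOut := QuotientGroup.mk'_surjective _

theorem toOut_conj (g : F) : toOut (MulAut.conj g) = 1 :=
  (QuotientGroup.eq_one_iff (MulAut.conj g)).2 ⟨g, rfl⟩

theorem toOut_eq_iff {φ ψ : MulAut F} : toOut φ = toOut ψ ↔ ∃ g, φ = MulAut.conj g * ψ := by
  constructor
  · intro h
    have h1 : toOut (φ * ψ⁻¹) = 1 := by rw [map_mul, map_inv, h, mul_inv_cancel]
    obtain ⟨g, hg⟩ := (QuotientGroup.eq_one_iff (φ * ψ⁻¹)).1 h1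
    exact ⟨g, by rw [hg, inv_mul_cancel_right]⟩
  · rintro ⟨g, rfl⟩
    rw [map_mul, toOut_conj, one_mul]

/-- The outer class of `σ`. -/
def σₒ : OutF := toOut σ

/-- The outer class of `τ`. -/
def τₒ : OutF := toOut τ

/-- The outer class of `π`. -/
def πₒ : OutF := toOut pi'

/-- The outer class of the inversion of `b`. -/
def εₒ : OutF := toOut invB

theorem πₒ_mul_σₒ : πₒ * σₒ = τₒ⁻¹ * πₒ := by
  rw [πₒ, σₒ, τₒ, ← map_inv, ← map_mul, ← map_mul]
  exact congrArg toOut (aut_eq_of_gens (by simp) (by simp))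

theorem πₒ_mul_τₒ : πₒ * τₒ = σₒ⁻¹ * πₒ := by
  rw [πₒ, σₒ, τₒ, ← map_inv, ← map_mul, ← map_mul]
  exact toOut_eq_iff.2 ⟨gb⁻¹, aut_eq_of_gens (by simp) (by simp)⟩

theorem εₒ_mul_σₒ : εₒ * σₒ = σₒ⁻¹ * εₒ := by
  rw [εₒ, σₒ, ← map_inv, ← map_mul, ← map_mul]
  exact congrArg toOut (aut_eq_of_gens (by simp) (by simp))

theorem εₒ_mul_τₒ : εₒ * τₒ = τₒ⁻¹ * εₒ := by
  rw [εₒ, τₒ, ← map_inv, ← map_mul, ← map_mul]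
  exact toOut_eq_iff.2 ⟨ga⁻¹, aut_eq_of_gens (by simp) (by simp)⟩

theorem εₒ_mul_εₒ : εₒ * εₒ = 1 := by
  rw [εₒ, ← map_mul, ← map_one toOut]
  exact congrArg toOut (aut_eq_of_gens (by simp) (by simp))

theorem pi'_mul_pi' : pi' * pi' = invGens := aut_eq_of_gens (by simp) (by simp)

theorem πₒ_pow_four : πₒ * πₒ * (πₒ * πₒ) = 1 := by
  rw [πₒ, ← map_mul, pi'_mul_pi', ← map_mul, ← map_one toOut]
  exact congrArg toOut (aut_eq_of_gens (by simp) (by simp))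

theorem εₒ_mul_πₒ : εₒ * πₒ = πₒ⁻¹ * εₒ := by
  rw [εₒ, πₒ, ← map_inv, ← map_mul, ← map_mul]
  exact congrArg toOut (aut_eq_of_gens (by simp) (by simp))

theorem σₒ_eq : σₒ = τₒ * πₒ * τₒ := by
  rw [σₒ, τₒ, πₒ, ← map_mul, ← map_mul]
  exact toOut_eq_iff.2 ⟨ga, aut_eq_of_gens (by simp [mul_assoc]) (by simp [mul_assoc])⟩

theorem τₒ_eq : τₒ = σₒ * πₒ⁻¹ * σₒ := by
  rw [σₒ, τₒ, πₒ, ← map_inv, ← map_mul, ← map_mul]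
  exact toOut_eq_iff.2 ⟨gb, aut_eq_of_gens (by simp [mul_assoc]) (by simp [mul_assoc])⟩

end OuterAutomorphisms

section Nielsen

namespace TreeLength

variable {G : Type*} [Group G] (T : TreeLength G) {x y z : G}

theorem norm_mul_mul_add_norm (h : T.norm x + T.norm z < T.norm (x * y) + T.norm (y * z)) :
    T.norm (x * (y * z)) + T.norm y = T.norm (x * y) + T.norm (y * z) := by
  have norm_eq (g h : G) : T.norm h = T.dist g (g * h) := by rw [dist, inv_mul_cancel_left]
  rw [norm_eq x y, norm_eq x (y * z), norm_eq (x * y) z, mul_assoc] at *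
  simp only [← T.one_dist] at *
  have := T.dist_four_point 1 (x * y) x (x * (y * z))
  have := T.dist_four_point 1 (x * (y * z)) x (x * y)
  have := T.dist_comm (x * y) (x * (y * z))
  have := T.dist_comm x (x * (y * z))
  have := T.dist_comm x (x * y)
  omega

theorem norm_mul_self_le (h : T.norm (x * y) = T.norm x) (h' : T.norm (x * y⁻¹) = T.norm x) :
    T.norm (y * y) ≤ T.norm y := by
  have hfour := T.four_point x⁻¹ y y⁻¹
  have hinv : T.norm (y⁻¹ * y⁻¹) = T.norm (y * y) := by rw [← T.norm_inv, mul_inv_rev, inv_inv]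
  rw [inv_inv, T.norm_inv, T.norm_inv, hinv, h, h'] at hfour
  omega

theorem dist_add_le_of_midpoint {u v m : G} {k : ℕ} (hz : T.dist z u = T.dist z v)
    (hu : T.dist u m = k) (hv : T.dist m v = k) (huv : T.dist u v = 2 * k) :
    T.dist z m + k ≤ T.dist z u := by
  have := T.dist_four_point z m u v
  have := T.dist_comm m u
  omega

/-- Conjugating by the midpoint of `y` shortens the pair `(y * x, y)`: this replaces the
well-ordering of words in Nielsen's reduction process. -/
theorem exists_norm_conj_add_norm_conj_lt (hy : T.norm y ≠ 0) (hyx : T.norm y ≤ T.norm x)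
    (hr : T.norm (x * y) = T.norm x) (hl : T.norm (y * x) = T.norm x) :
    ∃ p, T.norm (p⁻¹ * (y * x) * p) + T.norm (p⁻¹ * y * p) < T.norm x + T.norm y := by
  obtain ⟨k, hk⟩ := T.parity x⁻¹ y
  rw [inv_inv, hr, T.norm_inv, Nat.add_left_cancel_iff] at hk
  obtain ⟨p, hp, hpy⟩ := T.exists_between y k (by omega)
  have hpy' : T.dist p y = k := by rw [dist]; omega
  have h1p : T.dist 1 p = k := by rw [one_dist, hp]
  have hm : T.dist x (y⁻¹ * p) + k ≤ T.dist x y⁻¹ := by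
    refine T.dist_add_le_of_midpoint (v := 1) ?_ ?_ ?_ ?_
    · rw [T.dist_comm x, T.dist_comm x, one_dist, dist, inv_inv, hl]
    · rw [← mul_one y⁻¹, mul_assoc, one_mul, dist_mul_left, h1p]
    · rw [← inv_mul_cancel y, dist_mul_left, hpy']
    · rw [T.dist_comm, one_dist, T.norm_inv, hk]
  have hn : T.dist 1 (x * p) + k ≤ T.dist 1 x := by
    refine T.dist_add_le_of_midpoint (v := x * y) ?_ ?_ ?_ ?_
    · rw [one_dist, one_dist, hr]
    · rw [dist, inv_mul_cancel_left, hp]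
    · rw [dist_mul_left, hpy']
    · rw [dist, inv_mul_cancel_left, hk]
  have hxy : T.dist x y⁻¹ = T.norm x := by rw [T.dist_comm, dist, inv_inv, hl]
  have hxp : T.dist x (x * p) = k := by rw [dist, inv_mul_cancel_left, hp]
  have hym : T.dist 1 (y⁻¹ * p) = k := by rw [← inv_mul_cancel y, dist_mul_left, T.dist_comm, hpy']
  have hconj : T.norm (p⁻¹ * (y * x) * p) = T.dist (y⁻¹ * p) (x * p) := by
    rw [dist]
    congr 1
    group
  have hle : T.norm (p⁻¹ * y * p) ≤ 2 * k := by
    have hyp : T.dist y (y * p) = k := by rw [dist, inv_mul_cancel_left, hp]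
    have := T.dist_triangle p y (y * p)
    rw [dist, ← mul_assoc] at this
    omega
  have := T.one_dist x
  have := T.dist_comm x (y⁻¹ * p)
  have := T.dist_four_point 1 x (y⁻¹ * p) (x * p)
  refine ⟨p, ?_⟩
  omega

end TreeLength

theorem norm_lt_norm_mul_self {α : Type*} [DecidableEq α] {y : FreeGroup α} (hy : y ≠ 1) :
    y.norm < (y * y).norm := by
  have hsq : (y * y).toWord = FreeGroup.reduceCyclically.conjugator y.toWord ++
      (List.replicate 2 (FreeGroup.reduceCyclically y.toWord)).flatten ++
      FreeGroup.invRev (FreeGroup.reduceCyclically.conjugator y.toWord) := by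
    rw [← FreeGroup.reduceCyclically.reduce_flatten_replicate_succ FreeGroup.isReduced_toWord 1,
      ← pow_two, FreeGroup.toWord_pow]
  have hconj := FreeGroup.reduceCyclically.conj_conjugator_reduceCyclically y.toWord
  have hne : FreeGroup.reduceCyclically y.toWord ≠ [] := by
    intro h
    rw [h, List.append_nil] at hconj
    apply hy
    rw [← FreeGroup.mk_toWord (x := y), ← hconj, ← FreeGroup.mul_mk, ← FreeGroup.inv_mk,
      mul_inv_cancel]
  have hpos := List.length_pos_iff.2 hne
  rw [FreeGroup.norm, FreeGroup.norm, hsq]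
  rw [← congrArg List.length hconj]
  simp only [List.length_append, List.length_flatten, List.map_replicate, List.sum_replicate,
    smul_eq_mul]
  omega

/-- The automorphisms that are products of `σ`, `τ`, `π`, the inversion of `b` and inner
automorphisms; they turn out to be all automorphisms. -/
def elementarySubgroup : Subgroup (MulAut F) := (Subgroup.closure {σₒ, τₒ, πₒ, εₒ}).comap toOut

theorem σ_mem : σ ∈ elementarySubgroup := Subgroup.subset_closure (by simp [σₒ])

theorem τ_mem : τ ∈ elementarySubgroup := Subgroup.subset_closure (by simp [τₒ])

theorem pi'_mem : pi' ∈ elementarySubgroup := Subgroup.subset_closure (by simp [πₒ])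

theorem invB_mem : invB ∈ elementarySubgroup := Subgroup.subset_closure (by simp [εₒ])

theorem conj_mem_elementarySubgroup (g : F) : MulAut.conj g ∈ elementarySubgroup := by
  rw [elementarySubgroup, Subgroup.mem_comap, toOut_conj]
  exact one_mem _

theorem swapGens_mem : swapGens ∈ elementarySubgroup := by
  have h : swapGens = pi' * invB := aut_eq_of_gens (by simp) (by simp)
  exact h ▸ mul_mem pi'_mem invB_mem

theorem invGens_mem : invGens ∈ elementarySubgroup := pi'_mul_pi' ▸ mul_mem pi'_mem pi'_mem

theorem invA_mem : invA ∈ elementarySubgroup := by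
  have h : invA = invGens * invB := aut_eq_of_gens (by simp) (by simp)
  exact h ▸ mul_mem invGens_mem invB_mem

/-- The element of `F` given by a one-letter word. -/
def letter (s : Fin 2 × Bool) : F := FreeGroup.mk [s]

theorem letter_ne_one (s : Fin 2 × Bool) : letter s ≠ 1 := by
  rw [Ne, ← FreeGroup.toWord_eq_nil_iff, letter, FreeGroup.toWord_mk, FreeGroup.reduce_singleton]
  exact List.cons_ne_nil s []

theorem mk_append_singleton (l : List (Fin 2 × Bool)) (s : Fin 2 × Bool) :
    (FreeGroup.mk (l ++ [s]) : F) = FreeGroup.mk l * letter s := FreeGroup.mul_mk.symm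

theorem letter_eq_inv {s t : Fin 2 × Bool} (h : s.1 = t.1) (h' : s.2 ≠ t.2) :
    letter t = (letter s)⁻¹ := by
  rw [letter, letter, FreeGroup.inv_mk]
  simp only [FreeGroup.invRev, List.map_cons, List.map_nil, List.reverse_singleton, h,
    Bool.eq_not_of_ne h', Bool.not_not]

theorem exists_mem_elementarySubgroup_letter {s t : Fin 2 × Bool} (h : s.1 ≠ t.1) :
    ∃ θ ∈ elementarySubgroup, θ ga = letter s ∧ θ gb = letter t := by
  have ga_inv : letter (0, false) = ga⁻¹ := rfl
  have gb_inv : letter (1, false) = gb⁻¹ := rfl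
  have ga_eq : letter (0, true) = ga := rfl
  have gb_eq : letter (1, true) = gb := rfl
  obtain ⟨i, e⟩ := s
  obtain ⟨j, f⟩ := t
  fin_cases i <;> fin_cases j <;> simp only [ne_eq, not_true_eq_false] at h <;>
    cases e <;> cases f <;> simp only [Fin.zero_eta, Fin.mk_one, ga_inv, gb_inv, ga_eq, gb_eq]
  · exact ⟨invGens, invGens_mem, by simp⟩
  · exact ⟨invA, invA_mem, by simp⟩
  · exact ⟨invB, invB_mem, by simp⟩
  · exact ⟨1, one_mem _, by simp⟩
  · exact ⟨swapGens * invGens, mul_mem swapGens_mem invGens_mem, by simp⟩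
  · exact ⟨swapGens * invA, mul_mem swapGens_mem invA_mem, by simp⟩
  · exact ⟨swapGens * invB, mul_mem swapGens_mem invB_mem, by simp⟩
  · exact ⟨swapGens, swapGens_mem, by simp⟩

/-- The basis `(α a, α b)` has minimal total length among all bases obtained from it by elementary
automorphisms. -/
def IsShortest (α : MulAut F) : Prop :=
  ∀ g ∈ elementarySubgroup,
    (α ga).norm + (α gb).norm ≤ (α (g ga)).norm + (α (g gb)).norm

namespace IsShortest

variable {α : MulAut F} (hα : IsShortest α)

include hα

theorem exists_letter {s t : Fin 2 × Bool} (h : s.1 ≠ t.1) :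
    ∃ β, IsShortest β ∧ β ga = α (letter s) ∧ β gb = α (letter t) := by
  obtain ⟨θ, hθ, hs, ht⟩ := exists_mem_elementarySubgroup_letter h
  refine ⟨α * θ, fun g hg => ?_, by rw [MulAut.mul_apply, hs], by rw [MulAut.mul_apply, ht]⟩
  have hle := hα (θ * g) (mul_mem hθ hg)
  simp only [MulAut.mul_apply, hs, ht] at hle ⊢
  refine le_of_eq_of_le ?_ hle
  have norm_letter (s : Fin 2 × Bool) :
      (α (letter s)).norm = (α (FreeGroup.of s.1)).norm := by
    obtain ⟨i, _ | _⟩ := s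
    · rw [letter_eq_inv (s := (i, true)) (t := (i, false)) rfl (by simp), map_inv,
        FreeGroup.norm_inv_eq]
      rfl
    · rfl
  rw [norm_letter, norm_letter]
  rcases Fin.exists_fin_two.1 ⟨s.1, rfl⟩ with hs | hs <;>
    rcases Fin.exists_fin_two.1 ⟨t.1, rfl⟩ with ht | ht <;> rw [hs, ht] at h ⊢
  · exact absurd rfl h
  · rfl
  · exact add_comm _ _
  · exact absurd rfl h

theorem norm_le_norm_mul : (α ga).norm ≤ (α ga * α gb).norm ∧ (α gb).norm ≤ (α ga * α gb).norm := by
  have hl := hα _ σ_mem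
  have hr := hα _ (mul_mem (conj_mem_elementarySubgroup ga) τ_mem)
  simp only [σ_ga, σ_gb, map_mul, MulAut.mul_apply, MulAut.conj_apply, τ_ga, τ_gb,
    mul_assoc, inv_mul_cancel, mul_inv_cancel, mul_one] at hl hr
  omega

theorem not_norm_mul_eq (hr : (α ga * α gb).norm = (α ga).norm) :
    (α gb * α ga).norm ≠ (α ga).norm := by
  intro hl
  have hb : (α gb).norm ≠ 0 := by
    rw [Ne, FreeGroup.norm_eq_zero, EmbeddingLike.map_eq_one_iff]
    exact FreeGroup.of_ne_one _
  have hle := hα.norm_le_norm_mul.2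
  rw [hr] at hle
  simp only [← TreeLength.word_norm] at hb hle hr hl
  obtain ⟨p, hp⟩ := (TreeLength.word (Fin 2)).exists_norm_conj_add_norm_conj_lt hb hle hr hl
  have hmin : (α ga).norm + (α gb).norm ≤
      (p⁻¹ * α gb * α ga * p).norm + (p⁻¹ * α gb * p).norm := by
    simpa [← mul_assoc] using
      hα (MulAut.conj (α⁻¹ p⁻¹) * (swapGens * τ * swapGens * MulAut.conj gb))
        (mul_mem (conj_mem_elementarySubgroup _) (mul_mem (mul_mem (mul_mem swapGens_mem τ_mem)
          swapGens_mem) (conj_mem_elementarySubgroup _)))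
  simp only [TreeLength.word_norm, ← mul_assoc] at hp
  omega

theorem norm_letter_le {s t : Fin 2 × Bool} (h : s.1 = t.1 → s.2 = t.2) :
    (α (letter s)).norm ≤ (α (letter s) * α (letter t)).norm ∧
      (α (letter t)).norm ≤ (α (letter s) * α (letter t)).norm := by
  by_cases hst : s.1 = t.1
  · obtain rfl : s = t := Prod.ext hst (h hst)
    have := norm_lt_norm_mul_self ((EmbeddingLike.map_ne_one_iff (f := α)).2 (letter_ne_one s))
    omega
  · obtain ⟨β, hβ, hs, ht⟩ := hα.exists_letter hst
    rw [← hs, ← ht]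
    exact hβ.norm_le_norm_mul

theorem norm_letter_add_lt {r s t : Fin 2 × Bool} (hrs : r.1 = s.1 → r.2 = s.2)
    (hst : s.1 = t.1 → s.2 = t.2) :
    (α (letter r)).norm + (α (letter t)).norm <
      (α (letter r) * α (letter s)).norm + (α (letter s) * α (letter t)).norm := by
  have hr := (hα.norm_letter_le hrs).1
  have ht := (hα.norm_letter_le hst).2
  have hsq (s) : (α (letter s)).norm < (α (letter s) * α (letter s)).norm :=
    norm_lt_norm_mul_self ((EmbeddingLike.map_ne_one_iff (f := α)).2 (letter_ne_one s))
  by_cases h1 : r.1 = s.1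
  · obtain rfl : r = s := Prod.ext h1 (hrs h1)
    have := hsq r
    omega
  by_cases h2 : s.1 = t.1
  · obtain rfl : s = t := Prod.ext h2 (hst h2)
    have := hsq s
    omega
  by_contra hc
  have hrt : r.1 = t.1 := by omega
  by_cases h3 : r.2 = t.2
  · obtain rfl : r = t := Prod.ext hrt h3
    obtain ⟨β, hβ, hβr, hβs⟩ := hα.exists_letter h1
    refine hβ.not_norm_mul_eq ?_ ?_ <;> rw [hβr, hβs] <;> omega
  · rw [letter_eq_inv hrt h3, map_inv] at hc ht
    have hinv : (α (letter s) * (α (letter r))⁻¹).norm =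
        (α (letter r) * (α (letter s))⁻¹).norm := by
      rw [← FreeGroup.norm_inv_eq, mul_inv_rev, inv_inv]
    rw [FreeGroup.norm_inv_eq, hinv] at hc ht
    have := hsq s
    have := (TreeLength.word (Fin 2)).norm_mul_self_le (x := α (letter r)) (y := α (letter s))
    simp only [TreeLength.word_norm] at this
    omega

theorem two_le_norm_and_norm_add_eq (l : List (Fin 2 × Bool)) (s t : Fin 2 × Bool)
    (h : FreeGroup.IsReduced (l ++ [s, t])) :
    2 ≤ (α (FreeGroup.mk (l ++ [s, t]))).norm ∧
      (α (FreeGroup.mk (l ++ [s, t]))).norm + (α (letter s)).norm =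
        (α (FreeGroup.mk (l ++ [s]))).norm + (α (letter s) * α (letter t)).norm := by
  have word := TreeLength.word_norm (α := Fin 2)
  have append_pair (l : List (Fin 2 × Bool)) (s t : Fin 2 × Bool) :
      α (FreeGroup.mk (l ++ [s, t])) = α (FreeGroup.mk (l ++ [s])) * α (letter t) := by
    rw [List.append_cons, mk_append_singleton, map_mul]
  have hst : s.1 = t.1 → s.2 = t.2 := by
    simpa using h.infix (List.suffix_append l [s, t]).isInfix
  have hle := hα.norm_letter_le hst
  induction l using List.reverseRecOn generalizing s t with
  | nil =>
    have hne (s) : (α (letter s)).norm ≠ 0 := by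
      rw [Ne, FreeGroup.norm_eq_zero, EmbeddingLike.map_eq_one_iff]
      exact letter_ne_one s
    obtain ⟨c, hc⟩ := (TreeLength.word (Fin 2)).parity (α (letter s))⁻¹ (α (letter t))
    rw [inv_inv, word, word, word, FreeGroup.norm_inv_eq] at hc
    have := hne s
    have := hne t
    rw [append_pair, List.nil_append, ← letter]
    omega
  | append_singleton l r ih =>
    have hred : FreeGroup.IsReduced (l ++ [r, s]) :=
      h.infix ⟨[], [t], by simp⟩
    have hrs : r.1 = s.1 → r.2 = s.2 := by
      simpa using hred.infix (List.suffix_append l [r, s]).isInfix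
    obtain ⟨htwo, hadd⟩ := ih r s hred hrs (hα.norm_letter_le hrs)
    have hlt := hα.norm_letter_add_lt hrs hst
    have hgrow := (TreeLength.word (Fin 2)).norm_mul_mul_add_norm
      (x := α (FreeGroup.mk (l ++ [r]))) (y := α (letter s)) (z := α (letter t))
    rw [append_pair, ← List.append_cons, append_pair, mul_assoc]
    rw [append_pair] at htwo hadd
    simp only [word] at hgrow
    omega

theorem exists_letter_eq {x : F} (hx : x.norm = 1) : ∃ s, α⁻¹ x = letter s := by
  have hmk : FreeGroup.mk (α⁻¹ x).toWord = α⁻¹ x := FreeGroup.mk_toWord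
  rcases List.eq_nil_or_concat (α⁻¹ x).toWord with h0 | ⟨l, t, hl⟩
  · rw [FreeGroup.toWord_eq_nil_iff, EmbeddingLike.map_eq_one_iff] at h0
    rw [h0, FreeGroup.norm_one] at hx
    exact absurd hx zero_ne_one
  rcases List.eq_nil_or_concat l with rfl | ⟨m, s, rfl⟩
  · exact ⟨t, by rw [← hmk, hl]; rfl⟩
  · simp only [List.concat_eq_append, ← List.append_cons] at hl
    have h2 := (hα.two_le_norm_and_norm_add_eq m s t (hl ▸ FreeGroup.isReduced_toWord)).1
    rw [← hl, hmk, MulAut.apply_inv_self, hx] at h2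
    exact absurd h2 (by norm_num)

theorem mem_elementarySubgroup : α ∈ elementarySubgroup := by
  obtain ⟨s, hs⟩ := hα.exists_letter_eq (FreeGroup.norm_of 0)
  obtain ⟨t, ht⟩ := hα.exists_letter_eq (FreeGroup.norm_of 1)
  have hst : s.1 ≠ t.1 := by
    intro h
    by_cases h' : s.2 = t.2
    · rw [← Prod.ext h h', ← hs] at ht
      exact absurd (FreeGroup.of_injective (α⁻¹.injective ht)) (by decide)
    · rw [letter_eq_inv h h', ← hs, ← map_inv] at ht
      have := congrArg FreeGroup.toWord (α⁻¹.injective ht)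
      simp [FreeGroup.toWord_inv, FreeGroup.invRev] at this
  obtain ⟨θ, hθ, hθs, hθt⟩ := exists_mem_elementarySubgroup_letter hst
  have h : α⁻¹ = θ := aut_eq_of_gens (hs.trans hθs.symm) (ht.trans hθt.symm)
  rw [← inv_mem_iff, h]
  exact hθ

end IsShortest

theorem elementarySubgroup_eq_top : elementarySubgroup = ⊤ := by
  refine eq_top_iff.2 fun α _ => ?_
  let totalNorm (γ : MulAut F) : ℕ := (α (γ ga)).norm + (α (γ gb)).norm
  have hne : (elementarySubgroup : Set (MulAut F)).Nonempty := ⟨1, one_mem _⟩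
  let γ := Function.argminOn totalNorm (elementarySubgroup : Set (MulAut F)) hne
  have hγ : γ ∈ elementarySubgroup := Function.argminOn_mem ..
  have hshort : IsShortest (α * γ) := fun g hg =>
    Function.argminOn_le totalNorm (elementarySubgroup : Set (MulAut F)) (mul_mem hγ hg)
  exact (mul_mem_cancel_right hγ).1 hshort.mem_elementarySubgroup

theorem closure_outer_classes : Subgroup.closure {σₒ, τₒ, πₒ, εₒ} = ⊤ := by
  refine eq_top_iff.2 fun q _ => ?_
  obtain ⟨α, rfl⟩ := toOut_surjective q
  have h : α ∈ elementarySubgroup := elementarySubgroup_eq_top ▸ Subgroup.mem_top α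
  exact h

end Nielsen

section CommutatorSubgroup

open RegularWreathProduct
open scoped commutatorElement

/-- The homomorphism of wreath products induced by a homomorphism of the bases. -/
def wreathMap {G H : Type*} [Group G] [Group H] (Q : Type*) [Group Q] (f : G →* H) :
    G ≀ᵣ Q →* H ≀ᵣ Q where
  toFun x := ⟨f ∘ x.left, x.right⟩
  map_one' := by ext <;> simp
  map_mul' x y := by ext <;> simp

/-- The Kaloujnine–Krasner homomorphism of `p : G →* Q`, relative to the section `s` of `p`. -/
def kaloujnineKrasner {G Q : Type*} [Group G] [Group Q] (p : G →* Q) (s : Q → G) :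
    G →* G ≀ᵣ Q where
  toFun w := ⟨fun x => (s x)⁻¹ * w * s ((p w)⁻¹ * x), p w⟩
  map_one' := by ext <;> simp
  map_mul' v w := by ext <;> simp [mul_assoc]

/-- The lattice of exponent vectors, written multiplicatively. -/
abbrev ExpVec := Multiplicative (ℤ × ℤ)

/-- The abelianisation of `F`: the exponent sums of a word. -/
def exponents : F →* ExpVec :=
  FreeGroup.lift ![Multiplicative.ofAdd (1, 0), Multiplicative.ofAdd (0, 1)]

theorem exponents_ga : exponents ga = Multiplicative.ofAdd (1, 0) := by simp [exponents, ga]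

theorem exponents_gb : exponents gb = Multiplicative.ofAdd (0, 1) := by simp [exponents, gb]

/-- The word `b ^ j * a ^ i` with exponent vector `(i, j)`. -/
def normalWord (x : ExpVec) : F := gb ^ x.toAdd.2 * ga ^ x.toAdd.1

theorem exponents_normalWord (x : ExpVec) : exponents (normalWord x) = x := by
  simp [normalWord, exponents_ga, exponents_gb, ← ofAdd_zsmul, ← ofAdd_add]

theorem exists_comp_exponents {A : Type*} [CommGroup A] (f : F →* A) :
    ∃ g : ExpVec →* A, g.comp exponents = f := by
  let g : ExpVec →* A :=
    { toFun := fun x => f ga ^ x.toAdd.1 * f gb ^ x.toAdd.2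
      map_one' := by simp
      map_mul' := fun x y => by simp [zpow_add, mul_mul_mul_comm] }
  exact ⟨g, hom_eq_of_gens (by simp [g, exponents_ga]) (by simp [g, exponents_gb])⟩

/-- The commutator `a b a⁻¹ b⁻¹`. -/
def basicCommutator : F := ga * gb * ga⁻¹ * gb⁻¹

/-- The coordinates of `a` in `wreathWord`, chosen so that the coordinate of `a b a⁻¹ b⁻¹` at `x`
is the generator `x`. -/
def wreathCoord (x : ExpVec) : FreeGroup ExpVec :=
  ((⟨FreeGroup.of, exponents gb⟩ : FreeGroup ExpVec ≀ᵣ ExpVec) ^ x.toAdd.2).left x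

theorem wreathCoord_eq_of_mul (x : ExpVec) :
    wreathCoord x = FreeGroup.of x * wreathCoord ((exponents gb)⁻¹ * x) := by
  have hx : ((exponents gb)⁻¹ * x).toAdd.2 = x.toAdd.2 - 1 := by
    simp [exponents_gb, sub_eq_neg_add]
  have hrec := zpow_one_add
    (⟨FreeGroup.of, exponents gb⟩ : FreeGroup ExpVec ≀ᵣ ExpVec) (x.toAdd.2 - 1)
  rw [add_sub_cancel] at hrec
  rw [wreathCoord, hrec, mul_left, Pi.mul_apply, wreathCoord, hx]

/-- The image of `F` in the wreath product of the free group on the exponent vectors with the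
group of exponent vectors; it makes the commutator subgroup of `F` visibly free. -/
def wreathWord : F →* FreeGroup ExpVec ≀ᵣ ExpVec :=
  FreeGroup.lift ![⟨wreathCoord, exponents ga⟩, inl (exponents gb)]

theorem wreathWord_ga : wreathWord ga = ⟨wreathCoord, exponents ga⟩ := by simp [wreathWord, ga]

theorem wreathWord_gb : wreathWord gb = inl (exponents gb) := by simp [wreathWord, gb]

theorem wreathWord_right (w : F) : (wreathWord w).right = exponents w := by
  have h : rightHom.comp wreathWord = exponents :=
    hom_eq_of_gens (by simp [wreathWord_ga]) (by simp [wreathWord_gb])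
  exact DFunLike.congr_fun h w

theorem wreathWord_basicCommutator_left (x : ExpVec) :
    (wreathWord basicCommutator).left x = FreeGroup.of x := by
  have hcomm : exponents ga * ((exponents gb)⁻¹ * (exponents ga)⁻¹ * x) = (exponents gb)⁻¹ * x := by
    rw [mul_comm (exponents gb)⁻¹, mul_assoc, mul_inv_cancel_left]
  simp [basicCommutator, wreathWord_ga, wreathWord_gb, wreathCoord_eq_of_mul x, hcomm]

/-- The homomorphism sending `x` to the conjugate of `a b a⁻¹ b⁻¹` by the normal word of `x`. -/
def conjWord : FreeGroup ExpVec →* F :=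
  FreeGroup.lift fun x => (normalWord x)⁻¹ * basicCommutator * normalWord x

theorem wreathMap_conjWord_wreathWord (w : F) :
    wreathMap ExpVec conjWord (wreathWord w) = kaloujnineKrasner exponents normalWord w := by
  have hgb (x : ExpVec) : normalWord ((exponents gb)⁻¹ * x) = gb⁻¹ * normalWord x := by
    simp [normalWord, exponents_gb, zpow_add, mul_assoc]
  have hpow (n : ℤ) : wreathMap ExpVec conjWord (⟨FreeGroup.of, exponents gb⟩ ^ n) =
      kaloujnineKrasner exponents normalWord (ga * gb ^ n * ga⁻¹) := by
    rw [map_zpow, ← conj_zpow, map_zpow]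
    congr 1
    refine RegularWreathProduct.ext (funext fun x => ?_) ?_
    · simp [wreathMap, kaloujnineKrasner, conjWord, basicCommutator, hgb, mul_assoc]
    · simp [wreathMap, kaloujnineKrasner]
  have h : (wreathMap ExpVec conjWord).comp wreathWord =
      kaloujnineKrasner exponents normalWord := by
    refine hom_eq_of_gens (RegularWreathProduct.ext (funext fun x => ?_) ?_)
      (RegularWreathProduct.ext (funext fun x => ?_) ?_)
    · rw [MonoidHom.comp_apply, wreathWord_ga]
      refine (congrFun (congrArg left (hpow x.toAdd.2)) x).trans ?_
      simp [kaloujnineKrasner, normalWord, exponents_ga, exponents_gb, zpow_add, mul_assoc]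
    · simp [wreathMap, kaloujnineKrasner, wreathWord_ga]
    · simp [wreathMap, kaloujnineKrasner, wreathWord_gb, hgb]
    · simp [wreathMap, kaloujnineKrasner, wreathWord_gb]
  exact DFunLike.congr_fun h w

/-- The expression of an element of the commutator subgroup in the free basis of conjugates of
`a b a⁻¹ b⁻¹` by normal words. -/
def basisWord : exponents.ker →* FreeGroup ExpVec where
  toFun w := (wreathWord w).left 1
  map_one' := by simp
  map_mul' v w := by
    simp [wreathWord_right, exponents.mem_ker.1 v.2]

theorem conjWord_basisWord (w : exponents.ker) : conjWord (basisWord w) = w := by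
  have h := congrFun (congrArg left (wreathMap_conjWord_wreathWord w)) 1
  have h1 : normalWord 1 = 1 := by simp [normalWord]
  simpa [basisWord, wreathMap, kaloujnineKrasner, exponents.mem_ker.1 w.2, h1] using h

/-- The subgroup generated by the conjugates of `a b a⁻¹ b⁻¹` with exponent vector outside `T`. -/
def conjugatesOutside (T : Finset ExpVec) : Subgroup F :=
  Subgroup.closure {w | ∃ h, exponents h ∉ T ∧ w = h⁻¹ * basicCommutator * h}

/-- The endomorphism of the free group killing the generators outside `T`. -/
def killOutside (T : Finset ExpVec) : FreeGroup ExpVec →* FreeGroup ExpVec :=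
  FreeGroup.lift fun x => if x ∈ T then FreeGroup.of x else 1

theorem mul_mul_inv_mem_conjugatesOutside {T : Finset ExpVec} {g w : F} (hg : exponents g = 1)
    (hw : w ∈ conjugatesOutside T) : g * w * g⁻¹ ∈ conjugatesOutside T := by
  induction hw using Subgroup.closure_induction with
  | mem w hw =>
    obtain ⟨h, hT, rfl⟩ := hw
    exact Subgroup.subset_closure ⟨h * g⁻¹, by simpa [hg] using hT, by group⟩
  | one => simp [one_mem]
  | mul v w _ _ hv hw =>
    rw [← conj_mul]
    exact mul_mem hv hw
  | inv w _ hw =>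
    rw [← conj_inv]
    exact inv_mem hw

theorem exponents_basicCommutator : exponents basicCommutator = 1 := by
  simp [basicCommutator]

theorem exponents_conjWord (z : FreeGroup ExpVec) : exponents (conjWord z) = 1 := by
  have h : exponents.comp conjWord = 1 := by
    ext x : 1
    simp [conjWord, exponents_basicCommutator]
  exact DFunLike.congr_fun h z

theorem conjWord_mem_conjugatesOutside {T : Finset ExpVec} (z : FreeGroup ExpVec) :
    conjWord z * (conjWord (killOutside T z))⁻¹ ∈ conjugatesOutside T := by
  induction z using FreeGroup.induction_on with
  | C1 => simp [one_mem]
  | of x =>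
    by_cases hx : x ∈ T
    · simp [killOutside, hx, one_mem]
    · refine Subgroup.subset_closure ⟨normalWord x, by rwa [exponents_normalWord], ?_⟩
      simp [killOutside, hx, conjWord]
  | inv_of x hx =>
    have := mul_mul_inv_mem_conjugatesOutside (exponents_conjWord (FreeGroup.of x)⁻¹)
      (inv_mem hx)
    simpa [mul_assoc] using this
  | mul y z hy hz =>
    have := mul_mem (mul_mul_inv_mem_conjugatesOutside (exponents_conjWord y) hz) hy
    simpa [mul_assoc] using this

theorem basisWord_conj (h : F) (hw : h⁻¹ * basicCommutator * h ∈ exponents.ker) :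
    basisWord ⟨h⁻¹ * basicCommutator * h, hw⟩ = ((wreathWord h).left (exponents h))⁻¹ *
      FreeGroup.of (exponents h) * (wreathWord h).left (exponents h) := by
  simp [basisWord, wreathWord_right, exponents_basicCommutator, wreathWord_basicCommutator_left]

theorem mem_conjugatesOutside_iff {T : Finset ExpVec} (w : exponents.ker) :
    (w : F) ∈ conjugatesOutside T ↔ killOutside T (basisWord w) = 1 := by
  constructor
  · intro hw
    have hle : conjugatesOutside T ≤
        ((killOutside T).comp basisWord).ker.map exponents.ker.subtype := by
      refine (Subgroup.closure_le _).2 ?_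
      rintro _ ⟨h, hT, rfl⟩
      have hker : h⁻¹ * basicCommutator * h ∈ exponents.ker := by
        simp [exponents.mem_ker, exponents_basicCommutator]
      refine ⟨⟨_, hker⟩, ?_, rfl⟩
      simp [MonoidHom.mem_ker, basisWord_conj, killOutside, hT]
    obtain ⟨v, hv, hvw⟩ := hle hw
    rwa [← Subtype.ext hvw]
  · intro hw
    simpa [hw, conjWord_basisWord] using conjWord_mem_conjugatesOutside (T := T) (basisWord w)

theorem mem_of_generators_mem (S : Subgroup (MulAut F)) (hconj : ∀ g, MulAut.conj g ∈ S)
    (hσ : σ ∈ S) (hτ : τ ∈ S) (hπ : pi' ∈ S) (hε : invB ∈ S) (φ : MulAut F) : φ ∈ S := by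
  have hle : Subgroup.closure {σₒ, τₒ, πₒ, εₒ} ≤ S.map toOut := by
    rw [Subgroup.closure_le]
    rintro _ (rfl | rfl | rfl | rfl)
    exacts [⟨σ, hσ, rfl⟩, ⟨τ, hτ, rfl⟩, ⟨pi', hπ, rfl⟩, ⟨invB, hε, rfl⟩]
  rw [closure_outer_classes] at hle
  obtain ⟨ψ, hψ, h⟩ := hle (Subgroup.mem_top (toOut φ))
  obtain ⟨g, rfl⟩ := toOut_eq_iff.1 h.symm
  exact mul_mem (hconj g) hψ

theorem isConj_apply_basicCommutator (φ : MulAut F) :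
    IsConj basicCommutator (φ basicCommutator) ∨ IsConj basicCommutator (φ basicCommutator⁻¹) := by
  have hinv {u v : F} : IsConj u v → IsConj u⁻¹ v⁻¹ := by
    simp only [isConj_iff]
    rintro ⟨c, rfl⟩
    exact ⟨c, conj_inv.symm⟩
  let S : Subgroup (MulAut F) :=
    { carrier := {φ | IsConj basicCommutator (φ basicCommutator) ∨
        IsConj basicCommutator (φ basicCommutator⁻¹)}
      one_mem' := Or.inl (IsConj.refl _)
      mul_mem' := by
        rintro φ ψ (hφ | hφ) (hψ | hψ)
        · exact Or.inl (hφ.trans (φ.toMonoidHom.map_isConj hψ))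
        · exact Or.inr (hφ.trans (φ.toMonoidHom.map_isConj hψ))
        · refine Or.inr (hφ.trans ?_)
          simpa using φ.toMonoidHom.map_isConj (hinv hψ)
        · refine Or.inl (hφ.trans ?_)
          simpa using φ.toMonoidHom.map_isConj (hinv hψ)
      inv_mem' := by
        rintro φ (hφ | hφ)
        · exact Or.inl (by simpa using φ⁻¹.toMonoidHom.map_isConj hφ.symm)
        · refine Or.inr ?_
          have := φ⁻¹.toMonoidHom.map_isConj hφ.symm
          simpa using hinv this }
  refine mem_of_generators_mem S (fun g => Or.inl (isConj_iff.2 ⟨g, rfl⟩)) (Or.inl ?_) (Or.inl ?_)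
    (Or.inl ?_) (Or.inr ?_) φ
  · rw [show σ basicCommutator = basicCommutator by simp [basicCommutator]]
  · rw [show τ basicCommutator = basicCommutator by simp [basicCommutator, mul_assoc]]
  · exact isConj_iff.2 ⟨ga⁻¹, by simp [basicCommutator, mul_assoc]⟩
  · exact isConj_iff.2 ⟨gb⁻¹, by simp [basicCommutator, mul_assoc]⟩

theorem exists_conjugatesOutside_image_le (φ : MulAut F) :
    ∃ (L : ExpVec →* ExpVec) (x₀ : ExpVec), (∀ w, L (exponents w) = exponents (φ w)) ∧
      ∀ T : Finset ExpVec, conjugatesOutside (T.image fun x => L x * x₀) ≤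
        (conjugatesOutside T).map φ.toMonoidHom := by
  obtain ⟨L, hL⟩ := exists_comp_exponents (exponents.comp φ.toMonoidHom)
  have hL (w) : L (exponents w) = exponents (φ w) := DFunLike.congr_fun hL w
  obtain ⟨v, g, hv, hg⟩ : ∃ v g, (v = basicCommutator ∨ v = basicCommutator⁻¹) ∧
      basicCommutator = g⁻¹ * φ v * g := by
    rcases isConj_apply_basicCommutator φ with h | h <;> obtain ⟨g, hg⟩ := isConj_iff.1 h
    exacts [⟨_, g, Or.inl rfl, by rw [← hg]; group⟩, ⟨_, g, Or.inr rfl, by rw [← hg]; group⟩]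
  refine ⟨L, (exponents g)⁻¹, hL, fun T => (Subgroup.closure_le _).2 ?_⟩
  rintro _ ⟨h, hT, rfl⟩
  have hmem (x : F) (hx : exponents x ∉ T) : x⁻¹ * v * x ∈ conjugatesOutside T := by
    have hbase := Subgroup.subset_closure
      (k := {w | ∃ h, exponents h ∉ T ∧ w = h⁻¹ * basicCommutator * h}) ⟨x, hx, rfl⟩
    rcases hv with rfl | rfl
    · exact hbase
    · rw [show x⁻¹ * basicCommutator⁻¹ * x = (x⁻¹ * basicCommutator * x)⁻¹ by group]
      exact inv_mem hbase
  refine ⟨_, hmem (φ⁻¹ (g * h)) fun hx => hT ?_, ?_⟩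
  · exact Finset.mem_image.2 ⟨_, hx, by simp [hL]⟩
  · rw [hg]
    simp [mul_assoc]

theorem exponents_apply_eq_one (φ : MulAut F) {w : F} (hw : exponents w = 1) :
    exponents (φ w) = 1 := by
  obtain ⟨L, -, hL, -⟩ := exists_conjugatesOutside_image_le φ
  rw [← hL, hw, map_one]

theorem killOutside_killOutside (S T : Finset ExpVec) (z : FreeGroup ExpVec) :
    killOutside S (killOutside T z) = killOutside (S ∩ T) z := by
  have h : (killOutside S).comp (killOutside T) = killOutside (S ∩ T) := by
    ext x : 1
    by_cases hT : x ∈ T <;> simp [killOutside, hT]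
  exact DFunLike.congr_fun h z

theorem exists_killOutside_eq_self (z : FreeGroup ExpVec) : ∃ T, killOutside T z = z := by
  have hmono {S T : Finset ExpVec} (hST : S ⊆ T) {z} (hz : killOutside S z = z) :
      killOutside T z = z := by
    rw [← hz, killOutside_killOutside, Finset.inter_eq_right.2 hST]
  induction z using FreeGroup.induction_on with
  | C1 => exact ⟨∅, map_one _⟩
  | of x => exact ⟨{x}, by simp [killOutside]⟩
  | inv_of x hx => exact hx.imp fun T hT => by rw [map_inv, hT]
  | mul y z hy hz =>
    obtain ⟨S, hS⟩ := hy
    obtain ⟨T, hT⟩ := hz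
    exact ⟨S ∪ T, by rw [map_mul, hmono Finset.subset_union_left hS,
      hmono Finset.subset_union_right hT]⟩

theorem commute_killOutside {T : Finset ExpVec} (hT : (T : Set ExpVec).Subsingleton)
    (y z : FreeGroup ExpVec) : Commute (killOutside T y) (killOutside T z) := by
  obtain ⟨p, hp⟩ : ∃ p, ∀ x ∈ T, x = p := by
    rcases hT.eq_empty_or_singleton with h | ⟨p, h⟩
    · exact ⟨1, by simp [Finset.coe_eq_empty.1 h]⟩
    · exact ⟨p, by simp [Finset.coe_eq_singleton.1 h]⟩
  have hmem (z) : killOutside T z ∈ Subgroup.zpowers (FreeGroup.of p) := by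
    refine FreeGroup.range_lift_le ?_ ⟨z, rfl⟩
    rintro _ ⟨x, rfl⟩
    dsimp only
    split_ifs with hx
    · exact hp x hx ▸ Subgroup.mem_zpowers _
    · exact one_mem _
  exact setLike_mul_comm (hmem y) (hmem z)

theorem exponents_eq_one_of_not_injective {φ : MulAut F}
    (hφ : ∀ n, 0 < n → ∀ w, exponents ((φ ^ n) w) = exponents w → exponents w = 1) {z : F}
    (hz : ¬Function.Injective fun n : ℕ => exponents ((φ ^ n) z)) : exponents z = 1 := by
  obtain ⟨m, n, hmn, heq⟩ : ∃ m n, m < n ∧ exponents ((φ ^ m) z) = exponents ((φ ^ n) z) := by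
    contrapose! hz
    exact .of_lt_imp_ne hz
  have hm : exponents ((φ ^ m) z) = 1 := by
    refine hφ (n - m) (Nat.sub_pos_of_lt hmn) _ ?_
    rw [← MulAut.mul_apply, ← pow_add, Nat.sub_add_cancel hmn.le, heq]
  simpa using exponents_apply_eq_one (φ ^ m)⁻¹ hm

open scoped Pointwise in
/-- A fixed element outside some `conjugatesOutside T` is outside one with `T` of minimal
cardinality; the minimal `T` are permuted by an affine map and confined to a finite set, so that
differences of their elements have finite orbits. -/
theorem exists_subsingleton_notMem_conjugatesOutside {φ : MulAut F}
    (hφ : ∀ n, 0 < n → ∀ w, exponents ((φ ^ n) w) = exponents w → exponents w = 1)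
    {w : exponents.ker} (hw : φ w = w) (hw1 : (w : F) ≠ 1) :
    ∃ T : Finset ExpVec, (T : Set ExpVec).Subsingleton ∧ (w : F) ∉ conjugatesOutside T := by
  obtain ⟨L, x₀, hL, hLT⟩ := exists_conjugatesOutside_image_le φ
  obtain ⟨Y, hY⟩ := exists_killOutside_eq_self (basisWord w)
  have hinter (T) (hT : (w : F) ∉ conjugatesOutside T) : (w : F) ∉ conjugatesOutside (T ∩ Y) := by
    rwa [mem_conjugatesOutside_iff, ← killOutside_killOutside, hY, ← mem_conjugatesOutside_iff]
  have hYw : (w : F) ∉ conjugatesOutside Y := by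
    rw [mem_conjugatesOutside_iff, hY]
    intro h
    exact hw1 (by rw [← conjWord_basisWord, h, map_one])
  obtain ⟨T, hT, hmin⟩ := (measure Finset.card).wf.has_min
    {T : Finset ExpVec | (w : F) ∉ conjugatesOutside T} ⟨Y, hYw⟩
  have hiter (n : ℕ) : (w : F) ∉ conjugatesOutside (T.image (fun x => L x * x₀)^[n]) := by
    induction n with
    | zero => simpa using hT
    | succ n ih =>
      rw [Function.iterate_succ', ← Finset.image_image]
      intro h
      obtain ⟨v, hv, hvw⟩ := hLT _ h
      exact ih (φ.injective (hvw.trans hw.symm) ▸ hv)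
  have hsub (n : ℕ) : T.image (fun x => L x * x₀)^[n] ⊆ Y := by
    rw [← Finset.inter_eq_left]
    refine Finset.eq_of_subset_of_card_le Finset.inter_subset_left ?_
    exact Finset.card_image_le.trans (not_lt.1 (hmin _ (hinter _ (hiter n))))
  refine ⟨T, fun x hx y hy => ?_, hT⟩
  obtain ⟨z, hz⟩ : ∃ z, exponents z = x / y := ⟨_, exponents_normalWord _⟩
  have hdiff (n : ℕ) : exponents ((φ ^ n) z) =
      (fun x => L x * x₀)^[n] x / (fun x => L x * x₀)^[n] y := by
    induction n with
    | zero => simpa using hz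
    | succ n ih =>
      rw [pow_succ', MulAut.mul_apply, ← hL, ih, Function.iterate_succ_apply',
        Function.iterate_succ_apply', map_div, mul_div_mul_right_eq_div]
  refine div_eq_one.1 (hz ▸ exponents_eq_one_of_not_injective hφ fun hinj => ?_)
  have hrange : (Set.range fun n : ℕ => exponents ((φ ^ n) z)) ⊆ ↑(Y / Y) := by
    rintro _ ⟨n, rfl⟩
    simp only [hdiff]
    exact Finset.div_mem_div (hsub n (Finset.mem_image_of_mem _ hx))
      (hsub n (Finset.mem_image_of_mem _ hy))
  exact Set.infinite_range_of_injective hinj ((Finset.finite_toSet _).subset hrange)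

theorem commute_of_exponents_aperiodic {φ : MulAut F}
    (hφ : ∀ n, 0 < n → ∀ w, exponents ((φ ^ n) w) = exponents w → exponents w = 1) {u v : F}
    (hu : φ u = u) (hv : φ v = v) : Commute u v := by
  have hker (x : F) (hx : φ x = x) : x ∈ exponents.ker :=
    hφ 1 one_pos x (by rw [pow_one, hx])
  by_contra huv
  obtain ⟨T, hT, hmem⟩ := exists_subsingleton_notMem_conjugatesOutside hφ
    (w := ⁅(⟨u, hker u hu⟩ : exponents.ker), ⟨v, hker v hv⟩⁆)
    (by simp [commutatorElement_def, hu, hv])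
    (fun h => huv (commutatorElement_eq_one_iff_commute.1 h))
  refine hmem ((mem_conjugatesOutside_iff _).2 ?_)
  rw [map_commutatorElement, map_commutatorElement, commutatorElement_eq_one_iff_commute]
  exact commute_killOutside hT _ _

end CommutatorSubgroup

section NormalForm

/-- The transvections `σ` and `τ`, indexed by the booleans. -/
def transvection : Bool → MulAut F
  | true => σ
  | false => τ

/-- The outer class of a transvection. -/
def outLetter (b : Bool) : OutF := toOut (transvection b)

/-- The outer class of the positive chain spelled by a list of booleans. -/
def outChain (l : List Bool) : OutF := (l.map outLetter).prod

theorem outChain_nil : outChain [] = 1 := rfl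

theorem outChain_cons (b : Bool) (l : List Bool) :
    outChain (b :: l) = outLetter b * outChain l := List.prod_cons

theorem outChain_append (l m : List Bool) : outChain (l ++ m) = outChain l * outChain m := by
  rw [outChain, List.map_append, List.prod_append]
  rfl

theorem outChain_singleton (b : Bool) : outChain [b] = outLetter b := List.prod_singleton

theorem semiconjBy_πₒ (b : Bool) : SemiconjBy πₒ (outLetter b) (outLetter !b)⁻¹ := by
  cases b
  exacts [πₒ_mul_τₒ, πₒ_mul_σₒ]

theorem semiconjBy_εₒ (b : Bool) : SemiconjBy εₒ (outLetter b) (outLetter b)⁻¹ := by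
  cases b
  exacts [εₒ_mul_τₒ, εₒ_mul_σₒ]

theorem semiconjBy_πₒ_mul_εₒ (b : Bool) : SemiconjBy (πₒ * εₒ) (outLetter b) (outLetter !b) := by
  simpa using (semiconjBy_πₒ b).inv_right.mul_left (semiconjBy_εₒ b)

theorem commute_πₒ_mul_πₒ (b : Bool) : Commute (πₒ * πₒ) (outLetter b) := by
  simpa [Commute] using (semiconjBy_πₒ !b).inv_right.mul_left (semiconjBy_πₒ b)

theorem semiconjBy_outChain {d : OutF} {w : Bool → Bool}
    (h : ∀ b, SemiconjBy d (outLetter b) (outLetter (w b))) (l : List Bool) :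
    SemiconjBy d (outChain l) (outChain (l.map w)) := by
  induction l with
  | nil => exact SemiconjBy.one_right d
  | cons b l ih =>
    rw [List.map_cons, outChain_cons, outChain_cons]
    exact (h b).mul_right ih

theorem outLetter_mul_inv (b : Bool) : outLetter b * (outLetter !b)⁻¹ = outLetter (!b) * πₒ ∨
    outLetter b * (outLetter !b)⁻¹ = outLetter (!b) * πₒ⁻¹ := by
  cases b
  · exact Or.inr (mul_inv_eq_of_eq_mul τₒ_eq)
  · exact Or.inl (mul_inv_eq_of_eq_mul σₒ_eq)

/-- The dihedral group of outer classes of signed permutations of the generators. -/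
def dihedral : Subgroup OutF := Subgroup.closure {πₒ, εₒ}

theorem πₒ_mem_dihedral : πₒ ∈ dihedral := Subgroup.subset_closure (by simp)

theorem εₒ_mem_dihedral : εₒ ∈ dihedral := Subgroup.subset_closure (by simp)

theorem mem_dihedral_cases {d : OutF} (hd : d ∈ dihedral) :
    ∃ z : OutF, (z = 1 ∨ z = πₒ * πₒ) ∧
      (d = z ∨ d = z * πₒ ∨ d = z * εₒ ∨ d = z * (πₒ * εₒ)) := by
  have hπ : πₒ⁻¹ = πₒ * πₒ * πₒ := inv_eq_of_mul_eq_one_left (by rw [mul_assoc, πₒ_pow_four])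
  have hε : εₒ⁻¹ = εₒ := inv_eq_of_mul_eq_one_left εₒ_mul_εₒ
  have hεπ : εₒ * πₒ = πₒ * πₒ * (πₒ * εₒ) := by rw [εₒ_mul_πₒ, hπ, mul_assoc]
  have hmul {d x : OutF} (hx : x = πₒ ∨ x = εₒ) (h : ∃ z : OutF, (z = 1 ∨ z = πₒ * πₒ) ∧
      (d = z ∨ d = z * πₒ ∨ d = z * εₒ ∨ d = z * (πₒ * εₒ))) : ∃ z : OutF,
      (z = 1 ∨ z = πₒ * πₒ) ∧
      (d * x = z ∨ d * x = z * πₒ ∨ d * x = z * εₒ ∨ d * x = z * (πₒ * εₒ)) := by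
    obtain ⟨z, hz, hd⟩ := h
    have hzπ : πₒ * πₒ * z = 1 ∨ πₒ * πₒ * z = πₒ * πₒ := by
      rcases hz with rfl | rfl
      exacts [Or.inr (mul_one _), Or.inl πₒ_pow_four]
    have hcomm : z * (πₒ * πₒ) = πₒ * πₒ * z := by
      rcases hz with rfl | rfl
      exacts [(Commute.one_left _).eq, rfl]
    rcases hx with rfl | rfl <;> rcases hd with rfl | rfl | rfl | rfl
    · exact ⟨d, hz, by simp⟩
    · exact ⟨πₒ * πₒ * z, hzπ, Or.inl (by rw [mul_assoc, hcomm])⟩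
    · refine ⟨πₒ * πₒ * z, hzπ, Or.inr (Or.inr (Or.inr ?_))⟩
      rw [mul_assoc, hεπ, ← mul_assoc, hcomm]
    · exact ⟨z, hz, by simp [mul_assoc, εₒ_mul_πₒ]⟩
    · exact ⟨d, hz, by simp⟩
    · exact ⟨z, hz, by simp [mul_assoc]⟩
    · exact ⟨z, hz, by simp [mul_assoc, εₒ_mul_εₒ]⟩
    · exact ⟨z, hz, by simp [mul_assoc, εₒ_mul_εₒ]⟩
  induction hd using Subgroup.closure_induction_right with
  | one => exact ⟨1, by simp⟩
  | mul_right d _ x hx ih => exact hmul hx ih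
  | mul_inv_cancel d _ x hx ih =>
    rcases hx with rfl | rfl
    · rw [hπ, ← mul_assoc, ← mul_assoc]
      exact hmul (Or.inl rfl) (hmul (Or.inl rfl) (hmul (Or.inl rfl) ih))
    · rw [hε]
      exact hmul (Or.inr rfl) ih

theorem commute_outLetter {z : OutF} (hz : z = 1 ∨ z = πₒ * πₒ) (b : Bool) :
    Commute z (outLetter b) := by
  rcases hz with rfl | rfl
  exacts [Commute.one_left _, commute_πₒ_mul_πₒ b]

theorem commute_πₒ_mul_εₒ {z : OutF} (hz : z = 1 ∨ z = πₒ * πₒ) : Commute (πₒ * εₒ) z := by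
  rcases hz with rfl | rfl
  · exact Commute.one_right _
  · refine (Commute.mul_right rfl rfl : Commute πₒ (πₒ * πₒ)).mul_left ?_
    rw [Commute, SemiconjBy, ← mul_assoc, εₒ_mul_πₒ, mul_assoc, εₒ_mul_πₒ, ← mul_assoc,
      ← mul_inv_rev, inv_eq_of_mul_eq_one_left πₒ_pow_four]

theorem semiconjBy_mul_πₒ {z : OutF} (hz : z = 1 ∨ z = πₒ * πₒ) (b : Bool) :
    SemiconjBy (z * πₒ) (outLetter b) (outLetter !b)⁻¹ :=
  (commute_outLetter hz !b).semiconjBy.inv_right.mul_left (semiconjBy_πₒ b)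

theorem semiconjBy_mul_εₒ {z : OutF} (hz : z = 1 ∨ z = πₒ * πₒ) (b : Bool) :
    SemiconjBy (z * εₒ) (outLetter b) (outLetter b)⁻¹ :=
  (commute_outLetter hz b).semiconjBy.inv_right.mul_left (semiconjBy_εₒ b)

theorem semiconjBy_mul_πₒ_mul_εₒ {z : OutF} (hz : z = 1 ∨ z = πₒ * πₒ) (b : Bool) :
    SemiconjBy (z * (πₒ * εₒ)) (outLetter b) (outLetter !b) :=
  (commute_outLetter hz !b).semiconjBy.mul_left (semiconjBy_πₒ_mul_εₒ b)

theorem exists_semiconjBy_of_mem_dihedral {d : OutF} (hd : d ∈ dihedral) :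
    ∃ w : Bool → Bool, (∀ b, SemiconjBy d (outLetter b) (outLetter (w b))) ∨
      ∀ b, SemiconjBy d (outLetter b) (outLetter (w b))⁻¹ := by
  obtain ⟨z, hz, rfl | rfl | rfl | rfl⟩ := mem_dihedral_cases hd
  · exact ⟨id, Or.inl fun b => commute_outLetter hz b⟩
  · exact ⟨not, Or.inr (semiconjBy_mul_πₒ hz)⟩
  · exact ⟨id, Or.inr (semiconjBy_mul_εₒ hz)⟩
  · exact ⟨not, Or.inl (semiconjBy_mul_πₒ_mul_εₒ hz)⟩

theorem exists_outChain_mul_inv (l : List Bool) (b : Bool) : ∃ d ∈ dihedral, ∃ l',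
    ∃ e ∈ dihedral, outChain l * (outLetter b)⁻¹ = d * outChain l' * e := by
  rcases l.eq_nil_or_concat' with rfl | ⟨m, c, rfl⟩
  · refine ⟨εₒ, εₒ_mem_dihedral, [b], εₒ⁻¹, inv_mem εₒ_mem_dihedral, ?_⟩
    rw [outChain_nil, one_mul, outChain_singleton, (semiconjBy_εₒ b).eq, mul_inv_cancel_right]
  rw [outChain_append, outChain_singleton, mul_assoc]
  rcases Bool.eq_or_eq_not b c with rfl | rfl
  · exact ⟨1, one_mem _, m, 1, one_mem _, by simp⟩
  · rcases outLetter_mul_inv c with h | h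
    · exact ⟨1, one_mem _, m ++ [!c], πₒ, πₒ_mem_dihedral, by
        rw [h, outChain_append, outChain_singleton, one_mul, mul_assoc]⟩
    · exact ⟨1, one_mem _, m ++ [!c], πₒ⁻¹, inv_mem πₒ_mem_dihedral, by
        rw [h, outChain_append, outChain_singleton, one_mul, mul_assoc]⟩

theorem exists_mul_outChain_mul (q : OutF) :
    ∃ d ∈ dihedral, ∃ l, ∃ e ∈ dihedral, q = d * outChain l * e := by
  let P (q : OutF) := ∃ d ∈ dihedral, ∃ l, ∃ e ∈ dihedral, q = d * outChain l * e
  have hdih {q e : OutF} (he : e ∈ dihedral) : P q → P (q * e) := by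
    rintro ⟨d, hd, l, e', he', rfl⟩
    exact ⟨d, hd, l, e' * e, mul_mem he' he, mul_assoc _ _ _⟩
  have hletter {d e : OutF} (hd : d ∈ dihedral) (he : e ∈ dihedral) (l : List Bool) (b : Bool) :
      P (d * outChain l * outLetter b * e) ∧ P (d * outChain l * (outLetter b)⁻¹ * e) := by
    refine ⟨⟨d, hd, l ++ [b], e, he, by rw [outChain_append, outChain_singleton, mul_assoc d]⟩, ?_⟩
    obtain ⟨d', hd', l', e', he', h⟩ := exists_outChain_mul_inv l b
    exact ⟨d * d', mul_mem hd hd', l', e' * e, mul_mem he' he, by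
      rw [mul_assoc d, h]; simp only [mul_assoc]⟩
  have hmul {q : OutF} (b : Bool) : P q → P (q * outLetter b) ∧ P (q * (outLetter b)⁻¹) := by
    rintro ⟨d, hd, l, e, he, rfl⟩
    obtain ⟨w, hw | hw⟩ := exists_semiconjBy_of_mem_dihedral he
    · rw [mul_assoc _ e, mul_assoc _ e, (hw b).eq, (hw b).inv_right.eq, ← mul_assoc, ← mul_assoc]
      exact hletter hd he l (w b)
    · rw [mul_assoc _ e, mul_assoc _ e, (hw b).eq, (hw b).inv_right.eq, inv_inv, ← mul_assoc,
        ← mul_assoc]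
      exact (hletter hd he l (w b)).symm
  have hq : q ∈ Subgroup.closure {σₒ, τₒ, πₒ, εₒ} :=
    closure_outer_classes ▸ Subgroup.mem_top q
  induction hq using Subgroup.closure_induction_right with
  | one => exact ⟨1, one_mem _, [], 1, one_mem _, by simp [outChain_nil]⟩
  | mul_right q _ x hx ih =>
    rcases hx with rfl | rfl | rfl | rfl
    exacts [(hmul true ih).1, (hmul false ih).1, hdih πₒ_mem_dihedral ih, hdih εₒ_mem_dihedral ih]
  | mul_inv_cancel q _ x hx ih =>
    rcases hx with rfl | rfl | rfl | rfl
    exacts [(hmul true ih).2, (hmul false ih).2, hdih (inv_mem πₒ_mem_dihedral) ih,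
      hdih (inv_mem εₒ_mem_dihedral) ih]

/-- The normal forms for outer classes up to conjugacy: classes of finite order, powers of `σ` up
to sign, and classes whose square is a chain containing both `σ` and `τ`. -/
def IsRepresentative (r : OutF) : Prop :=
  r ∈ dihedral ∨ r = πₒ * σₒ ∨ r = πₒ⁻¹ * σₒ ∨
    (∃ n : ℕ, n ≠ 0 ∧ (r = σₒ ^ n ∨ r = πₒ * πₒ * σₒ ^ n)) ∨
    ∃ l, true ∈ l ∧ false ∈ l ∧ r * r = outChain l

theorem isConj_mul_comm {G : Type*} [Group G] (x y : G) : IsConj (x * y) (y * x) :=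
  isConj_iff.2 ⟨y, by group⟩

theorem outChain_replicate (n : ℕ) (b : Bool) :
    outChain (List.replicate n b) = outLetter b ^ n := by
  rw [outChain, List.map_replicate, List.prod_replicate]

theorem exists_eq_replicate_of_not_mem {l : List Bool} (h : ¬(true ∈ l ∧ false ∈ l)) :
    ∃ b, l = List.replicate l.length b := by
  by_cases ht : true ∈ l
  · exact ⟨true, List.eq_replicate_iff.2 ⟨rfl, fun c hc => by
      by_contra hne
      exact h ⟨ht, Bool.eq_false_of_not_eq_true hne ▸ hc⟩⟩⟩
  · exact ⟨false, List.eq_replicate_iff.2 ⟨rfl, fun c hc =>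
      Bool.eq_false_of_not_eq_true fun hct => ht (hct ▸ hc)⟩⟩

theorem mul_outChain_mul_self {d : OutF} {w : Bool → Bool} (hd : d * d = 1)
    (hw : ∀ b, SemiconjBy d (outLetter b) (outLetter (w b))) (l : List Bool) :
    d * outChain l * (d * outChain l) = outChain (l.map w ++ l) := by
  rw [outChain_append]
  calc d * outChain l * (d * outChain l) = outChain (l.map w) * d * (d * outChain l) := by
        rw [(semiconjBy_outChain hw l).eq]
    _ = outChain (l.map w) * outChain l := by rw [mul_assoc, ← mul_assoc d, hd, one_mul]

theorem mul_self_eq_one_of_central {z : OutF} (hz : z = 1 ∨ z = πₒ * πₒ) : z * z = 1 := by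
  rcases hz with rfl | rfl
  exacts [mul_one 1, πₒ_pow_four]

theorem exists_representative_central_mul {z : OutF} (hz : z = 1 ∨ z = πₒ * πₒ) {l : List Bool}
    (hl : l ≠ []) : ∃ r, IsConj (z * outChain l) r ∧ IsRepresentative r := by
  by_cases hboth : true ∈ l ∧ false ∈ l
  · refine ⟨_, IsConj.refl _, ?_⟩
    have h := mul_outChain_mul_self (w := id) (mul_self_eq_one_of_central hz)
      (commute_outLetter hz) l
    rw [List.map_id] at h
    exact Or.inr (Or.inr (Or.inr (Or.inr ⟨l ++ l, by simp [hboth], by simp [hboth], h⟩)))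
  obtain ⟨b, hb⟩ := exists_eq_replicate_of_not_mem hboth
  have hconj : IsConj (z * outChain l) (z * σₒ ^ l.length) := by
    rw [hb, outChain_replicate, List.length_replicate]
    cases b
    · have hσ : SemiconjBy (πₒ * εₒ) (z * outLetter false ^ l.length) (z * σₒ ^ l.length) :=
        (commute_πₒ_mul_εₒ hz).semiconjBy.mul_right ((semiconjBy_πₒ_mul_εₒ false).pow_right _)
      exact isConj_iff.2 ⟨πₒ * εₒ, by rw [hσ.eq, mul_inv_cancel_right]⟩
    · exact IsConj.refl _
  refine ⟨_, hconj, Or.inr (Or.inr (Or.inr (Or.inl ⟨l.length, ?_, ?_⟩)))⟩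
  · simpa using hl
  rcases hz with rfl | rfl
  exacts [Or.inl (one_mul _), Or.inr rfl]

theorem exists_representative_swap_mul {z : OutF} (hz : z = 1 ∨ z = πₒ * πₒ) {l : List Bool}
    (hl : l ≠ []) : ∃ r, IsConj (z * (πₒ * εₒ) * outChain l) r ∧ IsRepresentative r := by
  have hsq : z * (πₒ * εₒ) * (z * (πₒ * εₒ)) = 1 := by
    have hπε : πₒ * εₒ * (πₒ * εₒ) = 1 := by
      rw [mul_assoc, ← mul_assoc εₒ, εₒ_mul_πₒ, mul_assoc, εₒ_mul_εₒ, mul_one, mul_inv_cancel]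
    rw [mul_assoc, ← mul_assoc _ z, (commute_πₒ_mul_εₒ hz).eq, mul_assoc, hπε, mul_one,
      mul_self_eq_one_of_central hz]
  have h := mul_outChain_mul_self (w := not) hsq
    (semiconjBy_mul_πₒ_mul_εₒ hz) l
  obtain ⟨b, m, rfl⟩ := List.exists_cons_of_ne_nil hl
  exact ⟨_, IsConj.refl _, Or.inr (Or.inr (Or.inr (Or.inr
    ⟨_, by cases b <;> simp, by cases b <;> simp, h⟩)))⟩

theorem exists_isConj_mul_outChain_shorter {d : OutF} (hd : d ∈ dihedral) {w : Bool → Bool}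
    (hw : ∀ b, SemiconjBy d (outLetter b) (outLetter (w b))⁻¹) (b : Bool) (m : List Bool)
    (c : Bool) : ∃ d' ∈ dihedral, ∃ l, l.length < m.length + 2 ∧
      IsConj (d * outChain (b :: (m ++ [c]))) (d' * outChain l) := by
  have hconj : IsConj (d * outChain (b :: (m ++ [c])))
      (d * outChain m * (outLetter c * (outLetter (w b))⁻¹)) := by
    rw [outChain_cons, ← mul_assoc, (hw b).eq, mul_assoc]
    convert isConj_mul_comm _ _ using 1
    rw [outChain_append, outChain_singleton]
    simp only [mul_assoc]
  rcases Bool.eq_or_eq_not (w b) c with h | h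
  · refine ⟨d, hd, m, by omega, ?_⟩
    rwa [h, mul_inv_cancel, mul_one] at hconj
  · obtain ⟨e, he, hce⟩ : ∃ e ∈ dihedral,
        outLetter c * (outLetter !c)⁻¹ = outLetter (!c) * e := by
      rcases outLetter_mul_inv c with h | h
      exacts [⟨_, πₒ_mem_dihedral, h⟩, ⟨_, inv_mem πₒ_mem_dihedral, h⟩]
    refine ⟨e * d, mul_mem he hd, m ++ [!c], by simp, ?_⟩
    rw [h, hce, ← mul_assoc] at hconj
    refine hconj.trans ?_
    convert isConj_mul_comm _ _ using 1
    rw [outChain_append, outChain_singleton]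
    simp only [mul_assoc]

theorem exists_representative_πₒ_mul_outLetter {z : OutF} (hz : z = 1 ∨ z = πₒ * πₒ) (b : Bool) :
    ∃ r, IsConj (z * πₒ * outLetter b) r ∧ IsRepresentative r := by
  have hrep {y : OutF} (hy : y = πₒ ∨ y = πₒ⁻¹) : IsRepresentative (y * σₒ) := by
    rcases hy with rfl | rfl
    exacts [Or.inr (Or.inl rfl), Or.inr (Or.inr (Or.inl rfl))]
  have hinv : πₒ * πₒ * πₒ = πₒ⁻¹ := eq_inv_of_mul_eq_one_left (by rw [mul_assoc, πₒ_pow_four])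
  cases b
  · refine ⟨z * πₒ⁻¹ * σₒ, isConj_iff.2 ⟨πₒ * εₒ, mul_inv_eq_of_eq_mul ?_⟩, hrep ?_⟩
    · rw [← mul_assoc, ← mul_assoc, (commute_πₒ_mul_εₒ hz).eq, mul_assoc z, mul_assoc πₒ, εₒ_mul_πₒ]
      have h := (semiconjBy_πₒ_mul_εₒ false).eq
      rw [mul_assoc (z * πₒ⁻¹), show σₒ * (πₒ * εₒ) = πₒ * εₒ * outLetter false from h.symm]
      simp [mul_assoc]
    · rcases hz with rfl | rfl
      exacts [Or.inr (one_mul _), Or.inl (mul_inv_cancel_right _ _)]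
  · refine ⟨_, IsConj.refl _, hrep ?_⟩
    rcases hz with rfl | rfl
    exacts [Or.inl (one_mul _), Or.inr hinv]

theorem exists_representative_εₒ_mul_outLetter {z : OutF} (hz : z = 1 ∨ z = πₒ * πₒ) (b : Bool) :
    ∃ r, IsConj (z * εₒ * outLetter b) r ∧ IsRepresentative r := by
  have hz' : z ∈ dihedral := by
    rcases hz with rfl | rfl
    exacts [one_mem _, mul_mem πₒ_mem_dihedral πₒ_mem_dihedral]
  obtain ⟨e, he, hbe⟩ : ∃ e ∈ dihedral, outLetter b * (outLetter !b)⁻¹ = outLetter (!b) * e := by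
    rcases outLetter_mul_inv b with h | h
    exacts [⟨_, πₒ_mem_dihedral, h⟩, ⟨_, inv_mem πₒ_mem_dihedral, h⟩]
  refine ⟨z * εₒ * e, isConj_iff.2 ⟨outLetter !b, ?_⟩,
    Or.inl (mul_mem (mul_mem hz' εₒ_mem_dihedral) he)⟩
  rw [mul_assoc, mul_assoc, hbe, ← mul_assoc (z * εₒ), (semiconjBy_mul_εₒ hz !b).eq]
  group

theorem exists_representative_mul_outChain (n : ℕ) {d : OutF} (hd : d ∈ dihedral) (l : List Bool)
    (hl : l.length = n) : ∃ r, IsConj (d * outChain l) r ∧ IsRepresentative r := by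
  induction n using Nat.strong_induction_on generalizing d l with
  | _ n ih =>
  rcases l.eq_nil_or_concat' with rfl | ⟨m, c, rfl⟩
  · exact ⟨d, by rw [outChain_nil, mul_one], Or.inl hd⟩
  have hshorten {w : Bool → Bool} (hw : ∀ b, SemiconjBy d (outLetter b) (outLetter (w b))⁻¹)
      (hm : m ≠ []) : ∃ r, IsConj (d * outChain (m ++ [c])) r ∧ IsRepresentative r := by
    obtain ⟨b, m, rfl⟩ := List.exists_cons_of_ne_nil hm
    obtain ⟨d', hd', l', hl', hconj⟩ := exists_isConj_mul_outChain_shorter hd hw b m c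
    have hlt : l'.length < n := by
      simp only [List.length_append, List.length_cons, List.length_nil] at hl
      omega
    obtain ⟨r, hr, hrep⟩ := ih l'.length hlt hd' l' rfl
    exact ⟨r, hconj.trans hr, hrep⟩
  obtain ⟨z, hz, rfl | rfl | rfl | rfl⟩ := mem_dihedral_cases hd
  · exact exists_representative_central_mul hz (by simp)
  · rcases eq_or_ne m [] with rfl | hm
    · exact exists_representative_πₒ_mul_outLetter hz c
    · exact hshorten (semiconjBy_mul_πₒ hz) hm
  · rcases eq_or_ne m [] with rfl | hm
    · exact exists_representative_εₒ_mul_outLetter hz c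
    · exact hshorten (w := id) (semiconjBy_mul_εₒ hz) hm
  · exact exists_representative_swap_mul hz (by simp)

theorem exists_isConj_isRepresentative (q : OutF) : ∃ r, IsConj q r ∧ IsRepresentative r := by
  obtain ⟨d, hd, l, e, he, rfl⟩ := exists_mul_outChain_mul q
  obtain ⟨r, hr, hrep⟩ := exists_representative_mul_outChain _ (mul_mem he hd) l rfl
  refine ⟨r, (isConj_mul_comm _ _).trans ?_, hrep⟩
  rwa [← mul_assoc]

end NormalForm

section Hyperbolic

/-- The positive chain spelled by a list of booleans. -/
def autChain (l : List Bool) : MulAut F := (l.map transvection).prod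

theorem autChain_cons (b : Bool) (l : List Bool) :
    autChain (b :: l) = transvection b * autChain l := List.prod_cons

theorem toOut_autChain (l : List Bool) : toOut (autChain l) = outChain l := by
  rw [autChain, map_list_prod, List.map_map]
  rfl

theorem outChain_pow (l : List Bool) (n : ℕ) :
    outChain l ^ n = outChain (List.replicate n l).flatten := by
  induction n with
  | zero => rw [pow_zero, List.replicate_zero, List.flatten_nil, outChain_nil]
  | succ n ih => rw [pow_succ', ih, List.replicate_succ, List.flatten_cons, outChain_append]

theorem exponents_conj_mul (g : F) (φ : MulAut F) (w : F) :
    exponents ((MulAut.conj g * φ) w) = exponents (φ w) := by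
  simp [mul_comm (exponents g)]

theorem exponents_σ (w : F) : exponents (σ w) = Multiplicative.ofAdd
    ((exponents w).toAdd.1, (exponents w).toAdd.1 + (exponents w).toAdd.2) := by
  let f : ExpVec →* ExpVec := AddMonoidHom.toMultiplicative
    ((AddMonoidHom.fst ℤ ℤ).prod (AddMonoidHom.fst ℤ ℤ + AddMonoidHom.snd ℤ ℤ))
  have h : exponents.comp σ.toMonoidHom = f.comp exponents :=
    hom_eq_of_gens (by simp [exponents_ga, exponents_gb, f, ← ofAdd_add])
      (by simp [exponents_gb, f])
  exact DFunLike.congr_fun h w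

theorem exponents_τ (w : F) : exponents (τ w) = Multiplicative.ofAdd
    ((exponents w).toAdd.1 + (exponents w).toAdd.2, (exponents w).toAdd.2) := by
  let f : ExpVec →* ExpVec := AddMonoidHom.toMultiplicative
    ((AddMonoidHom.fst ℤ ℤ + AddMonoidHom.snd ℤ ℤ).prod (AddMonoidHom.snd ℤ ℤ))
  have h : exponents.comp τ.toMonoidHom = f.comp exponents :=
    hom_eq_of_gens (by simp [exponents_ga, f])
      (by simp [exponents_ga, exponents_gb, f, ← ofAdd_add])
  exact DFunLike.congr_fun h w

theorem exists_exponents_autChain (l : List Bool) : ∃ p q r s : ℤ, 1 ≤ p ∧ 0 ≤ q ∧ 0 ≤ r ∧ 1 ≤ s ∧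
    p * s - q * r = 1 ∧ (false ∈ l → 1 ≤ q) ∧ (true ∈ l → 1 ≤ r) ∧
    l.length + 2 ≤ p + q + (r + s) ∧ ∀ w, exponents (autChain l w) = Multiplicative.ofAdd
      (p * (exponents w).toAdd.1 + q * (exponents w).toAdd.2,
        r * (exponents w).toAdd.1 + s * (exponents w).toAdd.2) := by
  induction l with
  | nil => exact ⟨1, 0, 0, 1, by simp [autChain]⟩
  | cons b l ih =>
    obtain ⟨p, q, r, s, hp, hq, hr, hs, hdet, hfalse, htrue, hlen, hexp⟩ := ih
    cases b
    · refine ⟨p + r, q + s, r, s, by omega, by omega, hr, hs, by linarith, fun _ => by omega,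
        fun h => htrue (by simpa using h), by push_cast [List.length_cons]; omega, fun w => ?_⟩
      rw [autChain_cons, MulAut.mul_apply, transvection, exponents_τ, hexp]
      simp only [toAdd_ofAdd]
      congr 2
      ring
    · refine ⟨p, q, p + r, q + s, hp, hq, by omega, by omega, by linarith,
        fun h => hfalse (by simpa using h), fun _ => by omega,
        by push_cast [List.length_cons]; omega, fun w => ?_⟩
      rw [autChain_cons, MulAut.mul_apply, transvection, exponents_σ, hexp]
      simp only [toAdd_ofAdd]
      congr 2
      ring

theorem exponents_eq_one_of_toOut_eq_outChain {l : List Bool} (ht : true ∈ l) (hf : false ∈ l)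
    {φ : MulAut F} (hφ : toOut φ = outChain l) {w : F} (hw : exponents (φ w) = exponents w) :
    exponents w = 1 := by
  rw [← toOut_autChain] at hφ
  obtain ⟨g, rfl⟩ := toOut_eq_iff.1 hφ
  obtain ⟨p, q, r, s, hp, -, -, hs, hdet, hq, hr, -, hexp⟩ := exists_exponents_autChain l
  specialize hq hf
  specialize hr ht
  rw [exponents_conj_mul, hexp] at hw
  obtain ⟨hx, hy⟩ := Prod.ext_iff.1 hw
  change p * (exponents w).toAdd.1 + q * (exponents w).toAdd.2 = (exponents w).toAdd.1 at hx
  change r * (exponents w).toAdd.1 + s * (exponents w).toAdd.2 = (exponents w).toAdd.2 at hy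
  have htrace : 2 - (p + s) ≠ 0 := by nlinarith
  have hx0 : (2 - (p + s)) * (exponents w).toAdd.1 = 0 := by
    linear_combination (s - 1) * hx - q * hy - (exponents w).toAdd.1 * hdet
  have hy0 : (2 - (p + s)) * (exponents w).toAdd.2 = 0 := by
    linear_combination (p - 1) * hy - r * hx - (exponents w).toAdd.2 * hdet
  exact Prod.ext ((mul_eq_zero_iff_left htrace).1 hx0) ((mul_eq_zero_iff_left htrace).1 hy0)

theorem commute_of_toOut_mul_self_eq_outChain {l : List Bool} (ht : true ∈ l) (hf : false ∈ l)
    {φ : MulAut F} (hφ : toOut φ * toOut φ = outChain l) {u v : F} (hu : φ u = u) (hv : φ v = v) :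
    Commute u v := by
  refine commute_of_exponents_aperiodic (φ := φ * φ) (fun n hn w hw => ?_) (by simp [hu])
    (by simp [hv])
  refine exponents_eq_one_of_toOut_eq_outChain (l := (List.replicate n l).flatten) ?_ ?_ ?_ hw
  · exact List.mem_flatten.2 ⟨l, by simp [hn.ne'], ht⟩
  · exact List.mem_flatten.2 ⟨l, by simp [hn.ne'], hf⟩
  · rw [map_pow, map_mul, hφ, outChain_pow]

end Hyperbolic

section FiniteOrder

theorem conj_apply_eq_of_apply_eq {G : Type*} [Group G] {φ ψ α : MulAut G}
    (h : α⁻¹ * φ * α = ψ) {u : G} (hu : φ u = u) : ψ (α⁻¹ u) = α⁻¹ u := by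
  rw [← h, MulAut.mul_apply, MulAut.mul_apply, MulAut.apply_inv_self, hu]

theorem TreeLength.exists_conj_mul {G : Type*} [Group G] (T : TreeLength G) {ω : MulAut G}
    (hω : ∀ w, T.norm (ω w) = T.norm w) {g u v : G} (hu : (MulAut.conj g * ω) u = u)
    (hv : (MulAut.conj g * ω) v = v) (huv : ¬Commute u v) : ∃ h t, T.norm t = 0 ∧
      (MulAut.conj h)⁻¹ * (MulAut.conj g * ω) * MulAut.conj h = MulAut.conj t * ω := by
  have hΦ (p q : G) : T.dist (g * ω p) (g * ω q) = T.dist p q := by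
    rw [T.dist_mul_left, TreeLength.dist, ← map_inv, ← map_mul, hω, TreeLength.dist]
  have hequiv {u : G} (hu : (MulAut.conj g * ω) u = u) (p : G) :
      g * ω (u * p) = u * (g * ω p) := by
    rw [MulAut.mul_apply, MulAut.conj_apply, mul_inv_eq_iff_eq_mul] at hu
    rw [map_mul, ← mul_assoc, hu, mul_assoc]
  obtain ⟨h, hh⟩ := exists_dist_apply_eq_zero hΦ (hequiv hu) (hequiv hv) huv
  refine ⟨h, h⁻¹ * (g * ω h), hh, ?_⟩
  rw [mul_assoc, mul_assoc, aut_mul_conj, map_mul, map_mul, map_inv]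
  simp only [mul_assoc]

section WordIsometry

variable {α : Type*} [DecidableEq α] {ω : MulAut (FreeGroup α)}
  (hω : ∀ w, (ω w).norm = w.norm)

include hω

theorem apply_mk_eq_of_apply_mk_append_eq {l m : List (α × Bool)}
    (hred : FreeGroup.IsReduced (l ++ m)) (h : ω (.mk (l ++ m)) = .mk (l ++ m)) :
    ω (.mk l) = .mk l := by
  have hnorm {l : List (α × Bool)} (hl : FreeGroup.IsReduced l) :
      (FreeGroup.mk l).norm = l.length := by
    rw [FreeGroup.norm, FreeGroup.toWord_mk, hl.reduce_eq]
  have hl := hnorm (hred.infix (List.prefix_append l m).isInfix)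
  have hm := hnorm (hred.infix (List.suffix_append l m).isInfix)
  have hlm := hnorm hred
  rw [List.length_append] at hlm
  rw [← FreeGroup.mul_mk] at h hlm
  have hm' : ((ω (.mk l))⁻¹ * (.mk l * .mk m)).norm = m.length := by
    rw [← h, ← map_inv, ← map_mul, inv_mul_cancel_left, hω, hm]
  have := (TreeLength.word α).dist_eq_zero_of_mem_segment
    (x := 1) (y := .mk l * .mk m) (p := ω (.mk l)) (q := .mk l)
  simp only [TreeLength.dist, TreeLength.word_norm, inv_one, one_mul, inv_mul_cancel_left, hω, hl,
    hm, hm', hlm, forall_const, FreeGroup.norm_eq_zero] at this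
  exact inv_mul_eq_one.1 this

theorem mem_closure_fixed_generators {w : FreeGroup α} (hw : ω w = w) :
    w ∈ Subgroup.closure {x | ω x = x ∧ ∃ i, x = FreeGroup.of i} := by
  suffices ∀ l : List (α × Bool), FreeGroup.IsReduced l → ω (.mk l) = .mk l →
      .mk l ∈ Subgroup.closure {x | ω x = x ∧ ∃ i, x = FreeGroup.of i} by
    have h := this w.toWord FreeGroup.isReduced_toWord
    rw [FreeGroup.mk_toWord] at h
    exact h hw
  intro l
  induction l using List.reverseRecOn with
  | nil => exact fun _ _ => one_mem _
  | append_singleton l x ih =>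
    intro hred hfix
    have hl := apply_mk_eq_of_apply_mk_append_eq hω hred hfix
    rw [← FreeGroup.mul_mk, map_mul, hl, mul_right_inj] at hfix
    rw [← FreeGroup.mul_mk]
    refine mul_mem (ih (hred.infix (List.prefix_append l [x]).isInfix) hl) ?_
    obtain ⟨i, _ | _⟩ := x
    · have hinv : FreeGroup.mk [(i, false)] = (FreeGroup.of i)⁻¹ := rfl
      rw [hinv, map_inv, inv_inj] at hfix
      exact hinv ▸ inv_mem (Subgroup.subset_closure ⟨hfix, i, rfl⟩)
    · exact Subgroup.subset_closure ⟨hfix, i, rfl⟩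

theorem eq_one_of_forall_apply_of_ne (h : ∀ i, ω (FreeGroup.of i) ≠ FreeGroup.of i)
    {w : FreeGroup α} (hw : ω w = w) : w = 1 := by
  have hmem := mem_closure_fixed_generators hω hw
  have hempty : {x | ω x = x ∧ ∃ i, x = FreeGroup.of i} = ∅ :=
    Set.eq_empty_of_forall_notMem fun x ⟨hx, i, hi⟩ => h i (hi ▸ hx)
  rwa [hempty, Subgroup.closure_empty, Subgroup.mem_bot] at hmem

theorem exists_conj_eq {g u v : FreeGroup α} (hu : (MulAut.conj g * ω) u = u)
    (hv : (MulAut.conj g * ω) v = v) (huv : ¬Commute u v) :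
    ∃ h, (MulAut.conj h)⁻¹ * (MulAut.conj g * ω) * MulAut.conj h = ω := by
  obtain ⟨h, t, ht, hconj⟩ := (TreeLength.word α).exists_conj_mul
    (by simpa only [TreeLength.word_norm] using hω) hu hv huv
  rw [TreeLength.word_norm, FreeGroup.norm_eq_zero] at ht
  exact ⟨h, by rw [hconj, ht, map_one, one_mul]⟩

end WordIsometry

theorem norm_apply_eq {α : Type*} [DecidableEq α] {ω : MulAut (FreeGroup α)}
    (hω : ∀ i, (ω (FreeGroup.of i)).norm ≤ 1) (hω' : ∀ i, (ω⁻¹ (FreeGroup.of i)).norm ≤ 1)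
    (w : FreeGroup α) : (ω w).norm = w.norm := by
  simp only [← weightedNorm_const_one] at hω hω' ⊢
  exact weightedNorm_apply_eq _ hω hω' w

@[simp] theorem norm_ga : ga.norm = 1 := FreeGroup.norm_of _

@[simp] theorem norm_gb : gb.norm = 1 := FreeGroup.norm_of _

theorem norm_apply_eq_of_gens {β : MulAut F} (ha : (β ga).norm ≤ 1) (hb : (β gb).norm ≤ 1)
    (ha' : (β⁻¹ ga).norm ≤ 1) (hb' : (β⁻¹ gb).norm ≤ 1) (w : F) : (β w).norm = w.norm := by
  refine norm_apply_eq (fun i => ?_) (fun i => ?_) w <;> fin_cases i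
  exacts [ha, hb, ha', hb']

theorem norm_pi'_apply (w : F) : (pi' w).norm = w.norm :=
  norm_apply_eq_of_gens (by simp) (by simp) (by simp) (by simp) w

theorem exists_toOut_eq_of_mem_dihedral {d : OutF} (hd : d ∈ dihedral) :
    ∃ β : MulAut F, toOut β = d ∧ ∀ w, (β w).norm = w.norm := by
  induction hd using Subgroup.closure_induction with
  | mem x hx =>
    rcases hx with rfl | rfl
    · exact ⟨pi', rfl, norm_pi'_apply⟩
    · exact ⟨invB, rfl, norm_apply_eq_of_gens (by simp) (by simp) (by simp) (by simp)⟩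
  | one => exact ⟨1, map_one _, fun _ => rfl⟩
  | mul x y _ _ hx hy =>
    obtain ⟨β, rfl, hβ⟩ := hx
    obtain ⟨γ, rfl, hγ⟩ := hy
    exact ⟨β * γ, map_mul _ _ _, fun w => (hβ _).trans (hγ w)⟩
  | inv x _ hx =>
    obtain ⟨β, rfl, hβ⟩ := hx
    exact ⟨β⁻¹, map_inv _ _, fun w => by simpa using (hβ (β⁻¹ w)).symm⟩

theorem eq_one_of_norm_preserving {ω : MulAut F} (hω : ∀ w, (ω w).norm = w.norm) {u v : F}
    (hu : ω u = u) (hv : ω v = v) (huv : ¬Commute u v) : ω = 1 := by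
  have hfix {c d : F} (hgen : ∀ i : Fin 2, FreeGroup.of i = c ∨ FreeGroup.of i = d) : ω d = d := by
    by_contra hd
    have hle : Subgroup.closure {x | ω x = x ∧ ∃ i, x = FreeGroup.of i} ≤ Subgroup.zpowers c := by
      rw [Subgroup.closure_le]
      rintro _ ⟨hi, i, rfl⟩
      rcases hgen i with h | h
      · exact h ▸ Subgroup.mem_zpowers c
      · exact (hd (h ▸ hi)).elim
    exact huv (setLike_mul_comm (hle (mem_closure_fixed_generators hω hu))
      (hle (mem_closure_fixed_generators hω hv)))
  refine aut_eq_of_gens (hfix (c := gb) fun i => ?_) (hfix (c := ga) fun i => ?_)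
  · fin_cases i
    exacts [Or.inr rfl, Or.inl rfl]
  · fin_cases i
    exacts [Or.inl rfl, Or.inr rfl]

theorem eq_one_of_toOut_mem_dihedral {φ : MulAut F} (hφ : toOut φ ∈ dihedral) {u v : F}
    (hu : φ u = u) (hv : φ v = v) (huv : ¬Commute u v) : φ = 1 := by
  obtain ⟨β, hβφ, hβ⟩ := exists_toOut_eq_of_mem_dihedral hφ
  obtain ⟨g, rfl⟩ := toOut_eq_iff.1 hβφ.symm
  obtain ⟨h, hconj⟩ := exists_conj_eq hβ hu hv huv
  have hone := eq_one_of_norm_preserving hβ (conj_apply_eq_of_apply_eq hconj hu)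
    (conj_apply_eq_of_apply_eq hconj hv) fun hcomm =>
      huv (hcomm.of_map ((MulAut.conj h)⁻¹ : MulAut F).injective)
  rw [hone, mul_eq_one_iff_eq_inv, mul_eq_left] at hconj
  rwa [hone]

/-- The embedding of `F` into a free group of rank three that turns an automorphism of outer order
three into a cyclic permutation of the generators. -/
def cyclicEmbedding : F →* FreeGroup (Fin 3) :=
  FreeGroup.lift ![FreeGroup.of 1 * (FreeGroup.of 0)⁻¹, FreeGroup.of 2 * (FreeGroup.of 0)⁻¹]

theorem cyclicEmbedding_ga : cyclicEmbedding ga = FreeGroup.of 1 * (FreeGroup.of 0)⁻¹ := by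
  simp [cyclicEmbedding, ga]

theorem cyclicEmbedding_gb : cyclicEmbedding gb = FreeGroup.of 2 * (FreeGroup.of 0)⁻¹ := by
  simp [cyclicEmbedding, gb]

theorem cyclicEmbedding_injective : Function.Injective cyclicEmbedding := by
  let r : FreeGroup (Fin 3) →* F := FreeGroup.lift ![1, ga, gb]
  have h : r.comp cyclicEmbedding = MonoidHom.id F :=
    hom_eq_of_gens (by simp [cyclicEmbedding_ga, r]) (by simp [cyclicEmbedding_gb, r])
  exact Function.LeftInverse.injective (g := r) (DFunLike.congr_fun h)

theorem cyclicEmbedding_pi'_mul_σ (w : F) : cyclicEmbedding ((pi' * σ) w) =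
    FreeGroup.freeGroupCongr (finRotate 3) (cyclicEmbedding w) := by
  have h : cyclicEmbedding.comp (pi' * σ).toMonoidHom =
      (FreeGroup.freeGroupCongr (finRotate 3)).toMonoidHom.comp cyclicEmbedding :=
    hom_eq_of_gens (by simp [cyclicEmbedding_ga, cyclicEmbedding_gb])
      (by simp [cyclicEmbedding_ga, cyclicEmbedding_gb])
  exact DFunLike.congr_fun h w

theorem norm_freeGroupCongr_finRotate (w : FreeGroup (Fin 3)) :
    (FreeGroup.freeGroupCongr (finRotate 3) w).norm = w.norm :=
  norm_apply_eq (ω := FreeGroup.freeGroupCongr (finRotate 3)) (fun i => by simp)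
    (fun i => by simp [MulAut.inv_apply]) w

theorem eq_one_of_freeGroupCongr_finRotate_apply_eq {w : FreeGroup (Fin 3)}
    (hw : FreeGroup.freeGroupCongr (finRotate 3) w = w) : w = 1 := by
  refine eq_one_of_forall_apply_of_ne norm_freeGroupCongr_finRotate (fun i h => ?_) hw
  rw [FreeGroup.freeGroupCongr_apply, FreeGroup.map.of] at h
  exact absurd (FreeGroup.of_injective h) (by revert i; decide)

theorem commute_of_toOut_eq_πₒ_mul_σₒ {φ : MulAut F} (hφ : toOut φ = πₒ * σₒ) {u v : F}
    (hu : φ u = u) (hv : φ v = v) : Commute u v := by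
  rw [πₒ, σₒ, ← map_mul] at hφ
  obtain ⟨g, rfl⟩ := toOut_eq_iff.1 hφ
  let ρ : MulAut (FreeGroup (Fin 3)) := FreeGroup.freeGroupCongr (finRotate 3)
  have hfix {u : F} (hu : (MulAut.conj g * (pi' * σ)) u = u) :
      (MulAut.conj (cyclicEmbedding g) * ρ) (cyclicEmbedding u) = cyclicEmbedding u := by
    rw [MulAut.mul_apply, ← cyclicEmbedding_pi'_mul_σ]
    simpa using congrArg cyclicEmbedding hu
  refine Commute.of_map cyclicEmbedding_injective (by_contra fun huv => huv ?_)
  obtain ⟨h, hconj⟩ := exists_conj_eq norm_freeGroupCongr_finRotate (hfix hu) (hfix hv) huv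
  have hone := eq_one_of_freeGroupCongr_finRotate_apply_eq
    (conj_apply_eq_of_apply_eq hconj (hfix hu))
  rw [EmbeddingLike.map_eq_one_iff] at hone
  rw [hone]
  exact Commute.one_left _

theorem commute_of_toOut_eq_πₒ_inv_mul_σₒ {φ : MulAut F} (hφ : toOut φ = πₒ⁻¹ * σₒ) {u v : F}
    (hu : φ u = u) (hv : φ v = v) : Commute u v := by
  have hcube : toOut (φ * φ * φ) = (πₒ * πₒ)⁻¹ := by
    have hτ : τₒ = πₒ * σₒ⁻¹ * πₒ⁻¹ := by
      rw [eq_mul_inv_iff_mul_eq, eq_mul_inv_iff_mul_eq, mul_assoc, πₒ_mul_σₒ, mul_inv_cancel_left]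
    calc toOut (φ * φ * φ) = πₒ⁻¹ * (σₒ * πₒ⁻¹ * σₒ) * πₒ⁻¹ * σₒ := by
          rw [map_mul, map_mul, hφ]
          group
      _ = σₒ⁻¹ * ((πₒ * πₒ)⁻¹ * outLetter true) := by
          rw [← τₒ_eq, hτ, outLetter, transvection, ← σₒ]
          group
      _ = (πₒ * πₒ)⁻¹ := by
          rw [(commute_πₒ_mul_πₒ true).inv_left.eq]
          exact inv_mul_cancel_left _ _
  by_contra huv
  have hmem : toOut (φ * φ * φ) ∈ dihedral :=
    hcube ▸ inv_mem (mul_mem πₒ_mem_dihedral πₒ_mem_dihedral)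
  have hone := eq_one_of_toOut_mem_dihedral hmem (by simp [hu]) (by simp [hv]) huv
  have hsq : toOut invGens = toOut 1 := by
    rw [← pi'_mul_pi', map_mul, ← πₒ, map_one, ← inv_eq_one, ← hcube, hone, map_one]
  obtain ⟨g, hg⟩ := toOut_eq_iff.1 hsq
  have h := exponents_conj_mul g 1 ga
  rw [← hg, invGens_ga, MulAut.one_apply, map_inv, exponents_ga] at h
  have := congrArg (fun x => x.toAdd.1) h
  simp at this

end FiniteOrder

section Parabolic

theorem exponents_gb_zpow (k : ℤ) : exponents (gb ^ k) = Multiplicative.ofAdd (0, k) := by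
  simp [exponents_gb, ← ofAdd_zsmul]

theorem exponents_ga_zpow (k : ℤ) : exponents (ga ^ k) = Multiplicative.ofAdd (k, 0) := by
  simp [exponents_ga, ← ofAdd_zsmul]

theorem gb_zpow_injective : Function.Injective fun k : ℤ => gb ^ k := by
  intro k l h
  have := congrArg exponents h
  rw [exponents_gb_zpow, exponents_gb_zpow] at this
  exact congrArg (fun x => x.toAdd.2) this

theorem not_commute_ga_gb : ¬Commute ga gb := by
  rw [commute_iff_eq]
  decide

theorem gb_zpow_mul_ga_zpow_eq {k l : ℤ} {s t : ℤˣ}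
    (h : gb ^ k * ga ^ (t : ℤ) = ga ^ (s : ℤ) * gb ^ l) : s = t ∧ k = 0 := by
  have hexp := congrArg exponents h
  simp only [map_mul, exponents_gb_zpow, exponents_ga_zpow, ← ofAdd_add, Prod.mk_add_mk, zero_add,
    add_zero] at hexp
  obtain ⟨hts, hkl⟩ := Prod.ext_iff.1 hexp
  obtain rfl : t = s := Units.ext hts
  obtain rfl : k = l := hkl
  refine ⟨rfl, by_contra fun hk => not_commute_ga_gb ?_⟩
  have hgb : gb ^ k ≠ 1 := fun h => hk (gb_zpow_injective (h.trans (zpow_zero gb).symm))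
  have hcomm : Commute (ga ^ (t : ℤ)) gb :=
    commute_of_commute_of_ne_one hgb (Commute.symm h) ((Commute.refl gb).zpow_right k)
  rcases Int.units_eq_one_or t with rfl | rfl
  · simpa using hcomm
  · simpa using hcomm

/-- The number of letters `a^±1` in a reduced word. -/
def aNorm : F → ℕ := weightedNorm ![1, 0]

theorem aNorm_ga : aNorm ga = 1 := by
  decide

theorem aNorm_inv (w : F) : aNorm w⁻¹ = aNorm w := weightedNorm_inv _ w

theorem aNorm_gb_zpow (k : ℤ) : aNorm (gb ^ k) = 0 := by
  have hpow (n : ℕ) : aNorm (gb ^ n) = 0 := by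
    simp [aNorm, weightedNorm, gb, wordWeight]
  obtain ⟨n, rfl | rfl⟩ := k.eq_nat_or_neg
  · rw [zpow_natCast, hpow]
  · rw [zpow_neg, aNorm_inv, zpow_natCast, hpow]

theorem aNorm_gb_zpow_mul (k : ℤ) (w : F) : aNorm (gb ^ k * w) = aNorm w := by
  have hle (k : ℤ) (w : F) : aNorm (gb ^ k * w) ≤ aNorm w :=
    (weightedNorm_mul_le _ _ _).trans_eq ((congrArg (· + _) (aNorm_gb_zpow k)).trans (zero_add _))
  exact le_antisymm (hle k w) (by simpa using hle (-k) (gb ^ k * w))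

theorem aNorm_mul_gb_zpow (w : F) (k : ℤ) : aNorm (w * gb ^ k) = aNorm w := by
  rw [← aNorm_inv, mul_inv_rev, ← zpow_neg gb, aNorm_gb_zpow_mul, aNorm_inv]

theorem aNorm_ga_zpow (s : ℤˣ) : aNorm (ga ^ (s : ℤ)) = 1 := by
  rcases Int.units_eq_one_or s with rfl | rfl
  · simp [aNorm_ga]
  · simp [aNorm_ga, aNorm_inv]

theorem mk_singleton {α : Type*} (i : α) (b : Bool) :
    FreeGroup.mk [(i, b)] = FreeGroup.of i ^ ((cond b 1 (-1) : ℤˣ) : ℤ) := by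
  cases b
  · exact (zpow_neg_one (FreeGroup.of i)).symm
  · exact (zpow_one _).symm

theorem mk_mem_zpowers_gb {l : List (Fin 2 × Bool)} (hl : wordWeight ![1, 0] l = 0) :
    FreeGroup.mk l ∈ Subgroup.zpowers gb := by
  induction l with
  | nil => exact one_mem _
  | cons x l ih =>
    rw [wordWeight_cons, Nat.add_eq_zero_iff] at hl
    rw [← List.singleton_append, ← FreeGroup.mul_mk]
    obtain ⟨i, b⟩ := x
    fin_cases i
    · simp at hl
    · exact mul_mem (mk_singleton _ b ▸ Subgroup.zpow_mem_zpowers _ _) (ih hl.2)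

theorem exists_mk_eq_mul_ga_zpow_mul {l : List (Fin 2 × Bool)} (hl : wordWeight ![1, 0] l = 1) :
    ∃ (i : ℤ) (s : ℤˣ) (j : ℤ), FreeGroup.mk l = gb ^ i * ga ^ (s : ℤ) * gb ^ j := by
  induction l with
  | nil => cases hl
  | cons x l ih =>
    rw [← List.singleton_append, ← FreeGroup.mul_mk]
    rw [wordWeight_cons] at hl
    obtain ⟨i, b⟩ := x
    fin_cases i
    · obtain ⟨j, hj⟩ := mk_mem_zpowers_gb (l := l) (by simpa using hl)
      exact ⟨0, cond b 1 (-1), j, by rw [mk_singleton, ← hj, zpow_zero, one_mul]; rfl⟩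
    · obtain ⟨i, s, j, hij⟩ := ih (by simpa using hl)
      refine ⟨(cond b 1 (-1) : ℤˣ) + i, s, j, ?_⟩
      rw [mk_singleton, hij, zpow_add]
      simp only [mul_assoc]
      rfl

theorem mem_zpowers_gb_of_aNorm_eq_zero {w : F} (hw : aNorm w = 0) :
    w ∈ Subgroup.zpowers gb := by
  have := mk_mem_zpowers_gb hw
  rwa [FreeGroup.mk_toWord] at this

theorem exists_eq_mul_ga_zpow_mul {w : F} (hw : aNorm w = 1) :
    ∃ (i : ℤ) (s : ℤˣ) (j : ℤ), w = gb ^ i * ga ^ (s : ℤ) * gb ^ j := by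
  have := exists_mk_eq_mul_ga_zpow_mul hw
  rwa [FreeGroup.mk_toWord] at this

/-- The tree length counting the letters `a^±1`: the Bass–Serre tree of the splitting of `F` as an
HNN extension of `⟨b⟩` over the trivial group. -/
def aTree : TreeLength F :=
  .ofWeight ![1, 0] (by decide) fun c p q hp hq hpq => by
    obtain ⟨k, hk : gb ^ k = _⟩ := mem_zpowers_gb_of_aNorm_eq_zero hp
    obtain ⟨l, hl : gb ^ l = _⟩ := mem_zpowers_gb_of_aNorm_eq_zero hq
    obtain ⟨i, s, j, hij⟩ := exists_eq_mul_ga_zpow_mul hpq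
    have hconj : gb ^ k * ga ^ (s : ℤ) = ga ^ (s : ℤ) * gb ^ l := by
      refine mul_left_cancel (a := gb ^ i) (mul_right_cancel (b := gb ^ j) ?_)
      calc gb ^ i * (gb ^ k * ga ^ (s : ℤ)) * gb ^ j
          = gb ^ k * (gb ^ i * ga ^ (s : ℤ) * gb ^ j) := by group
        _ = gb ^ i * ga ^ (s : ℤ) * gb ^ j * gb ^ l := by
          rw [← hij, hk, hl]
          group
        _ = gb ^ i * (ga ^ (s : ℤ) * gb ^ l) * gb ^ j := by group
    rwa [(gb_zpow_mul_ga_zpow_eq hconj).2, zpow_zero, eq_comm, inv_mul_eq_one, eq_comm,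
      mul_eq_right] at hk

/-- The normal form of `w` begins with the syllable `b^i a^s`. -/
def IsFirstSyllable (i : ℤ) (s : ℤˣ) (w : F) : Prop :=
  aNorm ((gb ^ i * ga ^ (s : ℤ))⁻¹ * w) + 1 = aNorm w

theorem aNorm_syllable (i : ℤ) (s : ℤˣ) : aNorm (gb ^ i * ga ^ (s : ℤ)) = 1 := by
  rw [aNorm_gb_zpow_mul, aNorm_ga_zpow]

theorem exists_isFirstSyllable {w : F} (hw : w ∉ Subgroup.zpowers gb) :
    ∃ i s, IsFirstSyllable i s w := by
  have hpos : 1 ≤ aNorm w := Nat.one_le_iff_ne_zero.2 (mt mem_zpowers_gb_of_aNorm_eq_zero hw)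
  obtain ⟨p, hp, hpw⟩ := aTree.exists_between w 1 hpos
  obtain ⟨i, s, j, rfl⟩ := exists_eq_mul_ga_zpow_mul hp
  refine ⟨i, s, ?_⟩
  rw [hp, mul_inv_rev _ (gb ^ j), ← zpow_neg, mul_assoc, add_comm] at hpw
  exact (congrArg (· + 1) (aNorm_gb_zpow_mul _ _)).symm.trans hpw

theorem IsFirstSyllable.eq {i j : ℤ} {s t : ℤˣ} {w : F} (hi : IsFirstSyllable i s w)
    (hj : IsFirstSyllable j t w) : i = j ∧ s = t := by
  have hdist {i : ℤ} {s : ℤˣ} (h : IsFirstSyllable i s w) :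
      aTree.dist 1 (gb ^ i * ga ^ (s : ℤ)) + aTree.dist (gb ^ i * ga ^ (s : ℤ)) w =
        aTree.dist 1 w := by
    rw [aTree.one_dist, aTree.one_dist, add_comm]
    exact (congrArg (_ + ·) (aNorm_syllable i s)).trans h
  have hzero := aTree.dist_eq_zero_of_mem_segment (hdist hi) (hdist hj) (by
    rw [aTree.one_dist, aTree.one_dist]
    exact (aNorm_syllable i s).trans (aNorm_syllable j t).symm)
  obtain ⟨k, hk : gb ^ k = _⟩ := mem_zpowers_gb_of_aNorm_eq_zero hzero
  have h : gb ^ (j - i) * ga ^ (t : ℤ) = ga ^ (s : ℤ) * gb ^ k := by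
    rw [hk]
    group
  obtain ⟨hst, hij⟩ := gb_zpow_mul_ga_zpow_eq h
  exact ⟨(sub_eq_zero.1 hij).symm, hst⟩

theorem IsFirstSyllable.eq_of_apply {Φ : F → F}
    (hΦ : ∀ p q, aTree.dist (Φ p) (Φ q) = aTree.dist p q) {i i' j : ℤ} {s s' : ℤˣ} {w : F}
    (h : IsFirstSyllable i s w) (hw : Φ w = w)
    (hs : Φ (gb ^ i * ga ^ (s : ℤ)) = gb ^ i' * ga ^ (s' : ℤ) * gb ^ j) : i = i' ∧ s = s' := by
  refine h.eq ?_
  have hdist := hΦ (gb ^ i * ga ^ (s : ℤ)) w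
  rw [hw, hs, TreeLength.dist, mul_inv_rev _ (gb ^ j), ← zpow_neg, mul_assoc] at hdist
  exact (congrArg (· + 1) ((aNorm_gb_zpow_mul _ _).symm.trans hdist)).trans h

section VertexFixing

variable {ψ : MulAut F} {p q : ℤ} {s t : ℤˣ} (ha : ψ ga = gb ^ p * ga ^ (s : ℤ) * gb ^ q)
  (hb : ψ gb = gb ^ (t : ℤ))

include ha in
theorem conj_gb_zpow_mul_apply_ga (m : ℤ) : (MulAut.conj (gb ^ m) * ψ) ga =
    gb ^ (m + p) * ga ^ (s : ℤ) * gb ^ (q - m) := by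
  rw [MulAut.mul_apply, ha, MulAut.conj_apply]
  group

include hb in
theorem conj_gb_zpow_mul_apply_gb (m : ℤ) : (MulAut.conj (gb ^ m) * ψ) gb = gb ^ (t : ℤ) := by
  rw [MulAut.mul_apply, hb, MulAut.conj_apply]
  group

include ha hb

theorem aNorm_apply (w : F) : aNorm (ψ w) = aNorm w := by
  have hb' (k : ℤ) : ψ⁻¹ (gb ^ k) = gb ^ (t * k) := by
    rw [MulAut.inv_apply, MulEquiv.symm_apply_eq, map_zpow, hb, ← zpow_mul, ← mul_assoc,
      ← Units.val_mul, Int.units_mul_self, Units.val_one, one_mul]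
  have ha' : aNorm (ψ⁻¹ (ga ^ (s : ℤ))) = 1 := by
    have h : ga ^ (s : ℤ) = gb ^ (-p) * ψ ga * gb ^ (-q) := by
      rw [ha]
      group
    rw [h, map_mul, map_mul, hb', hb', aNorm_mul_gb_zpow, aNorm_gb_zpow_mul, MulAut.inv_apply_self,
      aNorm_ga]
  refine weightedNorm_apply_eq _ (fun i => ?_) (fun i => ?_) w
  · fin_cases i
    · change aNorm (ψ ga) ≤ 1
      rw [ha, aNorm_mul_gb_zpow, aNorm_syllable]
    · change aNorm (ψ gb) ≤ 0
      rw [hb, aNorm_gb_zpow]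
  · fin_cases i
    · change aNorm (ψ⁻¹ ga) ≤ 1
      rcases Int.units_eq_one_or s with rfl | rfl
      · simpa using ha'.le
      · simpa [aNorm_inv] using ha'.le
    · change aNorm (ψ⁻¹ gb) ≤ 0
      rw [← zpow_one gb, hb', aNorm_gb_zpow]

theorem aTree_dist_apply (x y : F) : aTree.dist (ψ x) (ψ y) = aTree.dist x y := by
  rw [TreeLength.dist, ← map_inv, ← map_mul]
  exact aNorm_apply ha hb _

theorem apply_syllable (i : ℤ) (r : ℤˣ) : ∃ j : ℤ, ψ (gb ^ i * ga ^ (r : ℤ)) =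
    gb ^ (t * i + if r = 1 then p else -q) * ga ^ ((s * r : ℤˣ) : ℤ) * gb ^ j := by
  rw [map_mul, map_zpow, map_zpow, ha, hb, ← zpow_mul, zpow_add]
  rcases Int.units_eq_one_or r with rfl | rfl
  · exact ⟨q, by simp [mul_assoc]⟩
  · exact ⟨-p, by simp [mul_assoc]⟩

theorem mem_zpowers_or_of_apply_eq {w : F} (hw : ψ w = w) :
    w ∈ Subgroup.zpowers gb ∨ s = 1 ∧ ∃ i : ℤ, i = t * i + p ∨ i = t * i - q := by
  by_contra! h
  obtain ⟨i, r, hir⟩ := exists_isFirstSyllable h.1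
  obtain ⟨j, hj⟩ := apply_syllable ha hb i r
  obtain ⟨hi, hr⟩ := hir.eq_of_apply (aTree_dist_apply ha hb) hw hj
  have := h.2 (right_eq_mul.1 hr) i
  split_ifs at hi <;> omega

theorem exists_conj_eq_conj_gb_zpow_mul {g u v : F} (hu : (MulAut.conj g * ψ) u = u)
    (hv : (MulAut.conj g * ψ) v = v) (huv : ¬Commute u v) :
    ∃ h, ∃ m : ℤ, (MulAut.conj h)⁻¹ * (MulAut.conj g * ψ) * MulAut.conj h =
      MulAut.conj (gb ^ m) * ψ ∧ s = 1 ∧ ∃ i : ℤ, i = t * i + (m + p) ∨ i = t * i - (q - m) := by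
  obtain ⟨h, x, hx, hconj⟩ := aTree.exists_conj_mul (aNorm_apply ha hb) hu hv huv
  obtain ⟨m, rfl⟩ := mem_zpowers_gb_of_aNorm_eq_zero hx
  refine ⟨h, m, hconj, by_contra fun hne => huv ?_⟩
  have hmem {w : F} (hw : (MulAut.conj g * ψ) w = w) :
      (MulAut.conj h)⁻¹ w ∈ Subgroup.zpowers gb :=
    (mem_zpowers_or_of_apply_eq (conj_gb_zpow_mul_apply_ga ha m) (conj_gb_zpow_mul_apply_gb hb m)
      (conj_apply_eq_of_apply_eq hconj hw)).resolve_right hne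
  have hcomm : Commute _ _ := setLike_mul_comm (hmem hu) (hmem hv)
  exact hcomm.of_map ((MulAut.conj h)⁻¹ : MulAut F).injective

end VertexFixing

section Unipotent

variable {ψ : MulAut F} {q : ℤ} (ha : ψ ga = ga * gb ^ q) (hb : ψ gb = gb)

include ha hb

theorem exists_aNorm_lt_of_apply_eq (hq : q ≠ 0) {w : F} (hw : ψ w = w)
    (hwb : w ∉ Subgroup.zpowers gb) :
    ∃ i j : ℤ, aNorm ((gb ^ i * (ga * gb * ga⁻¹) ^ j)⁻¹ * w) < aNorm w := by
  have ha' : ψ ga = gb ^ (0 : ℤ) * ga ^ ((1 : ℤˣ) : ℤ) * gb ^ q := by simpa using ha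
  have hb' : ψ gb = gb ^ ((1 : ℤˣ) : ℤ) := by simpa using hb
  obtain ⟨i, r, hir⟩ := exists_isFirstSyllable hwb
  obtain ⟨k, hk⟩ := apply_syllable ha' hb' i r
  have hi := (hir.eq_of_apply (aTree_dist_apply ha' hb') hw hk).1
  obtain rfl : r = 1 := by
    by_contra hr
    simp [hr, hq] at hi
  set x := (gb ^ i * ga ^ ((1 : ℤˣ) : ℤ))⁻¹ * w with hx
  have hψx : gb ^ q * ψ x = x := by
    rw [hx, map_mul, hw, map_inv, map_mul, map_zpow, map_zpow, ha, hb]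
    simp [mul_assoc]
  have hxb : x ∉ Subgroup.zpowers gb := by
    rintro ⟨l, hl : gb ^ l = x⟩
    rw [← hl, map_zpow, hb, ← zpow_add] at hψx
    have := gb_zpow_injective hψx
    omega
  obtain ⟨j, r, hjr⟩ := exists_isFirstSyllable hxb
  obtain ⟨k, hk⟩ := apply_syllable ha' hb' j r
  have hj := (hjr.eq_of_apply (Φ := fun y => gb ^ q * ψ y) (fun y z => by
    rw [aTree.dist_mul_left, aTree_dist_apply ha' hb']) hψx (by
      rw [hk, ← mul_assoc, ← mul_assoc, ← zpow_add])).1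
  obtain rfl : r = -1 := by
    rw [← Int.units_ne_iff_eq_neg]
    rintro rfl
    simp [hq] at hj
  have hy : (gb ^ i * (ga * gb * ga⁻¹) ^ j)⁻¹ * w = (gb ^ j * ga ^ ((-1 : ℤˣ) : ℤ))⁻¹ * x := by
    rw [conj_zpow, hx]
    simp [mul_assoc]
  refine ⟨i, j, ?_⟩
  rw [hy]
  exact (Nat.lt_of_succ_le hjr.le).trans (Nat.lt_of_succ_le hir.le)

theorem apply_eq_self_iff_mem_closure (hq : q ≠ 0) {w : F} :
    ψ w = w ↔ w ∈ Subgroup.closure {gb, ga * gb * ga⁻¹} := by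
  have hle : Subgroup.closure {gb, ga * gb * ga⁻¹} ≤ ψ.toMonoidHom.eqLocus (MonoidHom.id F) := by
    rw [Subgroup.closure_le]
    rintro x (rfl | rfl)
    · exact hb
    · change ψ (ga * gb * ga⁻¹) = ga * gb * ga⁻¹
      rw [map_mul, map_mul, map_inv, ha, hb]
      group
  have hgb : gb ∈ Subgroup.closure {gb, ga * gb * ga⁻¹} := Subgroup.subset_closure (.inl rfl)
  have hconj : ga * gb * ga⁻¹ ∈ Subgroup.closure {gb, ga * gb * ga⁻¹} :=
    Subgroup.subset_closure (.inr rfl)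
  refine ⟨fun hw => ?_, fun hw => hle hw⟩
  induction h : aNorm w using Nat.strong_induction_on generalizing w with
  | _ n ih =>
    by_cases hwb : w ∈ Subgroup.zpowers gb
    · exact Subgroup.zpowers_le.2 hgb hwb
    · obtain ⟨i, j, hlt⟩ := exists_aNorm_lt_of_apply_eq ha hb hq hw hwb
      have hmem := mul_mem (zpow_mem hgb i) (zpow_mem hconj j)
      refine (Subgroup.mul_mem_cancel_left _ (inv_mem hmem)).1 (ih _ (h ▸ hlt) ?_ rfl)
      rw [map_mul, map_inv, hw]
      exact congrArg (·⁻¹ * w) (hle hmem)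

end Unipotent

theorem fixedBy_eq_fixedBy_σ {ψ : MulAut F} {q : ℤ} (ha : ψ ga = ga * gb ^ q) (hb : ψ gb = gb)
    (hq : q ≠ 0) : MulAction.fixedBy F ψ = MulAction.fixedBy F σ := by
  ext w
  exact (apply_eq_self_iff_mem_closure ha hb hq).trans
    (apply_eq_self_iff_mem_closure (q := 1) (by simp) (by simp) one_ne_zero).symm

theorem fixedBy_conj_congr {G : Type*} [Group G] {φ ψ : MulAut G}
    (h : MulAction.fixedBy G φ = MulAction.fixedBy G ψ) (α : MulAut G) :
    MulAction.fixedBy G (α * φ * α⁻¹) = MulAction.fixedBy G (α * ψ * α⁻¹) := by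
  rw [← MulAction.smul_fixedBy, h, MulAction.smul_fixedBy]

theorem σ_pow_gb (n : ℕ) : (σ ^ n) gb = gb := by
  induction n with
  | zero => rfl
  | succ n ih => rw [pow_succ, MulAut.mul_apply, σ_gb, ih]

theorem σ_pow_ga (n : ℕ) : (σ ^ n) ga = ga * gb ^ n := by
  induction n with
  | zero => exact (mul_one ga).symm
  | succ n ih =>
    rw [pow_succ, MulAut.mul_apply, σ_ga, map_mul, ih, σ_pow_gb, pow_succ, mul_assoc]

theorem commute_of_toOut_eq_πₒ_mul_πₒ_mul_σₒ_pow {φ : MulAut F} {n : ℕ}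
    (hφ : toOut φ = πₒ * πₒ * σₒ ^ n) {u v : F} (hu : φ u = u) (hv : φ v = v) : Commute u v := by
  rw [πₒ, σₒ, ← map_mul, pi'_mul_pi', ← map_pow, ← map_mul] at hφ
  obtain ⟨g, rfl⟩ := toOut_eq_iff.1 hφ
  by_contra huv
  obtain ⟨-, -, -, hs, -⟩ := exists_conj_eq_conj_gb_zpow_mul (ψ := invGens * σ ^ n) (p := 0)
    (q := -n) (s := -1) (t := -1) (by simp [σ_pow_ga]) (by simp [σ_pow_gb]) hu hv huv
  exact absurd hs (by decide)

theorem exists_fixedBy_conj_gb_zpow_eq {n : ℕ} (hn : n ≠ 0) {m : ℤ} (hm : m = 0 ∨ m = n) :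
    ∃ γ : MulAut F, MulAction.fixedBy F (MulAut.conj (gb ^ m) * σ ^ n) =
      MulAction.fixedBy F (γ * σ * γ⁻¹) := by
  have hga := conj_gb_zpow_mul_apply_ga (ψ := σ ^ n) (p := 0) (q := n) (s := 1)
    (by simp [σ_pow_ga]) m
  have hgb := conj_gb_zpow_mul_apply_gb (ψ := σ ^ n) (t := 1) (by simp [σ_pow_gb]) m
  rcases hm with rfl | rfl
  · refine ⟨1, ?_⟩
    rw [inv_one, mul_one, one_mul]
    exact fixedBy_eq_fixedBy_σ (q := n) (by simpa using hga) (by simpa using hgb) (by omega)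
  · set ψ := MulAut.conj (gb ^ (n : ℤ)) * σ ^ n
    have hinv : invA⁻¹ = invA := inv_eq_of_mul_eq_one_left (aut_eq_of_gens (by simp) (by simp))
    have hσ := fixedBy_eq_fixedBy_σ (ψ := invA⁻¹ * ψ * invA) (q := -n)
      (by simp [hinv, hga]) (by simp [hinv, hgb]) (by omega)
    refine ⟨invA, ?_⟩
    rw [← fixedBy_conj_congr hσ invA]
    congr 1
    group

theorem exists_fixedBy_eq_of_toOut_eq_σₒ_pow {φ : MulAut F} {n : ℕ} (hn : n ≠ 0)
    (hφ : toOut φ = σₒ ^ n) {u v : F} (hu : φ u = u) (hv : φ v = v) (huv : ¬Commute u v) :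
    ∃ γ : MulAut F, MulAction.fixedBy F φ = MulAction.fixedBy F (γ * σ * γ⁻¹) := by
  rw [σₒ, ← map_pow] at hφ
  obtain ⟨g, rfl⟩ := toOut_eq_iff.1 hφ
  obtain ⟨h, m, hconj, -, hm⟩ := exists_conj_eq_conj_gb_zpow_mul (ψ := σ ^ n) (p := 0) (q := n)
    (s := 1) (t := 1) (by simp [σ_pow_ga]) (by simp [σ_pow_gb]) hu hv huv
  obtain ⟨γ, hγ⟩ := exists_fixedBy_conj_gb_zpow_eq hn (m := m) (by
    rw [Units.val_one] at hm
    omega)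
  refine ⟨MulAut.conj h * γ, ?_⟩
  rw [← hconj] at hγ
  convert fixedBy_conj_congr hγ (MulAut.conj h) using 2 <;> group

theorem eq_one_or_exists_fixedBy_eq {φ : MulAut F} {u v : F} (hu : φ u = u) (hv : φ v = v)
    (huv : ¬Commute u v) :
    φ = 1 ∨ ∃ γ : MulAut F, MulAction.fixedBy F φ = MulAction.fixedBy F (γ * σ * γ⁻¹) := by
  obtain ⟨r, hconj, hr⟩ := exists_isConj_isRepresentative (toOut φ)
  obtain ⟨c, rfl⟩ := isConj_iff.1 hconj
  obtain ⟨α, rfl⟩ := toOut_surjective c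
  rw [← map_mul, ← map_inv, ← map_mul] at hr
  have hfix {w : F} (hw : φ w = w) : (α * φ * α⁻¹) (α w) = α w := by simp [hw]
  have hncomm : ¬Commute (α u) (α v) := fun h => huv (h.of_map α.injective)
  rcases hr with hr | hr | hr | ⟨n, hn, hr | hr⟩ | ⟨l, ht, hf, hr⟩
  · left
    have hone := eq_one_of_toOut_mem_dihedral hr (hfix hu) (hfix hv) hncomm
    simpa using hone
  · exact (hncomm (commute_of_toOut_eq_πₒ_mul_σₒ hr (hfix hu) (hfix hv))).elim
  · exact (hncomm (commute_of_toOut_eq_πₒ_inv_mul_σₒ hr (hfix hu) (hfix hv))).elim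
  · obtain ⟨γ, hγ⟩ := exists_fixedBy_eq_of_toOut_eq_σₒ_pow hn hr (hfix hu) (hfix hv) hncomm
    refine Or.inr ⟨α⁻¹ * γ, ?_⟩
    convert fixedBy_conj_congr hγ α⁻¹ using 2 <;> group
  · exact (hncomm (commute_of_toOut_eq_πₒ_mul_πₒ_mul_σₒ_pow hr (hfix hu) (hfix hv))).elim
  · exact (hncomm (commute_of_toOut_mul_self_eq_outChain ht hf hr (hfix hu) (hfix hv))).elim

end Parabolic

section NormalFormBounds

theorem mk_singleton_mem (x : Fin 2 × Bool) :
    FreeGroup.mk [x] ∈ ({ga, ga⁻¹, gb, gb⁻¹} : Set F) := by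
  obtain ⟨i, _ | _⟩ := x <;> fin_cases i
  exacts [Or.inr (Or.inl rfl), Or.inr (Or.inr (Or.inr rfl)), Or.inl rfl,
    Or.inr (Or.inr (Or.inl rfl))]

theorem isW1_of_norm_apply_eq {β : MulAut F} (hβ : ∀ w, (β w).norm = w.norm) : IsW1 β := by
  have hmem {w : F} (hw : w.norm = 1) : w ∈ ({ga, ga⁻¹, gb, gb⁻¹} : Set F) := by
    obtain ⟨x, hx⟩ := List.length_eq_one_iff.1 hw
    rw [← FreeGroup.mk_toWord (x := w), hx]
    exact mk_singleton_mem x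
  exact ⟨hmem ((hβ ga).trans norm_ga), hmem ((hβ gb).trans norm_gb)⟩

theorem δ₁_eq_conj : δ₁ = MulAut.conj gb⁻¹ :=
  aut_eq_of_gens ((mkAut_ga ..).trans (by simp)) ((mkAut_gb ..).trans (by simp))

theorem δ₂_eq_conj : δ₂ = MulAut.conj gb :=
  aut_eq_of_gens ((mkAut_ga ..).trans (by simp)) ((mkAut_gb ..).trans (by simp))

theorem δ₃_eq_conj : δ₃ = MulAut.conj ga⁻¹ :=
  aut_eq_of_gens ((mkAut_ga ..).trans (by simp)) ((mkAut_gb ..).trans (by simp))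

theorem δ₄_eq_conj : δ₄ = MulAut.conj ga :=
  aut_eq_of_gens ((mkAut_ga ..).trans (by simp)) ((mkAut_gb ..).trans (by simp))

theorem exists_δIdx_eq_conj {w : F} (hw : w ∈ ({ga, ga⁻¹, gb, gb⁻¹} : Set F)) :
    ∃ i, δIdx i = MulAut.conj w := by
  rcases hw with rfl | rfl | rfl | rfl
  exacts [⟨3, δ₄_eq_conj⟩, ⟨2, δ₃_eq_conj⟩, ⟨1, δ₂_eq_conj⟩, ⟨0, δ₁_eq_conj⟩]

theorem exists_prod_δIdx_eq_conj (g : F) :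
    ∃ ds : List (Fin 4), ds.length = g.norm ∧ (ds.map δIdx).prod = MulAut.conj g := by
  choose i hi using fun x => exists_δIdx_eq_conj (mk_singleton_mem x)
  refine ⟨g.toWord.map i, List.length_map _, ?_⟩
  conv_rhs => rw [← FreeGroup.mk_toWord (x := g)]
  induction g.toWord with
  | nil => exact (map_one MulAut.conj).symm
  | cons x l ih =>
    rw [List.map_cons, List.map_cons, List.prod_cons, ih, hi, ← map_mul, FreeGroup.mul_mk,
      List.singleton_append]

/-- The negative chain spelled by a list of booleans. -/
def negAutChain (l : List Bool) : MulAut F := (l.map fun b => (transvection b)⁻¹).prod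

theorem negAutChain_cons (b : Bool) (l : List Bool) :
    negAutChain (b :: l) = (transvection b)⁻¹ * negAutChain l := List.prod_cons

/-- The pair of exponents of a single transvection, regarded as a factor of a chain. -/
def letterExponents (b : Bool) : ℕ × ℕ := cond b (1, 0) (0, 1)

theorem chainC1_map_letterExponents (l : List Bool) :
    chainC1 (l.map letterExponents) = autChain l := by
  rw [chainC1, List.map_map, autChain]
  congr 2
  ext1 b
  cases b <;> simp [letterExponents, transvection]

theorem chainC2_map_letterExponents (l : List Bool) :
    chainC2 (l.map letterExponents) = negAutChain l := by
  rw [chainC2, List.map_map, negAutChain]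
  congr 2
  ext1 b
  cases b <;> simp [letterExponents, transvection]

theorem chainLen_cons (p : ℕ × ℕ) (c : List (ℕ × ℕ)) :
    chainLen (p :: c) = p.1 + p.2 + chainLen c := by
  simp only [chainLen, sigmaCount, tauCount, List.map_cons, List.sum_cons]
  omega

theorem chainLen_map_letterExponents (l : List Bool) :
    chainLen (l.map letterExponents) = l.length := by
  induction l with
  | nil => rfl
  | cons b l ih =>
    rw [List.map_cons, chainLen_cons, ih, List.length_cons, add_comm l.length]
    cases b <;> rfl

/-- The automorphisms `β ∘ δ' ∘ ψ'` of the theorem, with the bounds determined by `L`. -/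
def IsBoundedNormalForm (L : ℕ) (ω : MulAut F) : Prop :=
  ∃ β : MulAut F, IsW1 β ∧
    ∃ ds : List (Fin 4), ds.length ≤ (2 ^ (4 * L + 4) + 1) * L ∧
      ∃ c : List (ℕ × ℕ), c ≠ [] ∧ chainLen c ≤ 4 * L + 4 ∧
        ∃ ψ' : MulAut F, (ψ' = chainC1 c ∨ ψ' = chainC2 c) ∧ ω = β * (ds.map δIdx).prod * ψ'

theorem isBoundedNormalForm_mul_conj_mul {L : ℕ} {β : MulAut F} (hβ : ∀ w, (β w).norm = w.norm)
    {g : F} (hg : g.norm ≤ (2 ^ (4 * L + 4) + 1) * L) {l : List Bool} (hl : l.length ≤ 4 * L + 4)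
    {ψ : MulAut F} (hψ : ψ = autChain l ∨ ψ = negAutChain l) :
    IsBoundedNormalForm L (β * MulAut.conj g * ψ) := by
  obtain ⟨ds, hds, hconj⟩ := exists_prod_δIdx_eq_conj g
  -- The empty factor `(0, 0)` makes the list of exponents nonempty even when `l = []`.
  refine ⟨β, isW1_of_norm_apply_eq hβ, ds, hds.trans_le hg, (0, 0) :: l.map letterExponents,
    List.cons_ne_nil _ _, ?_, ψ, ?_, by rw [hconj]⟩
  · rwa [chainLen_cons, chainLen_map_letterExponents, zero_add, zero_add]
  · rw [← chainC1_map_letterExponents, ← chainC2_map_letterExponents] at hψ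
    simpa [chainC1, chainC2] using hψ

end NormalFormBounds

section WordGrowth

theorem norm_map_le {α β : Type*} [DecidableEq α] [DecidableEq β] {c : ℕ}
    (f : FreeGroup α →* FreeGroup β) (hf : ∀ i, (f (FreeGroup.of i)).norm ≤ c) (w : FreeGroup α) :
    (f w).norm ≤ c * w.norm := by
  rw [← weightedNorm_const_one, ← weightedNorm_const]
  exact weightedNorm_map_le _ _ f (by simpa only [weightedNorm_const_one] using hf) w

theorem norm_apply_le_of_gens {φ : MulAut F} {c : ℕ} (ha : (φ ga).norm ≤ c) (hb : (φ gb).norm ≤ c)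
    (w : F) : (φ w).norm ≤ c * w.norm := by
  refine norm_map_le φ.toMonoidHom (fun i => ?_) w
  fin_cases i
  exacts [ha, hb]

theorem norm_transvection_le (b : Bool) (w : F) : (transvection b w).norm ≤ 2 * w.norm ∧
    ((transvection b)⁻¹ w).norm ≤ 2 * w.norm := by
  have hmul {x y : F} (hx : x.norm = 1) (hy : y.norm = 1) : (x * y).norm ≤ 2 :=
    (FreeGroup.norm_mul_le x y).trans (by rw [hx, hy])
  constructor <;> apply norm_apply_le_of_gens <;> cases b <;> simp [transvection, hmul]

theorem norm_autChain_le {l : List Bool} {ψ : MulAut F} (hψ : ψ = autChain l ∨ ψ = negAutChain l)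
    (w : F) : (ψ w).norm ≤ 2 ^ l.length * w.norm := by
  induction l generalizing ψ with
  | nil => rcases hψ with rfl | rfl <;> simp [autChain, negAutChain]
  | cons b l ih =>
    rw [List.length_cons, pow_succ', mul_assoc]
    rcases hψ with rfl | rfl
    · rw [autChain_cons, MulAut.mul_apply]
      exact (norm_transvection_le b _).1.trans (Nat.mul_le_mul_left 2 (ih (Or.inl rfl)))
    · rw [negAutChain_cons, MulAut.mul_apply]
      exact (norm_transvection_le b _).2.trans (Nat.mul_le_mul_left 2 (ih (Or.inr rfl)))

theorem norm_le_of_mul_conj_mul_apply_eq {α : Type*} [DecidableEq α]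
    {β ψ : MulAut (FreeGroup α)} (hβ : ∀ w, (β w).norm = w.norm) {g u v : FreeGroup α}
    (huv : ¬Commute u v) (hu : (β * MulAut.conj g * ψ) u = u)
    (hv : (β * MulAut.conj g * ψ) v = v) {R : ℕ} (huR : u.norm ≤ R ∧ (ψ u).norm ≤ R)
    (hvR : v.norm ≤ R ∧ (ψ v).norm ≤ R) : g.norm ≤ 4 * R + 2 := by
  have hdisp {w : FreeGroup α} (hw : (β * MulAut.conj g * ψ) w = w)
      (hwR : w.norm ≤ R ∧ (ψ w).norm ≤ R) :
      (TreeLength.word α).dist 1 (β⁻¹ w * 1) ≤ R ∧ (TreeLength.word α).dist g (β⁻¹ w * g) ≤ R := by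
    have hβw : (β⁻¹ w).norm = w.norm := by rw [← hβ, MulAut.apply_inv_self]
    have hψw : g⁻¹ * (β⁻¹ w * g) = ψ w := by
      nth_rewrite 1 [← hw]
      simp [mul_assoc]
    rw [mul_one, TreeLength.one_dist, TreeLength.dist, hψw, TreeLength.word_norm,
      TreeLength.word_norm, hβw]
    exact hwR
  have h := (TreeLength.word α).dist_le_of_displacement_le
    (fun h => huv (h.of_map (β⁻¹).injective)) (hdisp hu huR) (hdisp hv hvR)
  rwa [TreeLength.one_dist, TreeLength.word_norm] at h

theorem abs_exponents_le_norm (w : F) :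
    |(exponents w).toAdd.1| + |(exponents w).toAdd.2| ≤ w.norm := by
  suffices ∀ l : List (Fin 2 × Bool), |(exponents (.mk l)).toAdd.1| +
      |(exponents (.mk l)).toAdd.2| ≤ l.length by
    have h := this w.toWord
    rwa [FreeGroup.mk_toWord] at h
  intro l
  induction l with
  | nil => exact (show |(0 : ℤ)| + |(0 : ℤ)| ≤ 0 by simp)
  | cons x l ih =>
    have hx : |(exponents (.mk [x])).toAdd.1| + |(exponents (.mk [x])).toAdd.2| = 1 := by
      rcases mk_singleton_mem x with h | h | h | h <;> rw [h] <;>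
        simp [exponents_ga, exponents_gb]
    rw [← List.singleton_append, ← FreeGroup.mul_mk, map_mul, toAdd_mul, Prod.fst_add,
      Prod.snd_add, List.singleton_append, List.length_cons]
    have := abs_add_le (exponents (.mk [x])).toAdd.1 (exponents (.mk l)).toAdd.1
    have := abs_add_le (exponents (.mk [x])).toAdd.2 (exponents (.mk l)).toAdd.2
    push_cast
    linarith

end WordGrowth

section NormalizedConjugator

theorem exists_toOut_eq_mul_outChain (α : MulAut F) : ∃ γ : MulAut F, ∃ d ∈ dihedral, ∃ l,
    toOut γ = d * outChain l ∧
      MulAction.fixedBy F (γ * σ * γ⁻¹) = MulAction.fixedBy F (α * σ * α⁻¹) := by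
  obtain ⟨d, hd, l, e, he, hα⟩ := exists_mul_outChain_mul (toOut α)
  have hmove {e : OutF} {w : Bool → Bool}
      (hw : ∀ b, SemiconjBy e⁻¹ (outLetter b) (outLetter (w b))) :
      d * outChain l * e = d * e * outChain (l.map w) := by
    have h := (semiconjBy_outChain hw l).inv_symm_left
    rw [inv_inv] at h
    rw [mul_assoc, mul_assoc, h.eq]
  obtain ⟨w, hw | hw⟩ := exists_semiconjBy_of_mem_dihedral (inv_mem he)
  · exact ⟨α, d * e, mul_mem hd he, l.map w, hα.trans (hmove hw), rfl⟩
  -- The automorphism `invB` inverts `σ`, and its class corrects the sign of `e`.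
  · refine ⟨α * invB, d * (e * εₒ), mul_mem hd (mul_mem he εₒ_mem_dihedral), l.map w, ?_, ?_⟩
    · rw [map_mul, hα, mul_assoc]
      refine hmove fun b => ?_
      rw [mul_inv_rev]
      exact (semiconjBy_εₒ (w b)).inv_symm_left.mul_left (hw b)
    · have hσ : invB * σ * invB⁻¹ = σ⁻¹ := aut_eq_of_gens (by simp) (by simp)
      rw [← fixedBy_conj_congr (MulAction.fixedBy_inv F σ) α, ← hσ]
      simp only [mul_inv_rev, mul_assoc]

theorem exists_normalized_conjugator (α : MulAut F) : ∃ γ : MulAut F, ∃ d ∈ dihedral, ∃ l,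
    (l = [] ∨ ∃ l₁, l = l₁ ++ [false]) ∧ toOut γ = d * outChain l ∧
      MulAction.fixedBy F (γ * σ * γ⁻¹) = MulAction.fixedBy F (α * σ * α⁻¹) := by
  obtain ⟨γ, d, hd, l, hγ, hfix⟩ := exists_toOut_eq_mul_outChain α
  induction l using List.reverseRecOn generalizing γ with
  | nil => exact ⟨γ, d, hd, [], Or.inl rfl, hγ, hfix⟩
  | append_singleton l b ih =>
    cases b
    · exact ⟨γ, d, hd, _, Or.inr ⟨l, rfl⟩, hγ, hfix⟩
    · refine ih (γ * σ⁻¹) ?_ ?_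
      · rw [map_mul, hγ, outChain_append, outChain_singleton, map_inv, ← mul_assoc]
        exact mul_inv_cancel_right _ _
      · rw [← hfix]
        congr 1
        group

theorem exists_toOut_conj_σ_eq {γ : MulAut F} {d : OutF} (hd : d ∈ dihedral) {l : List Bool}
    (hl : l = [] ∨ ∃ l₁, l = l₁ ++ [false]) (hγ : toOut γ = d * outChain l) :
    ∃ m, ∃ e ∈ dihedral, m.length ≤ 2 * l.length + 1 ∧
      toOut (γ * σ * γ⁻¹) = d * outChain m * e := by
  have hconj : toOut (γ * σ * γ⁻¹) = d * outChain l * σₒ * (outChain l)⁻¹ * d⁻¹ := by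
    rw [map_mul, map_mul, map_inv, hγ, mul_inv_rev, ← mul_assoc]
    rfl
  rw [hconj]
  rcases hl with rfl | ⟨l, rfl⟩
  · exact ⟨[true], d⁻¹, inv_mem hd, le_rfl, by rw [outChain_nil, mul_one, inv_one, mul_one]; rfl⟩
  · have hinv (l : List Bool) :
        πₒ * (outChain l)⁻¹ = outChain (l.reverse.map not) * πₒ := by
      induction l with
      | nil => simp [outChain_nil]
      | cons b l ih =>
        rw [outChain_cons, mul_inv_rev, ← mul_assoc, ih, mul_assoc,
          (semiconjBy_πₒ b).inv_right.eq, inv_inv, ← mul_assoc, List.reverse_cons, List.map_append,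
          outChain_append, List.map_singleton, outChain_singleton]
    refine ⟨l ++ [false, false] ++ l.reverse.map not, πₒ * d⁻¹,
      mul_mem πₒ_mem_dihedral (inv_mem hd), ?_, ?_⟩
    · simp only [List.length_append, List.length_map, List.length_reverse, List.length_cons,
        List.length_nil]
      omega
    have hττ : outChain [false, false] = τₒ * τₒ := by
      rw [outChain_cons, outChain_singleton]
      rfl
    have hτ : outChain [false] = τₒ := outChain_singleton false
    calc d * outChain (l ++ [false]) * σₒ * (outChain (l ++ [false]))⁻¹ * d⁻¹
        = d * outChain l * (τₒ * τₒ) * (πₒ * (outChain l)⁻¹) * d⁻¹ := by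
          rw [outChain_append, hτ, σₒ_eq]
          group
      _ = d * outChain (l ++ [false, false] ++ l.reverse.map not) * (πₒ * d⁻¹) := by
          rw [hinv, outChain_append, outChain_append, hττ]
          group

theorem toOut_negAutChain (l : List Bool) :
    toOut (negAutChain l) = (l.map fun b => (outLetter b)⁻¹).prod := by
  rw [negAutChain, map_list_prod, List.map_map]
  rfl

theorem exists_outChain_mul_eq {e : OutF} (he : e ∈ dihedral) (m : List Bool) :
    ∃ l ψ, l.length = m.length ∧ (ψ = autChain l ∨ ψ = negAutChain l) ∧
      outChain m * e = e * toOut ψ := by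
  obtain ⟨w, hw | hw⟩ := exists_semiconjBy_of_mem_dihedral (inv_mem he)
  · refine ⟨m.map w, _, List.length_map _, Or.inl rfl, ?_⟩
    have h := (semiconjBy_outChain hw m).inv_symm_left
    rw [inv_inv] at h
    rw [toOut_autChain, h.eq]
  · refine ⟨m.map w, _, List.length_map _, Or.inr rfl, ?_⟩
    rw [toOut_negAutChain]
    induction m with
    | nil => simp [outChain_nil]
    | cons b m ih =>
      have h := (hw b).inv_symm_left.eq
      rw [inv_inv] at h
      rw [outChain_cons, mul_assoc, ih, ← mul_assoc, ← h, mul_assoc, List.map_cons, List.map_cons,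
        List.prod_cons]

end NormalizedConjugator

section ChainLength

theorem length_le_abs_exponents_autChain {l : List Bool} (hl : l = [] ∨ ∃ l₁, l = l₁ ++ [false])
    {w : F} (hw : σ w = w) (hne : exponents w ≠ 1) :
    l.length + 1 ≤ |(exponents (autChain l w)).toAdd.1| + |(exponents (autChain l w)).toAdd.2| := by
  have hx : (exponents w).toAdd.1 = 0 := by
    have h := congrArg (fun x => x.toAdd.2) (exponents_σ w)
    rw [hw] at h
    exact right_eq_add.1 h
  have hy : 1 ≤ |(exponents w).toAdd.2| := Int.one_le_abs fun hy => hne (Prod.ext hx hy)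
  rcases hl with rfl | ⟨l, rfl⟩
  · exact (by simpa using hy : (1 : ℤ) ≤ |(exponents w).toAdd.2|).trans
      (le_add_of_nonneg_left (abs_nonneg _))
  · obtain ⟨p, q, r, s, hp, hq, hr, hs, -, -, -, hlen, hexp⟩ := exists_exponents_autChain l
    have hsplit : autChain (l ++ [false]) w = autChain l (τ w) := by
      rw [autChain, List.map_append, List.prod_append, List.map_singleton, List.prod_singleton]
      rfl
    rw [hsplit, hexp, exponents_τ, hx]
    simp only [toAdd_ofAdd, zero_add, ← add_mul, abs_mul]
    rw [abs_of_nonneg (by omega : 0 ≤ p + q), abs_of_nonneg (by omega : 0 ≤ r + s),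
      List.length_append, List.length_singleton]
    push_cast
    nlinarith

theorem apply_eq_of_fixedBy_eq {S : Set F} {φ : MulAut F}
    (hφ : MulAction.fixedBy F φ = Subgroup.closure S) {u : F} (hu : u ∈ S) : φ u = u := by
  rw [← MulAut.smul_def, ← MulAction.mem_fixedBy, hφ]
  exact Subgroup.subset_closure hu

theorem length_lt_of_fixedBy_eq {S : Set F} {L : ℕ} (hS : ∀ u ∈ S, u.norm ≤ L) {γ : MulAut F}
    {d : OutF} (hd : d ∈ dihedral) {l : List Bool} (hl : l = [] ∨ ∃ l₁, l = l₁ ++ [false])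
    (hγ : toOut γ = d * outChain l)
    (hfix : MulAction.fixedBy F (γ * σ * γ⁻¹) = Subgroup.closure S) : l.length < L := by
  have hgb : γ gb ∈ Subgroup.closure S := by
    rw [← SetLike.mem_coe, ← hfix, MulAction.mem_fixedBy]
    simp
  obtain ⟨u, hu, hne⟩ : ∃ u ∈ S, exponents (γ⁻¹ u) ≠ 1 := by
    by_contra! h
    have hle : Subgroup.closure S ≤ (exponents.comp (γ⁻¹).toMonoidHom).ker :=
      (Subgroup.closure_le _).2 h
    have hone : exponents (γ⁻¹ (γ gb)) = 1 := hle hgb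
    rw [MulAut.inv_apply_self, exponents_gb] at hone
    simp at hone
  have hσ : σ (γ⁻¹ u) = γ⁻¹ u := by
    nth_rewrite 2 [← apply_eq_of_fixedBy_eq hfix hu]
    simp
  obtain ⟨β, rfl, hβ⟩ := exists_toOut_eq_of_mem_dihedral hd
  obtain ⟨g, hg⟩ : ∃ g, β⁻¹ * γ = MulAut.conj g * autChain l := by
    rw [← toOut_eq_iff, map_mul, map_inv, hγ, inv_mul_cancel_left, toOut_autChain]
  have hexp : exponents (autChain l (γ⁻¹ u)) = exponents (β⁻¹ u) := by
    rw [← exponents_conj_mul g, ← hg, MulAut.mul_apply, MulAut.apply_inv_self]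
  have hnorm : (β⁻¹ u).norm = u.norm := by rw [← hβ, MulAut.apply_inv_self]
  have h := length_le_abs_exponents_autChain hl hσ hne
  rw [hexp] at h
  have := hS u hu
  have := h.trans (abs_exponents_le_norm _)
  omega

end ChainLength

section FixedSubgroups

theorem four_mul_two_pow_mul_add_two_le {L : ℕ} (hL : 1 ≤ L) :
    4 * (2 ^ (2 * L) * L) + 2 ≤ (2 ^ (4 * L + 4) + 1) * L := by
  have hsq : 2 ^ (4 * L + 4) = 16 * (2 ^ (2 * L) * 2 ^ (2 * L)) := by
    rw [← pow_add]
    ring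
  have hone : 1 ≤ 2 ^ (2 * L) := Nat.one_le_two_pow
  rw [hsq]
  generalize 2 ^ (2 * L) = x at *
  have hle : x * L ≤ x * x * L := Nat.mul_le_mul_right L (Nat.le_mul_self x)
  have hpos : 1 ≤ x * L := Nat.mul_pos hone hL
  linarith

theorem exists_conj_σ_eq_mul_conj_mul {γ : MulAut F} {d : OutF} (hd : d ∈ dihedral) {l : List Bool}
    (hl : l = [] ∨ ∃ l₁, l = l₁ ++ [false]) (hγ : toOut γ = d * outChain l) :
    ∃ β g m ψ, (∀ w, (β w).norm = w.norm) ∧ m.length ≤ 2 * l.length + 1 ∧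
      (ψ = autChain m ∨ ψ = negAutChain m) ∧ γ * σ * γ⁻¹ = β * MulAut.conj g * ψ := by
  obtain ⟨m, e, he, hm, hσ⟩ := exists_toOut_conj_σ_eq hd hl hγ
  obtain ⟨m', ψ, hlen, hψ, hpush⟩ := exists_outChain_mul_eq he m
  obtain ⟨β, hβe, hβ⟩ := exists_toOut_eq_of_mem_dihedral (mul_mem hd he)
  obtain ⟨g, hg⟩ : ∃ g, β⁻¹ * (γ * σ * γ⁻¹) = MulAut.conj g * ψ := by
    rw [← toOut_eq_iff, map_mul, hσ, map_inv, hβe, mul_assoc, hpush, ← mul_assoc d,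
      inv_mul_cancel_left]
  exact ⟨β, g, m', ψ, hβ, hlen.trans_le hm, hψ, by rw [mul_assoc β, ← hg, mul_inv_cancel_left]⟩

theorem exists_isBoundedNormalForm_of_not_commute {S : Set F} {L : ℕ} (hS : ∀ u ∈ S, u.norm ≤ L)
    {α : MulAut F} (hα : MulAction.fixedBy F (α * σ * α⁻¹) = Subgroup.closure S) {u v : F}
    (hu : u ∈ S) (hv : v ∈ S) (huv : ¬Commute u v) :
    ∃ ω, IsBoundedNormalForm L ω ∧ MulAction.fixedBy F ω = Subgroup.closure S := by
  obtain ⟨γ, d, hd, l, hl, hγ, hfix⟩ := exists_normalized_conjugator α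
  rw [hα] at hfix
  have hlen := length_lt_of_fixedBy_eq hS hd hl hγ hfix
  obtain ⟨β, g, m, ψ, hβ, hm, hψ, heq⟩ := exists_conj_σ_eq_mul_conj_mul hd hl hγ
  rw [heq] at hfix
  have hbound {w : F} (hw : w ∈ S) :
      w.norm ≤ 2 ^ (2 * L) * L ∧ (ψ w).norm ≤ 2 ^ (2 * L) * L :=
    ⟨(hS w hw).trans (Nat.le_mul_of_pos_left L Nat.one_le_two_pow),
      (norm_autChain_le hψ w).trans (Nat.mul_le_mul
        (Nat.pow_le_pow_right two_pos (by omega)) (hS w hw))⟩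
  have hg := norm_le_of_mul_conj_mul_apply_eq hβ huv (apply_eq_of_fixedBy_eq hfix hu)
    (apply_eq_of_fixedBy_eq hfix hv) (hbound hu) (hbound hv)
  exact ⟨_, isBoundedNormalForm_mul_conj_mul hβ
    (hg.trans (four_mul_two_pow_mul_add_two_le (by omega))) (by omega) hψ, hfix⟩

theorem isBoundedNormalForm_mul_conj {L : ℕ} {β : MulAut F} (hβ : ∀ w, (β w).norm = w.norm) {g : F}
    (hg : g.norm ≤ L) : IsBoundedNormalForm L (β * MulAut.conj g) := by
  rw [← mul_one (β * _)]
  exact isBoundedNormalForm_mul_conj_mul hβ (hg.trans (Nat.le_mul_of_pos_left L (Nat.succ_pos _)))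
    (l := []) (Nat.zero_le _) (Or.inl rfl)

theorem pi'_apply_eq_self_iff {w : F} : pi' w = w ↔ w = 1 := by
  refine ⟨eq_one_of_forall_apply_of_ne norm_pi'_apply fun i h => ?_, fun hw => by
    rw [hw, map_one]⟩
  have hexp := congrArg (fun x => (exponents x).toAdd) h
  fin_cases i
  · change (exponents (pi' ga)).toAdd = (exponents ga).toAdd at hexp
    simp [exponents_ga, exponents_gb] at hexp
  · change (exponents (pi' gb)).toAdd = (exponents gb).toAdd at hexp
    simp [exponents_ga, exponents_gb] at hexp

theorem fixedBy_conj_eq {S : Set F} {φ : MulAut F}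
    (hφ : MulAction.fixedBy F φ = Subgroup.closure S) {u : F} (hu : u ∈ S) (hne : u ≠ 1)
    (hcomm : ∀ v ∈ S, Commute v u) :
    MulAction.fixedBy F (MulAut.conj u) = Subgroup.closure S := by
  have hle : Subgroup.closure S ≤ Subgroup.centralizer {u} :=
    (Subgroup.closure_le _).2 fun v hv => Subgroup.mem_centralizer_singleton_iff.2 (hcomm v hv)
  ext w
  have hiff : MulAut.conj u w = w ↔ Commute w u := by
    rw [MulAut.conj_apply, mul_inv_eq_iff_eq_mul]
    exact eq_comm
  rw [MulAction.mem_fixedBy, MulAut.smul_def, hiff]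
  refine ⟨fun hw => ?_, fun hw => Subgroup.mem_centralizer_singleton_iff.1 (hle hw)⟩
  rw [← hφ]
  exact apply_eq_self_of_commute hne (apply_eq_of_fixedBy_eq hφ hu) hw

theorem exists_isBoundedNormalForm_fixedBy_eq {S : Set F} {L : ℕ} (hS : ∀ u ∈ S, u.norm ≤ L)
    {φ : MulAut F} (hφ : MulAction.fixedBy F φ = Subgroup.closure S) :
    ∃ ω, IsBoundedNormalForm L ω ∧ MulAction.fixedBy F ω = Subgroup.closure S := by
  by_cases hcomm : ∀ u ∈ S, ∀ v ∈ S, Commute v u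
  · by_cases hone : ∀ u ∈ S, u = 1
    · refine ⟨pi' * MulAut.conj 1,
        isBoundedNormalForm_mul_conj norm_pi'_apply (by simp), ?_⟩
      rw [map_one, mul_one, (Subgroup.closure_eq_bot_iff).2 hone]
      ext w
      exact pi'_apply_eq_self_iff
    · push Not at hone
      obtain ⟨u, hu, hne⟩ := hone
      exact ⟨1 * MulAut.conj u, isBoundedNormalForm_mul_conj (fun _ => rfl) (hS u hu), by
        rw [one_mul, fixedBy_conj_eq hφ hu hne (hcomm u hu)]⟩
  · push Not at hcomm
    obtain ⟨u, hu, v, hv, hvu⟩ := hcomm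
    rcases eq_one_or_exists_fixedBy_eq (apply_eq_of_fixedBy_eq hφ hv)
      (apply_eq_of_fixedBy_eq hφ hu) hvu with rfl | ⟨α, hα⟩
    · refine ⟨1 * MulAut.conj 1, isBoundedNormalForm_mul_conj (fun _ => rfl) (by simp), ?_⟩
      rwa [map_one, mul_one]
    · exact exists_isBoundedNormalForm_of_not_commute hS (hα.symm.trans hφ) hv hu hvu

end FixedSubgroups

/-- Theorem 5.4: if `H = ⟨u₁, …, u_k⟩` is the fixed point group of some automorphism of
`F₂`, then it is the fixed point group of one of the special form `β ∘ δ' ∘ ψ'` with the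
stated bounds, where `L = max |u_i|`. -/
theorem stmt19 (k : ℕ) (hk : 0 < k) (u : Fin k → F) (L : ℕ)
    (hL : L = Finset.univ.sup fun i => len (u i))
    (H : Subgroup F) (hH : H = Subgroup.closure (Set.range u))
    (hfix : ∃ φ : MulAut F, ∀ w : F, φ w = w ↔ w ∈ H) :
    ∃ β : MulAut F, IsW1 β ∧
      ∃ ds : List (Fin 4), ds.length ≤ (2 ^ (4 * L + 4) + 1) * L ∧
        ∃ c : List (ℕ × ℕ), c ≠ [] ∧ chainLen c ≤ 4 * L + 4 ∧
          ∃ ψ' : MulAut F, (ψ' = chainC1 c ∨ ψ' = chainC2 c) ∧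
            ∀ w : F, (β * (ds.map δIdx).prod * ψ') w = w ↔ w ∈ H := by
  subst hH
  obtain ⟨φ, hφ⟩ := hfix
  have hS : ∀ v ∈ Set.range u, v.norm ≤ L := by
    rintro _ ⟨i, rfl⟩
    rw [hL]
    exact Finset.le_sup (f := fun i => len (u i)) (Finset.mem_univ i)
  obtain ⟨_, ⟨β, hβ, ds, hds, c, hc, hlen, ψ', hψ', rfl⟩, hω⟩ :=
    exists_isBoundedNormalForm_fixedBy_eq hS (Set.ext hφ)
  exact ⟨β, hβ, ds, hds, c, hc, hlen, ψ', hψ', fun w => Set.ext_iff.1 hω w⟩
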